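/- Assume 0 < y < 1. Then the random variables log det(ρ̃_n) + (n − p(n))·log(1 − p(n)/n) + p(n) converge in distribution, as n → ∞, to a Gaussian law N(μ̃_log, σ_log²) with mean μ̃_log = (3/2)·log(1−y) + 2y − y²/(1−y) and variance σ_log² = −2·log(1−y) − 2y. -/

import Mathlib

open MeasureTheory Finset

/-- The (finite) sample space of `p`-tuples of permutations of `{1,…,n}` carries the
discrete σ-algebra. -/
instance permVecMeasurableSpace (n p : ℕ) :
    MeasurableSpace (Fin p → Equiv.Perm (Fin n)) := ⊤

/-- The uniform probability measure on `p`-tuples of permutations of `{1,…,n}`: the joint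
law of `p` independent uniform random permutations `σ₁,…,σ_p`, i.e. the law of the
columnwise ranks of an `n×p` data matrix with independent entries having continuous
distributions. -/
noncomputable def permVecUniform (n p : ℕ) : Measure (Fin p → Equiv.Perm (Fin n)) :=
  (PMF.uniformOfFintype (Fin p → Equiv.Perm (Fin n))).toMeasure


/-- Hoeffding's improved Spearman rank correlation matrix
`ρ̃ₙ = (3/(n(n−1)(n−2))) Σ_{(i,j,k) pairwise distinct} A_{ij} A_{ik}ᵀ ∈ ℝ^{p×p}`, where the
sign vector `A_{ij} ∈ ℝᵖ` has `l`-th coordinate `sign(σ_l(i) − σ_l(j))`. -/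
noncomputable def improvedSpearmanRho (n p : ℕ) (ω : Fin p → Equiv.Perm (Fin n)) :
    Matrix (Fin p) (Fin p) ℝ :=
  (3 / ((n : ℝ) * ((n : ℝ) - 1) * ((n : ℝ) - 2))) •
    ∑ i : Fin n, ∑ j ∈ univ.erase i, ∑ k ∈ (univ.erase i).erase j,
      Matrix.vecMulVec
        (fun l => Real.sign (((ω l i : ℕ) : ℝ) - ((ω l j : ℕ) : ℝ)))
        (fun l => Real.sign (((ω l i : ℕ) : ℝ) - ((ω l k : ℕ) : ℝ)))


section perm_moments
set_option linter.unusedSimpArgs false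
open scoped BigOperators

variable {n : ℕ}

lemma expect_swap {M : Type*} [AddCommMonoid M] [Module ℚ≥0 M]
    (F : Equiv.Perm (Fin n) → M) (i j : Fin n) :
    (𝔼 σ, F (σ * Equiv.swap i j)) = 𝔼 σ, F σ :=
  Fintype.expect_equiv (Equiv.mulRight (Equiv.swap i j)) _ _ (fun _ => rfl)

lemma expect_perm_nonneg_const (c : ℝ) : (𝔼 _σ : Equiv.Perm (Fin n), c) = c :=
  Fintype.expect_const c

/-- if `c j` is constant `d` off `i`, sum it. -/
lemma sum_off_one (i : Fin n) (c : Fin n → ℝ) (d : ℝ) (h : ∀ j, j ≠ i → c j = d) :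
    ∑ j, c j = c i + ((n : ℝ) - 1) * d := by
  rw [← Finset.add_sum_erase univ c (mem_univ i)]
  rw [Finset.sum_congr rfl (fun j hj => h j (Finset.ne_of_mem_erase hj))]
  have : 1 ≤ n := by have := i.2; omega
  simp [Finset.card_erase_of_mem, Nat.cast_sub this]

lemma sum_off_two (i k : Fin n) (hik : i ≠ k) (c : Fin n → ℝ) (d : ℝ)
    (h : ∀ j, j ≠ i → j ≠ k → c j = d) :
    ∑ j, c j = c i + c k + ((n : ℝ) - 2) * d := by
  have h1 := sum_off_one i (fun j => if j = k then d else c j) d (by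
    intro j hj; by_cases hjk : j = k <;> simp [hjk]; exact h j hj hjk)
  have h2 : ∑ j, c j = ∑ j, (if j = k then d else c j) + (c k - d) := by
    have : ∀ j, c j = (if j = k then d else c j) + (if j = k then c k - d else 0) := by
      intro j; by_cases hjk : j = k <;> simp [hjk]
    conv_lhs => rw [Finset.sum_congr rfl (fun j _ => this j)]
    rw [Finset.sum_add_distrib]; simp
  rw [h2, h1]; simp [hik]; ring

lemma sum_off_three (i k l : Fin n) (hik : i ≠ k) (hil : i ≠ l) (hkl : k ≠ l)
    (c : Fin n → ℝ) (d : ℝ)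
    (h : ∀ j, j ≠ i → j ≠ k → j ≠ l → c j = d) :
    ∑ j, c j = c i + c k + c l + ((n : ℝ) - 3) * d := by
  have h1 := sum_off_two i k hik (fun j => if j = l then d else c j) d (by
    intro j hj hk; by_cases hjk : j = l <;> simp [hjk]; exact h j hj hk hjk)
  have h2 : ∑ j, c j = ∑ j, (if j = l then d else c j) + (c l - d) := by
    have : ∀ j, c j = (if j = l then d else c j) + (if j = l then c l - d else 0) := by
      intro j; by_cases hjk : j = l <;> simp [hjk]
    conv_lhs => rw [Finset.sum_congr rfl (fun j _ => this j)]
    rw [Finset.sum_add_distrib]; simp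
  rw [h2, h1]; simp [hil, hkl]; ring

/-- second mixed moments -/
lemma moment_two (x : Fin n → ℝ) (h1 : ∑ i, x i = 0) (h2 : ∑ i, x i ^ 2 = 1) (hn : 2 ≤ n)
    (i j : Fin n) :
    (𝔼 σ : Equiv.Perm (Fin n), x (σ i) * x (σ j))
      = (if i = j then 1 / ((n : ℝ) - 1) else 0) - 1 / ((n : ℝ) * ((n : ℝ) - 1)) := by
  have hn' : (2 : ℝ) ≤ n := by exact_mod_cast hn
  have hdiag : ∀ i, (𝔼 σ : Equiv.Perm (Fin n), x (σ i) * x (σ i)) = 1 / n := by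
    intro i
    have hc : ∀ j, (𝔼 σ : Equiv.Perm (Fin n), x (σ j) * x (σ j))
        = 𝔼 σ : Equiv.Perm (Fin n), x (σ i) * x (σ i) := by
      intro j
      rw [← expect_swap _ i j]; simp
    have hs : ∑ j, (𝔼 σ : Equiv.Perm (Fin n), x (σ j) * x (σ j)) = 1 := by
      rw [← Finset.expect_sum_comm]
      have : ∀ σ : Equiv.Perm (Fin n), ∑ j, x (σ j) * x (σ j) = 1 := by
        intro σ
        rw [Equiv.sum_comp σ (fun j => x j * x j), ← h2]
        exact Finset.sum_congr rfl (fun _ _ => by ring)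
      simp [this, expect_perm_nonneg_const]
    rw [Finset.sum_congr rfl (fun j _ => hc j)] at hs
    simp at hs
    rw [eq_div_iff (by linarith)]; linarith
  by_cases hij : i = j
  · subst hij
    rw [hdiag]; simp
    have h3 : (n : ℝ) - 1 ≠ 0 := by linarith
    field_simp
  · have hc : ∀ k, k ≠ i → (𝔼 σ : Equiv.Perm (Fin n), x (σ i) * x (σ k))
        = 𝔼 σ : Equiv.Perm (Fin n), x (σ i) * x (σ j) := by
      intro k hk
      rw [← expect_swap _ j k]
      simp [Equiv.swap_apply_of_ne_of_ne hij hk.symm]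
    have := sum_off_one i (fun k => (𝔼 σ : Equiv.Perm (Fin n), x (σ i) * x (σ k))) _ hc
    rw [← Finset.expect_sum_comm] at this
    have h0 : ∀ σ : Equiv.Perm (Fin n), ∑ k, x (σ i) * x (σ k) = 0 := by
      intro σ; rw [← Finset.mul_sum, Equiv.sum_comp σ x, h1, mul_zero]
    simp only [h0, Finset.expect_const_zero, hdiag] at this
    simp only [hij, if_false]
    have h3 : (n : ℝ) - 1 ≠ 0 := by linarith
    have h4 : (n : ℝ) ≠ 0 := by linarith
    field_simp
    field_simp at this
    linarith

noncomputable def cc (n : ℕ) (s : ℝ) : ℝ :=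
  (1 - s) / (n * (n - 1)) - 2 * ((2 * s - 1) / (n * (n - 1) * (n - 2)))
    + (3 - 6 * s) / (n * (n - 1) * (n - 2) * (n - 3))

noncomputable def aa (n : ℕ) (s : ℝ) : ℝ :=
  s / n + 4 * (s / (n * (n - 1))) - 3 * ((1 - s) / (n * (n - 1)))
    + 12 * ((2 * s - 1) / (n * (n - 1) * (n - 2)))
    - 6 * ((3 - 6 * s) / (n * (n - 1) * (n - 2) * (n - 3)))

noncomputable def bb (n : ℕ) (s : ℝ) : ℝ :=
  - s / (n * (n - 1)) - 3 * ((2 * s - 1) / (n * (n - 1) * (n - 2)))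
    + 2 * ((3 - 6 * s) / (n * (n - 1) * (n - 2) * (n - 3)))

noncomputable def dd (n : ℕ) (s : ℝ) : ℝ :=
  (2 * s - 1) / (n * (n - 1) * (n - 2)) - (3 - 6 * s) / (n * (n - 1) * (n - 2) * (n - 3))

noncomputable def ee (n : ℕ) (s : ℝ) : ℝ :=
  (3 - 6 * s) / (n * (n - 1) * (n - 2) * (n - 3))

def dl (i j : Fin n) : ℝ := if i = j then 1 else 0

section four
variable (x : Fin n → ℝ) (s : ℝ) (h1 : ∑ i, x i = 0) (h2 : ∑ i, x i ^ 2 = 1)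
  (h4 : ∑ i, x i ^ 4 = s) (hn : 4 ≤ n)
include h1 h2 h4 hn

lemma m_iiii (i : Fin n) :
    (𝔼 σ : Equiv.Perm (Fin n), x (σ i) * x (σ i) * x (σ i) * x (σ i)) = s / n := by
  have hn' : (4 : ℝ) ≤ n := by exact_mod_cast hn
  have hc : ∀ j, (𝔼 σ : Equiv.Perm (Fin n), x (σ j) * x (σ j) * x (σ j) * x (σ j))
      = 𝔼 σ : Equiv.Perm (Fin n), x (σ i) * x (σ i) * x (σ i) * x (σ i) := by
    intro j
    rw [← expect_swap _ i j]; simp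
  have hs : ∑ j, (𝔼 σ : Equiv.Perm (Fin n), x (σ j) * x (σ j) * x (σ j) * x (σ j)) = s := by
    rw [← Finset.expect_sum_comm]
    have : ∀ σ : Equiv.Perm (Fin n), ∑ j, x (σ j) * x (σ j) * x (σ j) * x (σ j) = s := by
      intro σ
      rw [Equiv.sum_comp σ (fun j => x j * x j * x j * x j), ← h4]
      exact Finset.sum_congr rfl (fun _ _ => by ring)
    simp [this, expect_perm_nonneg_const]
  rw [Finset.sum_congr rfl (fun j _ => hc j)] at hs
  simp at hs
  rw [eq_div_iff (by linarith)]; linarith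

lemma m_iiij (i j : Fin n) (hij : i ≠ j) :
    (𝔼 σ : Equiv.Perm (Fin n), x (σ i) * x (σ i) * x (σ i) * x (σ j)) = - s / (n * (n - 1)) := by
  have hn' : (4 : ℝ) ≤ n := by exact_mod_cast hn
  have hc : ∀ k, k ≠ i → (𝔼 σ : Equiv.Perm (Fin n), x (σ i) * x (σ i) * x (σ i) * x (σ k))
      = 𝔼 σ : Equiv.Perm (Fin n), x (σ i) * x (σ i) * x (σ i) * x (σ j) := by
    intro k hk
    rw [← expect_swap _ j k]
    simp [Equiv.swap_apply_of_ne_of_ne hij hk.symm]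
  have := sum_off_one i (fun k => (𝔼 σ : Equiv.Perm (Fin n),
    x (σ i) * x (σ i) * x (σ i) * x (σ k))) _ hc
  rw [← Finset.expect_sum_comm] at this
  have h0 : ∀ σ : Equiv.Perm (Fin n), ∑ k, x (σ i) * x (σ i) * x (σ i) * x (σ k) = 0 := by
    intro σ; rw [← Finset.mul_sum, Equiv.sum_comp σ x, h1, mul_zero]
  simp only [h0, Finset.expect_const_zero, m_iiii x s h1 h2 h4 hn] at this
  have h3 : (n : ℝ) - 1 ≠ 0 := by linarith
  have h4 : (n : ℝ) ≠ 0 := by linarith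
  field_simp
  field_simp at this
  linarith

lemma m_iijj (i j : Fin n) (hij : i ≠ j) :
    (𝔼 σ : Equiv.Perm (Fin n), x (σ i) * x (σ i) * x (σ j) * x (σ j))
      = (1 - s) / (n * (n - 1)) := by
  have hn' : (4 : ℝ) ≤ n := by exact_mod_cast hn
  have hc : ∀ k, k ≠ i → (𝔼 σ : Equiv.Perm (Fin n), x (σ i) * x (σ i) * x (σ k) * x (σ k))
      = 𝔼 σ : Equiv.Perm (Fin n), x (σ i) * x (σ i) * x (σ j) * x (σ j) := by
    intro k hk
    rw [← expect_swap _ j k]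
    simp [Equiv.swap_apply_of_ne_of_ne hij hk.symm]
  have := sum_off_one i (fun k => (𝔼 σ : Equiv.Perm (Fin n),
    x (σ i) * x (σ i) * x (σ k) * x (σ k))) _ hc
  rw [← Finset.expect_sum_comm] at this
  have h0 : ∀ σ : Equiv.Perm (Fin n), ∑ k, x (σ i) * x (σ i) * x (σ k) * x (σ k)
      = x (σ i) * x (σ i) := by
    intro σ
    have : ∀ k, x (σ i) * x (σ i) * x (σ k) * x (σ k) = x (σ i) * x (σ i) * (x (σ k) ^ 2) :=
      fun k => by ring
    rw [Finset.sum_congr rfl (fun k _ => this k), ← Finset.mul_sum,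
      Equiv.sum_comp σ (fun k => x k ^ 2), h2, mul_one]
  simp only [h0, m_iiii x s h1 h2 h4 hn, moment_two x h1 h2 (by omega)] at this
  have h3 : (n : ℝ) - 1 ≠ 0 := by linarith
  have h4 : (n : ℝ) ≠ 0 := by linarith
  simp only [if_true] at this
  field_simp
  field_simp at this
  linarith

lemma m_iijk (i j k : Fin n) (hij : i ≠ j) (hik : i ≠ k) (hjk : j ≠ k) :
    (𝔼 σ : Equiv.Perm (Fin n), x (σ i) * x (σ i) * x (σ j) * x (σ k))
      = (2 * s - 1) / (n * (n - 1) * (n - 2)) := by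
  have hn' : (4 : ℝ) ≤ n := by exact_mod_cast hn
  have hc : ∀ l, l ≠ i → l ≠ j →
      (𝔼 σ : Equiv.Perm (Fin n), x (σ i) * x (σ i) * x (σ j) * x (σ l))
      = 𝔼 σ : Equiv.Perm (Fin n), x (σ i) * x (σ i) * x (σ j) * x (σ k) := by
    intro l hl hlj
    rw [← expect_swap _ k l]
    simp [Equiv.swap_apply_of_ne_of_ne hik hl.symm, Equiv.swap_apply_of_ne_of_ne hjk hlj.symm]
  have := sum_off_two i j hij (fun l => (𝔼 σ : Equiv.Perm (Fin n),
    x (σ i) * x (σ i) * x (σ j) * x (σ l))) _ hc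
  rw [← Finset.expect_sum_comm] at this
  have h0 : ∀ σ : Equiv.Perm (Fin n), ∑ l, x (σ i) * x (σ i) * x (σ j) * x (σ l) = 0 := by
    intro σ; rw [← Finset.mul_sum, Equiv.sum_comp σ x, h1, mul_zero]
  have h5 : (𝔼 σ : Equiv.Perm (Fin n), x (σ i) * x (σ i) * x (σ j) * x (σ i))
      = - s / (n * (n - 1)) := by
    rw [← m_iiij x s h1 h2 h4 hn i j hij]
    exact Finset.expect_congr rfl (fun _ _ => by ring)
  simp only [h0, Finset.expect_const_zero, h5, m_iijj x s h1 h2 h4 hn i j hij] at this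
  have h3 : (n : ℝ) - 1 ≠ 0 := by linarith
  have h6 : (n : ℝ) - 2 ≠ 0 := by linarith
  have h4 : (n : ℝ) ≠ 0 := by linarith
  field_simp
  field_simp at this
  linarith

lemma m_ijkl (i j k l : Fin n) (hij : i ≠ j) (hik : i ≠ k) (hil : i ≠ l) (hjk : j ≠ k)
    (hjl : j ≠ l) (hkl : k ≠ l) :
    (𝔼 σ : Equiv.Perm (Fin n), x (σ i) * x (σ j) * x (σ k) * x (σ l))
      = ee n s := by
  unfold ee
  have hn' : (4 : ℝ) ≤ n := by exact_mod_cast hn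
  have hc : ∀ m, m ≠ i → m ≠ j → m ≠ k →
      (𝔼 σ : Equiv.Perm (Fin n), x (σ i) * x (σ j) * x (σ k) * x (σ m))
      = 𝔼 σ : Equiv.Perm (Fin n), x (σ i) * x (σ j) * x (σ k) * x (σ l) := by
    intro m hmi hmj hmk
    rw [← expect_swap _ l m]
    simp [Equiv.swap_apply_of_ne_of_ne hil hmi.symm, Equiv.swap_apply_of_ne_of_ne hjl hmj.symm,
      Equiv.swap_apply_of_ne_of_ne hkl hmk.symm]
  have := sum_off_three i j k hij hik hjk (fun l => (𝔼 σ : Equiv.Perm (Fin n),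
    x (σ i) * x (σ j) * x (σ k) * x (σ l))) _ hc
  rw [← Finset.expect_sum_comm] at this
  have h0 : ∀ σ : Equiv.Perm (Fin n), ∑ l, x (σ i) * x (σ j) * x (σ k) * x (σ l) = 0 := by
    intro σ; rw [← Finset.mul_sum, Equiv.sum_comp σ x, h1, mul_zero]
  have h5 : (𝔼 σ : Equiv.Perm (Fin n), x (σ i) * x (σ j) * x (σ k) * x (σ i))
      = (2 * s - 1) / (n * (n - 1) * (n - 2)) := by
    rw [← m_iijk x s h1 h2 h4 hn i j k hij hik hjk]
    exact Finset.expect_congr rfl (fun _ _ => by ring)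
  have h7 : (𝔼 σ : Equiv.Perm (Fin n), x (σ i) * x (σ j) * x (σ k) * x (σ j))
      = (2 * s - 1) / (n * (n - 1) * (n - 2)) := by
    rw [← m_iijk x s h1 h2 h4 hn j i k hij.symm hjk hik]
    exact Finset.expect_congr rfl (fun _ _ => by ring)
  have h8 : (𝔼 σ : Equiv.Perm (Fin n), x (σ i) * x (σ j) * x (σ k) * x (σ k))
      = (2 * s - 1) / (n * (n - 1) * (n - 2)) := by
    rw [← m_iijk x s h1 h2 h4 hn k i j hik.symm hjk.symm hij]
    exact Finset.expect_congr rfl (fun _ _ => by ring)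
  simp only [h0, Finset.expect_const_zero, h5, h7, h8] at this
  have h3 : (n : ℝ) - 1 ≠ 0 := by linarith
  have h6 : (n : ℝ) - 2 ≠ 0 := by linarith
  have h9 : (n : ℝ) ≠ 0 := by linarith
  by_cases h10 : (n : ℝ) - 3 = 0
  · linarith
  field_simp
  field_simp at this
  linarith

/-- the fourth-moment tensor -/
lemma moment_four (i j k l : Fin n) :
    (𝔼 σ : Equiv.Perm (Fin n), x (σ i) * x (σ j) * x (σ k) * x (σ l))
      = aa n s * (dl i j * dl i k * dl i l)
        + bb n s * (dl i j * dl i k + dl i j * dl i l + dl i k * dl i l + dl j k * dl j l)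
        + cc n s * (dl i j * dl k l + dl i k * dl j l + dl i l * dl j k)
        + dd n s * (dl i j + dl i k + dl i l + dl j k + dl j l + dl k l) + ee n s := by
  have e1 := m_iiii x s h1 h2 h4 hn
  have e2 := m_iiij x s h1 h2 h4 hn
  have e3 := m_iijj x s h1 h2 h4 hn
  have e4 := m_iijk x s h1 h2 h4 hn
  have e5 := m_ijkl x s h1 h2 h4 hn
  have cg : ∀ i j k l i' j' k' l' : Fin n, (∀ σ : Equiv.Perm (Fin n),
      x (σ i) * x (σ j) * x (σ k) * x (σ l) = x (σ i') * x (σ j') * x (σ k') * x (σ l')) →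
      (𝔼 σ : Equiv.Perm (Fin n), x (σ i) * x (σ j) * x (σ k) * x (σ l))
      = 𝔼 σ : Equiv.Perm (Fin n), x (σ i') * x (σ j') * x (σ k') * x (σ l') :=
    fun i j k l i' j' k' l' h => Finset.expect_congr rfl (fun σ _ => h σ)
  by_cases hij : i = j
  · subst hij
    by_cases hik : i = k
    · subst hik
      by_cases hil : i = l
      · subst hil
        rw [e1]; simp [dl, aa, bb, cc, dd, ee]; ring
      · rw [e2 _ _ hil]; simp [dl, aa, bb, cc, dd, ee, hil]; ring
    · by_cases hil : i = l
      · subst hil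
        rw [cg i i k i i i i k (fun _ => by ring), e2 _ _ hik]
        simp [dl, aa, bb, cc, dd, ee, hik, Ne.symm hik]; ring
      · by_cases hkl : k = l
        · subst hkl
          rw [e3 _ _ hik]; simp [dl, aa, bb, cc, dd, ee, hik]; ring
        · rw [e4 _ _ _ hik hil hkl]; simp [dl, aa, bb, cc, dd, ee, hik, hil, hkl]
  · by_cases hik : i = k
    · subst hik
      by_cases hil : i = l
      · subst hil
        rw [cg i j i i i i i j (fun _ => by ring), e2 _ _ hij]
        simp [dl, aa, bb, cc, dd, ee, hij, Ne.symm hij]; ring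
      · by_cases hjl : j = l
        · subst hjl
          rw [cg i j i j i i j j (fun _ => by ring), e3 _ _ hij]
          simp [dl, aa, bb, cc, dd, ee, hij, Ne.symm hij]; ring
        · rw [cg i j i l i i j l (fun _ => by ring), e4 _ _ _ hij hil hjl]
          simp [dl, aa, bb, cc, dd, ee, hij, hil, hjl, Ne.symm hij]
    · by_cases hil : i = l
      · subst hil
        by_cases hjk : j = k
        · subst hjk
          rw [cg i j j i i i j j (fun _ => by ring), e3 _ _ hij]
          simp [dl, aa, bb, cc, dd, ee, hij, Ne.symm hij]; ring
        · rw [cg i j k i i i j k (fun _ => by ring), e4 _ _ _ hij hik hjk]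
          simp [dl, aa, bb, cc, dd, ee, hij, hik, hjk, Ne.symm hij, Ne.symm hik]
      · by_cases hjk : j = k
        · subst hjk
          by_cases hjl : j = l
          · subst hjl
            rw [cg i j j j j j j i (fun _ => by ring), e2 _ _ (Ne.symm hij)]
            simp [dl, aa, bb, cc, dd, ee, hij, Ne.symm hij]; ring
          · rw [cg i j j l j j i l (fun _ => by ring), e4 _ _ _ (Ne.symm hij) hjl hil]
            simp [dl, aa, bb, cc, dd, ee, hij, hjl, hil, Ne.symm hij]
        · by_cases hjl : j = l
          · subst hjl
            rw [cg i j k j j j i k (fun _ => by ring), e4 _ _ _ (Ne.symm hij) hjk hik]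
            simp [dl, aa, bb, cc, dd, ee, hij, hjk, hik, Ne.symm hij, Ne.symm hjk]
          · by_cases hkl : k = l
            · subst hkl
              rw [cg i j k k k k i j (fun _ => by ring),
                e4 _ _ _ (Ne.symm hik) (Ne.symm hjk) hij]
              simp [dl, aa, bb, cc, dd, ee, hij, hjk, hik]
            · rw [e5 _ _ _ _ hij hik hil hjk hjl hkl]
              simp [dl, hij, hik, hil, hjk, hjl, hkl]

end four
end perm_moments


section quad_moments
open scoped BigOperators
variable {n : ℕ}

/-- quadratic form -/
def qf (P : Matrix (Fin n) (Fin n) ℝ) (v : Fin n → ℝ) : ℝ := ∑ i, ∑ j, P i j * (v i * v j)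

lemma contr_tensor (P : Matrix (Fin n) (Fin n) ℝ) (hs : ∀ i j, P i j = P j i)
    (hr : ∀ i, ∑ j, P i j = 0) (a b c d e : ℝ) :
    ∑ i, ∑ j, ∑ k, ∑ l, P i j * P k l *
      (a * (dl i j * dl i k * dl i l)
        + b * (dl i j * dl i k + dl i j * dl i l + dl i k * dl i l + dl j k * dl j l)
        + c * (dl i j * dl k l + dl i k * dl j l + dl i l * dl j k)
        + d * (dl i j + dl i k + dl i l + dl j k + dl j l + dl k l) + e)
    = a * ∑ i, P i i ^ 2 + c * ((∑ i, P i i) ^ 2 + 2 * ∑ i, ∑ j, P i j ^ 2) := by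
  have hc : ∀ j, ∑ i, P i j = 0 := fun j => by rw [← hr j]; exact sum_congr rfl fun i _ => hs i j
  have t1 : ∑ i, ∑ j, ∑ k, ∑ l, P i j * P k l * (dl i j * dl i k * dl i l) = ∑ i, P i i ^ 2 := by
    simp [dl, pow_two]
  have t2 : ∑ i, ∑ j, ∑ k, ∑ l, P i j * P k l * (dl i j * dl i k) = 0 := by
    simp [dl, ← mul_sum, hr]
  have t3 : ∑ i, ∑ j, ∑ k, ∑ l, P i j * P k l * (dl i j * dl i l) = 0 := by
    simp [dl, ← mul_sum, hc]
  have t4 : ∑ i, ∑ j, ∑ k, ∑ l, P i j * P k l * (dl i k * dl i l) = 0 := by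
    simp [dl, ← sum_mul, hr]
  have t5 : ∑ i, ∑ j, ∑ k, ∑ l, P i j * P k l * (dl j k * dl j l) = 0 := by
    rw [sum_comm]
    simp [dl, ← sum_mul, hc]
  have t6 : ∑ i, ∑ j, ∑ k, ∑ l, P i j * P k l * (dl i j * dl k l) = (∑ i, P i i) ^ 2 := by
    simp [dl, pow_two, sum_mul_sum]
  have t7 : ∑ i, ∑ j, ∑ k, ∑ l, P i j * P k l * (dl i k * dl j l) = ∑ i, ∑ j, P i j ^ 2 := by
    simp [dl, pow_two]
  have t8 : ∑ i, ∑ j, ∑ k, ∑ l, P i j * P k l * (dl i l * dl j k) = ∑ i, ∑ j, P i j ^ 2 := by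
    simp [dl, pow_two]
    exact sum_congr rfl fun i _ => sum_congr rfl fun j _ => by rw [hs j i]
  have t9 : ∑ i, ∑ j, ∑ k, ∑ l, P i j * P k l * (dl i j) = 0 := by
    simp [dl, ← mul_sum, hr]
  have t10 : ∑ i, ∑ j, ∑ k, ∑ l, P i j * P k l * (dl i k) = 0 := by
    simp [dl, ← mul_sum, hr]
  have t11 : ∑ i, ∑ j, ∑ k, ∑ l, P i j * P k l * (dl i l) = 0 := by
    simp [dl, ← mul_sum, hc]
  have t12 : ∑ i, ∑ j, ∑ k, ∑ l, P i j * P k l * (dl j k) = 0 := by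
    simp [dl, ← mul_sum, hr]
  have t13 : ∑ i, ∑ j, ∑ k, ∑ l, P i j * P k l * (dl j l) = 0 := by
    simp [dl, ← mul_sum, hc]
  have t14 : ∑ i, ∑ j, ∑ k, ∑ l, P i j * P k l * (dl k l) = 0 := by
    simp [dl, ← mul_sum, ← sum_mul, hr]
  have t15 : ∑ i, ∑ j, ∑ k, ∑ l, P i j * P k l * (1 : ℝ) = 0 := by
    simp [← mul_sum, hr]
  have key : ∀ i j k l, P i j * P k l *
      (a * (dl i j * dl i k * dl i l)
        + b * (dl i j * dl i k + dl i j * dl i l + dl i k * dl i l + dl j k * dl j l)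
        + c * (dl i j * dl k l + dl i k * dl j l + dl i l * dl j k)
        + d * (dl i j + dl i k + dl i l + dl j k + dl j l + dl k l) + e)
      = a * (P i j * P k l * (dl i j * dl i k * dl i l))
      + (b * (P i j * P k l * (dl i j * dl i k)) + b * (P i j * P k l * (dl i j * dl i l))
        + b * (P i j * P k l * (dl i k * dl i l)) + b * (P i j * P k l * (dl j k * dl j l)))
      + (c * (P i j * P k l * (dl i j * dl k l)) + c * (P i j * P k l * (dl i k * dl j l))
        + c * (P i j * P k l * (dl i l * dl j k)))
      + (d * (P i j * P k l * (dl i j)) + d * (P i j * P k l * (dl i k))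
        + d * (P i j * P k l * (dl i l)) + d * (P i j * P k l * (dl j k))
        + d * (P i j * P k l * (dl j l)) + d * (P i j * P k l * (dl k l)))
      + e * (P i j * P k l * 1) := by intros; ring
  simp only [key, sum_add_distrib, ← mul_sum, t1, t2, t3, t4, t5, t6, t7, t8, t9, t10, t11, t12,
    t13, t14, t15]
  ring

lemma qf_moment_one (x : Fin n → ℝ) (h1 : ∑ i, x i = 0) (h2 : ∑ i, x i ^ 2 = 1) (hn : 2 ≤ n)
    (P : Matrix (Fin n) (Fin n) ℝ) (hr : ∀ i, ∑ j, P i j = 0) :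
    (𝔼 σ : Equiv.Perm (Fin n), qf P (fun i => x (σ i))) = (∑ i, P i i) / ((n : ℝ) - 1) := by
  unfold qf
  simp only [Finset.expect_sum_comm, ← Finset.mul_expect, moment_two x h1 h2 hn, mul_sub,
    sum_sub_distrib]
  simp only [← sum_mul, hr]
  simp [← sum_mul, div_eq_mul_inv]

lemma qf_moment_two (x : Fin n → ℝ) (s : ℝ) (h1 : ∑ i, x i = 0) (h2 : ∑ i, x i ^ 2 = 1)
    (h4 : ∑ i, x i ^ 4 = s) (hn : 4 ≤ n)
    (P : Matrix (Fin n) (Fin n) ℝ) (hs : ∀ i j, P i j = P j i) (hr : ∀ i, ∑ j, P i j = 0) :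
    (𝔼 σ : Equiv.Perm (Fin n), qf P (fun i => x (σ i)) ^ 2)
      = aa n s * ∑ i, P i i ^ 2 + cc n s * ((∑ i, P i i) ^ 2 + 2 * ∑ i, ∑ j, P i j ^ 2) := by
  rw [← contr_tensor P hs hr (aa n s) (bb n s) (cc n s) (dd n s) (ee n s)]
  have : ∀ σ : Equiv.Perm (Fin n), qf P (fun i => x (σ i)) ^ 2 =
      ∑ i, ∑ j, ∑ k, ∑ l, P i j * P k l * (x (σ i) * x (σ j) * x (σ k) * x (σ l)) := by
    intro σ
    unfold qf
    rw [pow_two, sum_mul]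
    refine sum_congr rfl fun i _ => ?_
    rw [sum_mul]
    refine sum_congr rfl fun j _ => ?_
    rw [mul_sum]
    refine sum_congr rfl fun k _ => ?_
    rw [mul_sum]
    exact sum_congr rfl fun l _ => by ring
  simp only [this, Finset.expect_sum_comm, ← Finset.mul_expect, moment_four x s h1 h2 h4 hn]

lemma lin_moment_two (x : Fin n → ℝ) (h1 : ∑ i, x i = 0) (h2 : ∑ i, x i ^ 2 = 1) (hn : 2 ≤ n)
    (w : Fin n → ℝ) (hw : ∑ i, w i = 0) :
    (𝔼 σ : Equiv.Perm (Fin n), (∑ i, w i * x (σ i)) ^ 2) = (∑ i, w i ^ 2) / ((n : ℝ) - 1) := by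
  have := qf_moment_one x h1 h2 hn (fun i j => w i * w j) (fun i => by rw [← mul_sum, hw, mul_zero])
  simp only [← pow_two] at this
  rw [← this]
  refine Finset.expect_congr rfl fun σ _ => ?_
  unfold qf
  rw [pow_two, sum_mul_sum]
  exact sum_congr rfl fun i _ => sum_congr rfl fun j _ => by ring

lemma lin_moment_four (x : Fin n → ℝ) (s : ℝ) (h1 : ∑ i, x i = 0) (h2 : ∑ i, x i ^ 2 = 1)
    (h4 : ∑ i, x i ^ 4 = s) (hn : 4 ≤ n)
    (w : Fin n → ℝ) (hw : ∑ i, w i = 0) :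
    (𝔼 σ : Equiv.Perm (Fin n), (∑ i, w i * x (σ i)) ^ 4)
      = aa n s * ∑ i, w i ^ 4 + 3 * cc n s * (∑ i, w i ^ 2) ^ 2 := by
  have := qf_moment_two x s h1 h2 h4 hn (fun i j => w i * w j) (fun i j => mul_comm _ _)
    (fun i => by rw [← mul_sum, hw, mul_zero])
  have e1 : ∑ i, (w i * w i) ^ 2 = ∑ i, w i ^ 4 := sum_congr rfl fun i _ => by ring
  have e2 : ∑ i, w i * w i = ∑ i, w i ^ 2 := sum_congr rfl fun i _ => by ring
  have e3 : ∑ i, ∑ j, (w i * w j) ^ 2 = (∑ i, w i ^ 2) ^ 2 := by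
    rw [pow_two (∑ i, w i ^ 2), sum_mul_sum]
    exact sum_congr rfl fun i _ => sum_congr rfl fun j _ => by ring
  rw [e1, e2, e3] at this
  have e4 : ∀ σ : Equiv.Perm (Fin n), (∑ i, w i * x (σ i)) ^ 4
      = qf (fun i j => w i * w j) (fun i => x (σ i)) ^ 2 := by
    intro σ
    have : qf (fun i j => w i * w j) (fun i => x (σ i)) = (∑ i, w i * x (σ i)) ^ 2 := by
      unfold qf
      rw [pow_two, sum_mul_sum]
      exact sum_congr rfl fun i _ => sum_congr rfl fun j _ => by ring
    rw [this]; ring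
  simp only [e4, this]; ring

end quad_moments


section exch
open scoped BigOperators
variable {n : ℕ}

/-- orthogonal projection matrices annihilating constants -/
structure IsPr (M : Matrix (Fin n) (Fin n) ℝ) : Prop where
  symm : ∀ i j, M i j = M j i
  idem : ∀ i j, ∑ k, M i k * M k j = M i j
  row : ∀ i, ∑ j, M i j = 0

/-- matrix-vector product -/
def mv (M : Matrix (Fin n) (Fin n) ℝ) (v : Fin n → ℝ) (i : Fin n) : ℝ := ∑ j, M i j * v j

namespace IsPr
variable {M : Matrix (Fin n) (Fin n) ℝ} (h : IsPr M)
include h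

lemma sq_row (i : Fin n) : ∑ k, M i k ^ 2 = M i i := by
  rw [← h.idem i i]; exact sum_congr rfl fun k _ => by rw [h.symm k i]; ring

lemma diag_nonneg (i : Fin n) : 0 ≤ M i i := by
  rw [← h.sq_row i]; exact sum_nonneg fun _ _ => sq_nonneg _

lemma diag_le_one (i : Fin n) : M i i ≤ 1 := by
  have h1 : M i i ^ 2 ≤ M i i := by
    conv_rhs => rw [← h.sq_row i]
    exact single_le_sum (f := fun k => M i k ^ 2) (fun _ _ => sq_nonneg _) (mem_univ i)
  nlinarith [h.diag_nonneg i]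

lemma entry_sq_le_one (i j : Fin n) : M i j ^ 2 ≤ 1 := by
  have h1 : M i j ^ 2 ≤ M i i := by
    conv_rhs => rw [← h.sq_row i]
    exact single_le_sum (f := fun k => M i k ^ 2) (fun _ _ => sq_nonneg _) (mem_univ j)
  linarith [h.diag_le_one i]

lemma sum_sq : ∑ i, ∑ j, M i j ^ 2 = ∑ i, M i i := sum_congr rfl fun i _ => h.sq_row i

lemma sum_mv (v : Fin n → ℝ) : ∑ i, mv M v i = 0 := by
  unfold mv
  rw [sum_comm]
  refine sum_eq_zero fun j _ => ?_
  rw [← sum_mul]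
  have : ∑ i, M i j = 0 := by rw [← h.row j]; exact sum_congr rfl fun i _ => h.symm i j
  rw [this, zero_mul]

omit h in
lemma qf_eq (v : Fin n → ℝ) : qf M v = ∑ i, v i * mv M v i := by
  unfold qf mv
  refine sum_congr rfl fun i _ => ?_
  rw [mul_sum]; exact sum_congr rfl fun j _ => by ring

lemma mv_mv (v : Fin n → ℝ) (i : Fin n) : mv M (mv M v) i = mv M v i := by
  unfold mv
  simp_rw [mul_sum]
  rw [sum_comm]
  refine sum_congr rfl fun j _ => ?_
  rw [← h.idem i j, sum_mul]
  exact sum_congr rfl fun k _ => by ring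

omit h in
lemma inner_mv_symm (hs : ∀ i j, M i j = M j i) (v w : Fin n → ℝ) :
    ∑ i, v i * mv M w i = ∑ i, mv M v i * w i := by
  unfold mv
  simp_rw [mul_sum, sum_mul]
  rw [sum_comm]
  exact sum_congr rfl fun i _ => sum_congr rfl fun j _ => by rw [hs i j]; ring

lemma sum_mv_sq (v : Fin n → ℝ) : ∑ i, mv M v i ^ 2 = qf M v := by
  rw [qf_eq]
  have := inner_mv_symm h.symm v (mv M v)
  simp only [h.mv_mv] at this
  rw [this]; exact sum_congr rfl fun _ _ => by ring

lemma qf_nonneg (v : Fin n → ℝ) : 0 ≤ qf M v := by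
  rw [← h.sum_mv_sq]; exact sum_nonneg fun _ _ => sq_nonneg _

lemma qf_le (v : Fin n → ℝ) : qf M v ≤ ∑ i, v i ^ 2 := by
  have h0 : 0 ≤ ∑ i, (v i - mv M v i) ^ 2 := sum_nonneg fun _ _ => sq_nonneg _
  have h1 : ∑ i, (v i - mv M v i) ^ 2
      = ∑ i, v i ^ 2 - 2 * ∑ i, v i * mv M v i + ∑ i, mv M v i ^ 2 := by
    rw [mul_sum, ← sum_sub_distrib, ← sum_add_distrib]
    exact sum_congr rfl fun _ _ => by ring
  rw [h1, h.sum_mv_sq, ← qf_eq] at h0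
  linarith

lemma two_pt (i j : Fin n) : 0 ≤ M i i + M j j - 2 * M i j ∧ M i i + M j j - 2 * M i j ≤ 4 := by
  have e : M i i + M j j - 2 * M i j = ∑ k, (M i k - M j k) ^ 2 := by
    rw [← h.idem i i, ← h.idem j j, ← h.idem i j, mul_sum, ← sum_add_distrib, ← sum_sub_distrib]
    exact sum_congr rfl fun k _ => by rw [h.symm k i, h.symm k j]; ring
  refine ⟨by rw [e]; exact sum_nonneg fun _ _ => sq_nonneg _, ?_⟩
  have := h.entry_sq_le_one i j
  nlinarith [h.diag_le_one i, h.diag_le_one j]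

end IsPr

lemma sum_sum_sub_mul_sub (a b : Fin n → ℝ) :
    ∑ i, ∑ j, (a i - a j) * (b i - b j)
      = 2 * n * ∑ i, a i * b i - 2 * (∑ i, a i) * ∑ i, b i := by
  have : ∀ i j, (a i - a j) * (b i - b j) = a i * b i + a j * b j - a i * b j - a j * b i :=
    fun i j => by ring
  have t1 : ∑ i : Fin n, ∑ _j : Fin n, a i * b i = n * ∑ i, a i * b i := by
    simp [mul_sum]
  have t2 : ∑ _i : Fin n, ∑ j : Fin n, a j * b j = n * ∑ i, a i * b i := by
    simp
  have t3 : ∑ i : Fin n, ∑ j : Fin n, a i * b j = (∑ i, a i) * ∑ i, b i := by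
    rw [sum_mul_sum]
  have t4 : ∑ i : Fin n, ∑ j : Fin n, a j * b i = (∑ i, a i) * ∑ i, b i := by
    rw [sum_comm, sum_mul_sum]
  simp only [this, sum_add_distrib, sum_sub_distrib]
  rw [t1, t2, t3, t4]; ring

lemma swap_vec (v : Fin n → ℝ) (i j k : Fin n) :
    v (Equiv.swap i j k) = v k + (v j - v i) * (dl k i - dl k j) := by
  unfold dl
  by_cases hki : k = i
  · subst hki
    by_cases hkj : k = j
    · subst hkj; simp
    · simp [hkj]
  · by_cases hkj : k = j
    · subst hkj; simp [hki]
    · simp [hki, hkj, Equiv.swap_apply_of_ne_of_ne hki hkj]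

lemma lin_swap (d v : Fin n → ℝ) (i j : Fin n) :
    ∑ k, d k * v (Equiv.swap i j k) = ∑ k, d k * v k - (v i - v j) * (d i - d j) := by
  simp only [swap_vec, mul_add, sum_add_distrib, mul_sub, sum_sub_distrib]
  simp [dl]; ring

lemma mv_add_dl (M : Matrix (Fin n) (Fin n) ℝ) (v : Fin n → ℝ) (c : ℝ) (i j k : Fin n) :
    mv M (fun k => v k + c * (dl k i - dl k j)) k = mv M v k + c * (M k i - M k j) := by
  unfold mv
  simp only [mul_add, sum_add_distrib, mul_sub, sum_sub_distrib]
  simp [dl]; ring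

lemma qf_swap {M : Matrix (Fin n) (Fin n) ℝ} (hs : ∀ i j, M i j = M j i) (v : Fin n → ℝ)
    (i j : Fin n) :
    qf M (fun k => v (Equiv.swap i j k)) = qf M v - 2 * ((v i - v j) * (mv M v i - mv M v j))
      + (v i - v j) ^ 2 * (M i i + M j j - 2 * M i j) := by
  have e : (fun k => v (Equiv.swap i j k)) = fun k => v k + (v j - v i) * (dl k i - dl k j) := by
    funext k; exact swap_vec v i j k
  rw [e, IsPr.qf_eq, IsPr.qf_eq]
  simp only [mv_add_dl]
  have e2 : ∀ k, (v k + (v j - v i) * (dl k i - dl k j)) * (mv M v k + (v j - v i) * (M k i - M k j))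
      = v k * mv M v k + (v j - v i) * (M i k * v k) - (v j - v i) * (M j k * v k)
        + (v j - v i) * (dl k i * mv M v k) - (v j - v i) * (dl k j * mv M v k)
        + (v j - v i) ^ 2 * (dl k i * M k i) - (v j - v i) ^ 2 * (dl k i * M k j)
        - (v j - v i) ^ 2 * (dl k j * M k i) + (v j - v i) ^ 2 * (dl k j * M k j) := by
    intro k; rw [hs i k, hs j k]; ring
  simp only [e2, sum_add_distrib, sum_sub_distrib, ← mul_sum]
  have e3 : ∑ k, M i k * v k = mv M v i := rfl
  have e4 : ∑ k, M j k * v k = mv M v j := rfl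
  rw [e3, e4]
  simp [dl]
  rw [hs j i]; ring

/-- Dirichlet form identity for the transposition walk -/
lemma dirichlet (F G : Equiv.Perm (Fin n) → ℝ) :
    (𝔼 σ, G σ * ∑ i, ∑ j, (F σ - F (σ * Equiv.swap i j)))
      = (1 / 2) * 𝔼 σ, ∑ i, ∑ j,
        (G σ - G (σ * Equiv.swap i j)) * (F σ - F (σ * Equiv.swap i j)) := by
  simp only [mul_sum, Finset.expect_sum_comm]
  refine sum_congr rfl fun i _ => sum_congr rfl fun j _ => ?_
  have h1 : (𝔼 σ, G σ * (F σ - F (σ * Equiv.swap i j)))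
      = 𝔼 σ, G (σ * Equiv.swap i j) * (F (σ * Equiv.swap i j) - F σ) := by
    rw [← expect_swap (fun σ => G σ * (F σ - F (σ * Equiv.swap i j))) i j]
    simp [mul_assoc]
  have h2 : (𝔼 σ, (G σ - G (σ * Equiv.swap i j)) * (F σ - F (σ * Equiv.swap i j)))
      = (𝔼 σ, G σ * (F σ - F (σ * Equiv.swap i j)))
        + 𝔼 σ, G (σ * Equiv.swap i j) * (F (σ * Equiv.swap i j) - F σ) := by
    rw [← Finset.expect_add_distrib]
    exact Finset.expect_congr rfl fun _ _ => by ring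
  rw [h2, ← h1]; ring

lemma dirichlet_two (F : Equiv.Perm (Fin n) → ℝ) (B : ℝ)
    (hB : ∀ σ, ∑ i, ∑ j, (F σ - F (σ * Equiv.swap i j)) ^ 2 ≤ B) :
    (𝔼 σ, F σ * ∑ i, ∑ j, (F σ - F (σ * Equiv.swap i j))) ≤ B / 2 := by
  rw [dirichlet]
  have : (𝔼 σ, ∑ i, ∑ j, (F σ - F (σ * Equiv.swap i j)) * (F σ - F (σ * Equiv.swap i j))) ≤ B := by
    refine Finset.expect_le univ_nonempty fun σ _ => ?_
    simpa only [pow_two] using hB σ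
  linarith

lemma dirichlet_four (F : Equiv.Perm (Fin n) → ℝ) (B : ℝ)
    (hB : ∀ σ, ∑ i, ∑ j, (F σ - F (σ * Equiv.swap i j)) ^ 2 ≤ B) :
    (𝔼 σ, F σ ^ 3 * ∑ i, ∑ j, (F σ - F (σ * Equiv.swap i j))) ≤ (3 / 2) * B * 𝔼 σ, F σ ^ 2 := by
  rw [dirichlet F (fun σ => F σ ^ 3)]
  have h1 : (𝔼 σ, ∑ i, ∑ j,
        (F σ ^ 3 - F (σ * Equiv.swap i j) ^ 3) * (F σ - F (σ * Equiv.swap i j)))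
      ≤ 𝔼 σ, ∑ i, ∑ j, ((3 / 2) * (F σ ^ 2 * (F σ - F (σ * Equiv.swap i j)) ^ 2)
        + (3 / 2) * (F (σ * Equiv.swap i j) ^ 2 * (F σ - F (σ * Equiv.swap i j)) ^ 2)) := by
    refine Finset.expect_le_expect fun σ _ => sum_le_sum fun i _ => sum_le_sum fun j _ => ?_
    generalize F σ = a
    generalize F (σ * Equiv.swap i j) = b
    have : 0 ≤ (a - b) ^ 2 * (a - b) ^ 2 := by positivity
    nlinarith
  have h2 : ∀ i j, (𝔼 σ, F (σ * Equiv.swap i j) ^ 2 * (F σ - F (σ * Equiv.swap i j)) ^ 2)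
      = 𝔼 σ, F σ ^ 2 * (F σ - F (σ * Equiv.swap i j)) ^ 2 := by
    intro i j
    rw [← expect_swap (fun σ => F σ ^ 2 * (F σ - F (σ * Equiv.swap i j)) ^ 2) i j]
    refine Finset.expect_congr rfl fun σ _ => ?_
    simp only [mul_assoc, Equiv.swap_mul_self, mul_one]; ring
  have h3 : (𝔼 σ, ∑ i, ∑ j, ((3 / 2) * (F σ ^ 2 * (F σ - F (σ * Equiv.swap i j)) ^ 2)
        + (3 / 2) * (F (σ * Equiv.swap i j) ^ 2 * (F σ - F (σ * Equiv.swap i j)) ^ 2)))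
      = 3 * 𝔼 σ, F σ ^ 2 * ∑ i, ∑ j, (F σ - F (σ * Equiv.swap i j)) ^ 2 := by
    simp only [mul_sum, Finset.expect_sum_comm, Finset.expect_add_distrib, ← Finset.mul_expect, h2]
    exact sum_congr rfl fun i _ => sum_congr rfl fun j _ => by ring
  have h4 : (𝔼 σ, F σ ^ 2 * ∑ i, ∑ j, (F σ - F (σ * Equiv.swap i j)) ^ 2)
      ≤ 𝔼 σ, F σ ^ 2 * B :=
    Finset.expect_le_expect fun σ _ => mul_le_mul_of_nonneg_left (hB σ) (sq_nonneg _)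
  rw [← Finset.expect_mul] at h4
  linarith

section main
variable (x : Fin n → ℝ) (h1 : ∑ i, x i = 0) (h2 : ∑ i, x i ^ 2 = 1)
  (hb : ∀ i, x i ^ 2 ≤ 3 / n) (hn : 2 ≤ n) {M : Matrix (Fin n) (Fin n) ℝ} (h : IsPr M)

/-- diagonal statistic -/
noncomputable def Dst (x : Fin n → ℝ) (M : Matrix (Fin n) (Fin n) ℝ) (σ : Equiv.Perm (Fin n)) : ℝ :=
  ∑ i, M i i * x (σ i) ^ 2 - (∑ i, M i i) / n

noncomputable def Fst (x : Fin n → ℝ) (M : Matrix (Fin n) (Fin n) ℝ) (σ : Equiv.Perm (Fin n)) : ℝ :=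
  qf M (fun i => x (σ i)) - (∑ i, M i i) / (n - 1)

lemma Dst_diff (σ : Equiv.Perm (Fin n)) (i j : Fin n) :
    Dst x M σ - Dst x M (σ * Equiv.swap i j)
      = (x (σ i) ^ 2 - x (σ j) ^ 2) * (M i i - M j j) := by
  unfold Dst
  have := lin_swap (fun i => M i i) (fun k => x (σ k) ^ 2) i j
  simp only [Equiv.Perm.mul_apply]
  rw [this]; ring

lemma Fst_diff (hs : ∀ i j, M i j = M j i) (σ : Equiv.Perm (Fin n)) (i j : Fin n) :
    Fst x M σ - Fst x M (σ * Equiv.swap i j)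
      = 2 * ((x (σ i) - x (σ j)) * (mv M (fun k => x (σ k)) i - mv M (fun k => x (σ k)) j))
      - (x (σ i) - x (σ j)) ^ 2 * (M i i + M j j - 2 * M i j) := by
  unfold Fst
  have := qf_swap hs (fun k => x (σ k)) i j
  simp only [Equiv.Perm.mul_apply]
  rw [this]; ring

include h2 hn in
lemma Dst_gen (σ : Equiv.Perm (Fin n)) :
    ∑ i, ∑ j, (Dst x M σ - Dst x M (σ * Equiv.swap i j)) = 2 * n * Dst x M σ := by
  have hn' : (2 : ℝ) ≤ n := by exact_mod_cast hn
  simp only [Dst_diff]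
  rw [sum_sum_sub_mul_sub (fun i => x (σ i) ^ 2) (fun i => M i i),
    Equiv.sum_comp σ (fun i => x i ^ 2), h2]
  unfold Dst
  have : ∑ i, x (σ i) ^ 2 * M i i = ∑ i, M i i * x (σ i) ^ 2 := sum_congr rfl fun _ _ => by ring
  rw [this]; field_simp

include h1 h2 h hn in
lemma Fst_gen (σ : Equiv.Perm (Fin n)) :
    ∑ i, ∑ j, (Fst x M σ - Fst x M (σ * Equiv.swap i j))
      = (4 * n - 4) * Fst x M σ - 2 * n * Dst x M σ := by
  have hn' : (2 : ℝ) ≤ n := by exact_mod_cast hn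
  simp only [Fst_diff x h.symm]
  set v : Fin n → ℝ := fun k => x (σ k) with hv
  have hv1 : ∑ i, v i = 0 := by rw [hv, Equiv.sum_comp σ x, h1]
  have hv2 : ∑ i, v i ^ 2 = 1 := by rw [hv, Equiv.sum_comp σ (fun i => x i ^ 2), h2]
  have e1 := sum_sum_sub_mul_sub v (mv M v)
  rw [h.sum_mv, ← IsPr.qf_eq] at e1
  have e2 : ∑ i, ∑ j, (v i - v j) ^ 2 * (M i i + M j j - 2 * M i j)
      = 2 * n * ∑ i, M i i * v i ^ 2 + 2 * ∑ i, M i i + 4 * qf M v := by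
    have hc : ∀ j, ∑ i, M i j = 0 := fun j => by
      rw [← h.row j]; exact sum_congr rfl fun i _ => h.symm i j
    have t : ∀ i j, (v i - v j) ^ 2 * (M i i + M j j - 2 * M i j)
      = M i i * v i ^ 2 + M i i * v j ^ 2 + v i ^ 2 * M j j + M j j * v j ^ 2
        - 2 * (v i ^ 2 * M i j) - 2 * (M i j * v j ^ 2) - 2 * ((v i * M i i) * v j)
        - 2 * (v i * (v j * M j j)) + 4 * (M i j * (v i * v j)) := by intros; ring
    have s1 : ∑ i, ∑ j, M i j * v j ^ 2 = 0 := by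
      rw [sum_comm]; simp only [← sum_mul, hc]; simp
    have s2 : ∑ i, ∑ j, M i j * (v i * v j) = qf M v := rfl
    have s3 : ∑ i : Fin n, ∑ j : Fin n, M i i * v i ^ 2 = n * ∑ i, M i i * v i ^ 2 := by
      simp [mul_sum]
    have s4 : ∑ i : Fin n, ∑ j : Fin n, M j j * v j ^ 2 = n * ∑ i, M i i * v i ^ 2 := by
      simp
    have s5 : ∑ i, ∑ j, M i i * v j ^ 2 = ∑ i, M i i := by
      simp only [← mul_sum, hv2]; simp
    have s6 : ∑ i, ∑ j, v i ^ 2 * M j j = ∑ i, M i i := by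
      simp only [← mul_sum, ← sum_mul, hv2]; simp
    have s7 : ∑ i, ∑ j, v i ^ 2 * M i j = 0 := by
      simp only [← mul_sum, h.row]; simp
    have s8 : ∑ i, ∑ j, (v i * M i i) * v j = 0 := by
      simp only [← mul_sum, hv1]; simp
    have s9 : ∑ i, ∑ j, v i * (v j * M j j) = 0 := by
      simp only [← mul_sum, ← sum_mul, hv1]; simp
    simp only [t, sum_add_distrib, sum_sub_distrib]
    simp only [← mul_sum (a := (2:ℝ)), ← mul_sum (a := (4:ℝ))]
    rw [s1, s2, s3, s4, s5, s6, s7, s8, s9]; ring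
  have e3 : ∑ i, ∑ j, (2 * ((v i - v j) * (mv M v i - mv M v j))
      - (v i - v j) ^ 2 * (M i i + M j j - 2 * M i j))
      = 2 * ∑ i, ∑ j, (v i - v j) * (mv M v i - mv M v j)
        - ∑ i, ∑ j, (v i - v j) ^ 2 * (M i i + M j j - 2 * M i j) := by
    simp only [sum_sub_distrib, mul_sum]
  have e4 : (∑ i, ∑ j, (2 * ((x (σ i) - x (σ j)) * (mv M v i - mv M v j))
      - (x (σ i) - x (σ j)) ^ 2 * (M i i + M j j - 2 * M i j)))
      = ∑ i, ∑ j, (2 * ((v i - v j) * (mv M v i - mv M v j))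
      - (v i - v j) ^ 2 * (M i i + M j j - 2 * M i j)) := rfl
  rw [e4, e3, e1, e2]
  unfold Fst Dst
  have : ∑ i, M i i * x (σ i) ^ 2 = ∑ i, M i i * v i ^ 2 := rfl
  rw [this]
  have h3 : (n : ℝ) - 1 ≠ 0 := by linarith
  field_simp
  ring

include hb hn h in
lemma Dst_B (σ : Equiv.Perm (Fin n)) :
    ∑ i, ∑ j, (Dst x M σ - Dst x M (σ * Equiv.swap i j)) ^ 2 ≤ 9 := by
  have hn' : (2 : ℝ) ≤ n := by exact_mod_cast hn
  simp only [Dst_diff]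
  have : ∀ i j, ((x (σ i) ^ 2 - x (σ j) ^ 2) * (M i i - M j j)) ^ 2 ≤ 9 / n ^ 2 := by
    intro i j
    have a1 : |x (σ i) ^ 2 - x (σ j) ^ 2| ≤ 3 / n := by
      rw [abs_le]; constructor <;>
      linarith [hb (σ i), hb (σ j), sq_nonneg (x (σ i)), sq_nonneg (x (σ j))]
    have a2 : |M i i - M j j| ≤ 1 := by
      rw [abs_le]; constructor <;>
      linarith [h.diag_le_one i, h.diag_le_one j, h.diag_nonneg i, h.diag_nonneg j]
    have a3 : |(x (σ i) ^ 2 - x (σ j) ^ 2) * (M i i - M j j)| ≤ 3 / n * 1 := by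
      rw [abs_mul]; exact mul_le_mul a1 a2 (abs_nonneg _) (by positivity)
    calc _ = |(x (σ i) ^ 2 - x (σ j) ^ 2) * (M i i - M j j)| ^ 2 := (sq_abs _).symm
      _ ≤ (3 / n * 1) ^ 2 := by gcongr
      _ = 9 / n ^ 2 := by ring
  calc _ ≤ ∑ _i : Fin n, ∑ _j : Fin n, 9 / (n : ℝ) ^ 2 :=
        sum_le_sum fun i _ => sum_le_sum fun j _ => this i j
    _ = 9 := by simp; field_simp

include h2 hb hn h in
lemma Fst_B (σ : Equiv.Perm (Fin n)) :
    ∑ i, ∑ j, (Fst x M σ - Fst x M (σ * Equiv.swap i j)) ^ 2 ≤ 4800 := by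
  have hn' : (2 : ℝ) ≤ n := by exact_mod_cast hn
  simp only [Fst_diff x h.symm]
  set w := mv M (fun k => x (σ k)) with hw
  have key : ∀ i j, (2 * ((x (σ i) - x (σ j)) * (w i - w j))
      - (x (σ i) - x (σ j)) ^ 2 * (M i i + M j j - 2 * M i j)) ^ 2
      ≤ 96 / n * ((w i - w j) * (w i - w j)) + 4608 / n ^ 2 := by
    intro i j
    have a1 : (x (σ i) - x (σ j)) ^ 2 ≤ 12 / n := by
      have : (x (σ i) - x (σ j)) ^ 2 ≤ 2 * x (σ i) ^ 2 + 2 * x (σ j) ^ 2 := by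
        nlinarith [sq_nonneg (x (σ i) + x (σ j))]
      have e : (12 : ℝ) / n = 2 * (3 / n) + 2 * (3 / n) := by ring
      linarith [hb (σ i), hb (σ j)]
    obtain ⟨b1, b2⟩ := h.two_pt i j
    generalize (M i i + M j j - 2 * M i j) = b at *
    have a0 := sq_nonneg (x (σ i) - x (σ j))
    have a4 : ((x (σ i) - x (σ j)) ^ 2 * b) ^ 2 ≤ (12 / n * 4) ^ 2 := by
      have := mul_le_mul a1 b2 b1 (by positivity)
      gcongr
    have a5 : (x (σ i) - x (σ j)) ^ 2 * (w i - w j) ^ 2 ≤ 12 / n * (w i - w j) ^ 2 :=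
      mul_le_mul_of_nonneg_right a1 (sq_nonneg _)
    calc _ ≤ 8 * ((x (σ i) - x (σ j)) ^ 2 * (w i - w j) ^ 2)
          + 2 * ((x (σ i) - x (σ j)) ^ 2 * b) ^ 2 := by
          nlinarith [sq_nonneg (2 * ((x (σ i) - x (σ j)) * (w i - w j))
            + (x (σ i) - x (σ j)) ^ 2 * b)]
      _ ≤ 8 * (12 / n * (w i - w j) ^ 2) + 2 * (12 / n * 4) ^ 2 := by gcongr
      _ = _ := by ring
  have hq : ∑ i, w i * w i ≤ 1 := by
    have e := h.sum_mv_sq (fun k => x (σ k))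
    have e' := h.qf_le (fun k => x (σ k))
    rw [Equiv.sum_comp σ (fun i => x i ^ 2), h2, ← e] at e'
    simpa only [pow_two] using e'
  have hsum := sum_sum_sub_mul_sub w w
  have hw0 : ∑ i, w i = 0 := h.sum_mv _
  rw [hw0] at hsum
  calc _ ≤ ∑ i, ∑ j, (96 / n * ((w i - w j) * (w i - w j)) + 4608 / n ^ 2) :=
        sum_le_sum fun i _ => sum_le_sum fun j _ => key i j
    _ = 96 / n * (2 * n * ∑ i, w i * w i) + 4608 := by
        simp only [sum_add_distrib, ← mul_sum, hsum]
        simp; field_simp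
    _ ≤ 96 / n * (2 * n * 1) + 4608 := by gcongr
    _ = 4800 := by field_simp; norm_num

include h2 hb hn h in
lemma Dst_two : (𝔼 σ, Dst x M σ ^ 2) ≤ 9 / (4 * n) := by
  have hn' : (2 : ℝ) ≤ n := by exact_mod_cast hn
  have := dirichlet_two (Dst x M) 9 (Dst_B x hb hn h)
  simp only [Dst_gen x h2 hn] at this
  have e : ∀ σ, Dst x M σ * (2 * n * Dst x M σ) = 2 * n * Dst x M σ ^ 2 := fun σ => by ring
  simp only [e, ← Finset.mul_expect] at this
  rw [le_div_iff₀ (by positivity)]; linarith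

include h2 hb hn h in
lemma Dst_four : (𝔼 σ, Dst x M σ ^ 4) ≤ 16 / n ^ 2 := by
  have hn' : (2 : ℝ) ≤ n := by exact_mod_cast hn
  have := dirichlet_four (Dst x M) 9 (Dst_B x hb hn h)
  simp only [Dst_gen x h2 hn] at this
  have e : ∀ σ, Dst x M σ ^ 3 * (2 * n * Dst x M σ) = 2 * n * Dst x M σ ^ 4 := fun σ => by ring
  simp only [e, ← Finset.mul_expect] at this
  have h2' := Dst_two x h2 hb hn h
  rw [le_div_iff₀ (by positivity)] at h2' ⊢
  nlinarith

include h1 h2 hb hn h in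
lemma Fst_two : (𝔼 σ, Fst x M σ ^ 2) ≤ 4000 / n := by
  have hn' : (2 : ℝ) ≤ n := by exact_mod_cast hn
  have := dirichlet_two (Fst x M) 4800 (Fst_B x h2 hb hn h)
  simp only [Fst_gen x h1 h2 hn h] at this
  have h2' := Dst_two x h2 hb hn h
  have e : (𝔼 σ, ((3 * n - 4) * Fst x M σ ^ 2 - n * Dst x M σ ^ 2))
      ≤ 𝔼 σ, Fst x M σ * ((4 * n - 4) * Fst x M σ - 2 * n * Dst x M σ) := by
    refine Finset.expect_le_expect fun σ _ => ?_
    have : 0 ≤ (n : ℝ) * (Fst x M σ - Dst x M σ) ^ 2 := by positivity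
    nlinarith
  rw [Finset.expect_sub_distrib, ← Finset.mul_expect, ← Finset.mul_expect] at e
  have hF : 0 ≤ 𝔼 σ, Fst x M σ ^ 2 := Finset.expect_nonneg fun _ _ => sq_nonneg _
  rw [le_div_iff₀ (by positivity)] at h2' ⊢
  nlinarith

include h1 h2 hb hn h in
lemma Fst_four : (𝔼 σ, Fst x M σ ^ 4) ≤ 10 ^ 8 / n ^ 2 := by
  have hn' : (2 : ℝ) ≤ n := by exact_mod_cast hn
  have := dirichlet_four (Fst x M) 4800 (Fst_B x h2 hb hn h)
  simp only [Fst_gen x h1 h2 hn h] at this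
  have h2' := Fst_two x h1 h2 hb hn h
  have h4' := Dst_four x h2 hb hn h
  have e : (𝔼 σ, ((5 / 2 * n - 4) * Fst x M σ ^ 4 - n / 2 * Dst x M σ ^ 4))
      ≤ 𝔼 σ, Fst x M σ ^ 3 * ((4 * n - 4) * Fst x M σ - 2 * n * Dst x M σ) := by
    refine Finset.expect_le_expect fun σ _ => ?_
    generalize Fst x M σ = a
    generalize Dst x M σ = b
    have : 4 * (a ^ 3 * b) ≤ 3 * a ^ 4 + b ^ 4 := by
      nlinarith [sq_nonneg (a ^ 2 - b ^ 2), sq_nonneg (a * (a - b)), sq_nonneg (a ^ 2 - a * b)]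
    nlinarith
  rw [Finset.expect_sub_distrib, ← Finset.mul_expect, ← Finset.mul_expect] at e
  have hF : 0 ≤ 𝔼 σ, Fst x M σ ^ 4 := Finset.expect_nonneg fun _ _ => by positivity
  have k1 : (1 / 2 * n) * (𝔼 σ, Fst x M σ ^ 4) ≤ 3 / 2 * 4800 * (4000 / n) + n / 2 * (16 / n ^ 2) := by
    have q1 : n / 2 * (𝔼 σ, Dst x M σ ^ 4) ≤ n / 2 * (16 / n ^ 2) := by gcongr
    have q2 : 3 / 2 * 4800 * (𝔼 σ, Fst x M σ ^ 2) ≤ 3 / 2 * 4800 * (4000 / n) := by gcongr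
    have q3 : (1 / 2 * n) * (𝔼 σ, Fst x M σ ^ 4) ≤ (5 / 2 * n - 4) * (𝔼 σ, Fst x M σ ^ 4) := by
      apply mul_le_mul_of_nonneg_right _ hF; linarith
    linarith
  have k2 : 3 / 2 * 4800 * (4000 / n) + n / 2 * (16 / n ^ 2) = 28800008 / (n : ℝ) := by
    field_simp; norm_num
  rw [k2, le_div_iff₀ (by positivity)] at k1
  rw [le_div_iff₀ (by positivity)]
  nlinarith

end main
end exch


section recursion
open scoped BigOperators
variable {n : ℕ}

/-- next direction of the Gram-Schmidt process -/
noncomputable def nextE (M : Matrix (Fin n) (Fin n) ℝ) (u : Fin n → ℝ) : Fin n → ℝ :=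
  open Classical in
  if qf M u ≠ 0 then fun i => mv M u i / √(qf M u)
  else if h : ∃ e : Fin n → ℝ, ∑ i, e i ^ 2 = 1 ∧ ∀ i, mv M e i = e i then h.choose else 0

lemma IsPr.exists_unit {M : Matrix (Fin n) (Fin n) ℝ} (h : IsPr M) (ht : ∑ i, M i i ≠ 0) :
    ∃ e : Fin n → ℝ, ∑ i, e i ^ 2 = 1 ∧ ∀ i, mv M e i = e i := by
  obtain ⟨a, -, ha⟩ := exists_ne_zero_of_sum_ne_zero ht
  have hp : 0 < M a a := lt_of_le_of_ne (h.diag_nonneg a) (Ne.symm ha)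
  refine ⟨fun i => M a i / √(M a a), ?_, ?_⟩
  · simp only [div_pow, Real.sq_sqrt hp.le, ← sum_div, h.sq_row]
    exact div_self ha
  · intro i
    unfold mv
    simp only [mul_div_assoc', ← sum_div]
    congr 1
    rw [← h.idem a i]
    exact sum_congr rfl fun j _ => by rw [h.symm i j]; ring

lemma nextE_spec {M : Matrix (Fin n) (Fin n) ℝ} (h : IsPr M) (ht : ∑ i, M i i ≠ 0) (u : Fin n → ℝ) :
    (∑ i, nextE M u i ^ 2 = 1) ∧ (∀ i, mv M (nextE M u) i = nextE M u i) ∧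
      ∀ i, mv M u i = √(qf M u) * nextE M u i := by
  unfold nextE
  by_cases hq : qf M u ≠ 0
  · have hq0 : 0 < qf M u := lt_of_le_of_ne (h.qf_nonneg u) (Ne.symm hq)
    have hs : √(qf M u) ≠ 0 := (Real.sqrt_pos.2 hq0).ne'
    simp only [if_pos hq]
    refine ⟨?_, ?_, ?_⟩
    · simp only [div_pow, Real.sq_sqrt hq0.le, ← sum_div, h.sum_mv_sq]
      exact div_self hq
    · intro i
      conv_lhs => unfold mv
      simp only [mul_div_assoc', ← sum_div]
      congr 1
      exact h.mv_mv u i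
    · intro i; field_simp
  · simp only [if_neg hq]
    push Not at hq
    have hex := h.exists_unit ht
    rw [dif_pos hex]
    refine ⟨hex.choose_spec.1, hex.choose_spec.2, ?_⟩
    intro i
    rw [hq, Real.sqrt_zero, zero_mul]
    have h0 := h.sum_mv_sq u
    rw [hq] at h0
    have := (sum_eq_zero_iff_of_nonneg (fun i _ => sq_nonneg (mv M u i))).1 h0 i (mem_univ i)
    exact pow_eq_zero_iff (two_ne_zero) |>.1 this

/-- residual projections of the Gram-Schmidt process -/
noncomputable def Mseq (U : ℕ → Fin n → ℝ) : ℕ → Matrix (Fin n) (Fin n) ℝ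
  | 0 => fun i j => dl i j - 1 / n
  | k + 1 => fun i j => Mseq U k i j - nextE (Mseq U k) (U k) i * nextE (Mseq U k) (U k) j

noncomputable def eseq (U : ℕ → Fin n → ℝ) (k : ℕ) : Fin n → ℝ := nextE (Mseq U k) (U k)

lemma Mseq_succ (U : ℕ → Fin n → ℝ) (k : ℕ) (i j : Fin n) :
    Mseq U (k + 1) i j = Mseq U k i j - eseq U k i * eseq U k j := rfl

lemma Mseq_congr {U U' : ℕ → Fin n → ℝ} {k : ℕ} (h : ∀ j < k, U j = U' j) :
    Mseq U k = Mseq U' k := by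
  induction k with
  | zero => rfl
  | succ k ih =>
    have ih' := ih fun j hj => h j (by omega)
    funext i j
    rw [Mseq_succ, Mseq_succ]; unfold eseq
    rw [ih', h k (by omega)]

lemma mv_Mseq_succ (U : ℕ → Fin n → ℝ) (k : ℕ) (v : Fin n → ℝ) (i : Fin n) :
    mv (Mseq U (k + 1)) v i = mv (Mseq U k) v i - (∑ j, eseq U k j * v j) * eseq U k i := by
  unfold mv
  rw [sum_mul, ← sum_sub_distrib]
  exact sum_congr rfl fun j _ => by rw [Mseq_succ]; ring

lemma isPr_sub {M : Matrix (Fin n) (Fin n) ℝ} (h : IsPr M) {e : Fin n → ℝ}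
    (h1 : ∑ i, e i ^ 2 = 1) (h2 : ∀ i, mv M e i = e i) :
    IsPr (fun i j => M i j - e i * e j) where
  symm i j := by rw [h.symm i j]; ring
  idem i j := by
    have e1 : ∑ k, M i k * e k = e i := h2 i
    have e2 : ∑ k, e k * M k j = e j := by
      rw [← h2 j]; exact sum_congr rfl fun k _ => by rw [h.symm k j]; ring
    have : ∀ k, (M i k - e i * e k) * (M k j - e k * e j)
        = M i k * M k j - (M i k * e k) * e j - e i * (e k * M k j) + e i * (e k ^ 2) * e j := by
      intro k; ring
    simp only [this, sum_add_distrib, sum_sub_distrib, ← mul_sum, ← sum_mul, e1, e2, h1, h.idem]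
    ring
  row i := by
    have hs : ∑ j, e j = 0 := by
      have := h.sum_mv e
      simpa only [h2] using this
    rw [sum_sub_distrib, h.row, ← mul_sum, hs]; ring

lemma isPr_zero (hn : 1 ≤ n) : IsPr (fun i j : Fin n => dl i j - 1 / (n : ℝ)) where
  symm i j := by simp [dl, eq_comm]
  idem i j := by
    have hn' : (n : ℝ) ≠ 0 := by positivity
    have : ∀ k, (dl i k - 1 / (n : ℝ)) * (dl k j - 1 / n)
      = dl i k * dl k j - 1 / n * dl i k - 1 / n * dl k j + 1 / n * (1 / n) := by intro k; ring
    simp only [this, sum_add_distrib, sum_sub_distrib, ← mul_sum]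
    simp [dl]
    field_simp
    ring
  row i := by
    have hn' : (n : ℝ) ≠ 0 := by positivity
    simp [dl, sum_sub_distrib]
    field_simp; ring

lemma Mseq_spec (hn : 1 ≤ n) (U : ℕ → Fin n → ℝ) (k : ℕ) (hk : k + 1 ≤ n) :
    IsPr (Mseq U k) ∧ ∑ i, Mseq U k i i = (n : ℝ) - 1 - k := by
  induction k with
  | zero =>
    refine ⟨isPr_zero hn, ?_⟩
    have hn' : (n : ℝ) ≠ 0 := by positivity
    simp [Mseq, dl, sum_sub_distrib]
    field_simp
  | succ k ih =>
    obtain ⟨a, b⟩ := ih (by omega)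
    have hk' : (k : ℝ) + 1 + 1 ≤ n := by exact_mod_cast hk
    obtain ⟨s1, s2, -⟩ := nextE_spec a (by rw [b]; intro h; linarith) (U k)
    refine ⟨isPr_sub a s1 s2, ?_⟩
    have : ∀ i, Mseq U (k + 1) i i = Mseq U k i i - nextE (Mseq U k) (U k) i ^ 2 := by
      intro i; rw [Mseq_succ]; unfold eseq; ring
    simp only [this, sum_sub_distrib, b, s1]; push_cast; ring

lemma eseq_spec (U : ℕ → Fin n → ℝ) (k : ℕ) (hk : k + 2 ≤ n) :
    (∑ i, eseq U k i ^ 2 = 1) ∧ (∀ i, mv (Mseq U k) (eseq U k) i = eseq U k i) ∧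
      ∀ i, mv (Mseq U k) (U k) i = √(qf (Mseq U k) (U k)) * eseq U k i := by
  obtain ⟨a, b⟩ := Mseq_spec (by omega) U k (by omega)
  have hk' : (k : ℝ) + 2 ≤ n := by exact_mod_cast hk
  exact nextE_spec a (by rw [b]; intro h; linarith) (U k)

/-- inner product of a vector with the `j`-th direction -/
noncomputable def ip (U : ℕ → Fin n → ℝ) (j : ℕ) (v : Fin n → ℝ) : ℝ := ∑ i, eseq U j i * v i

lemma ip_eq (U : ℕ → Fin n → ℝ) (j : ℕ) (hj : j + 2 ≤ n) (v : Fin n → ℝ) :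
    ip U j v = ∑ i, eseq U j i * mv (Mseq U j) v i := by
  obtain ⟨a, b⟩ := Mseq_spec (by omega) U j (by omega)
  rw [IsPr.inner_mv_symm a.symm]
  simp only [(eseq_spec U j hj).2.1]; rfl

lemma expand (hn : 1 ≤ n) (U : ℕ → Fin n → ℝ) (v : Fin n → ℝ) (hv : ∑ i, v i = 0) (k : ℕ)
    (i : Fin n) :
    v i = ∑ j ∈ range k, ip U j v * eseq U j i + mv (Mseq U k) v i := by
  induction k with
  | zero =>
    unfold mv Mseq
    simp only [sub_mul, sum_sub_distrib, ← mul_sum, hv]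
    simp [dl]
  | succ k ih => rw [sum_range_succ, mv_Mseq_succ, ih]; unfold ip; ring

lemma mv_later {U : ℕ → Fin n → ℝ} {v : Fin n → ℝ} {j k : ℕ} (hjk : j ≤ k) (hk : k + 1 ≤ n)
    (h0 : ∀ i, mv (Mseq U j) v i = 0) : ∀ i, mv (Mseq U k) v i = 0 := by
  induction k, hjk using Nat.le_induction with
  | base => exact h0
  | succ k hjk ih =>
    intro i
    have := ih (by omega)
    have e := ip_eq U k (by omega) v
    simp only [this, mul_zero, sum_const_zero] at e
    unfold ip at e
    rw [mv_Mseq_succ, this, e]; ring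

lemma mv_eseq_zero {U : ℕ → Fin n → ℝ} {j k : ℕ} (hjk : j < k) (hk : k + 1 ≤ n) (i : Fin n) :
    mv (Mseq U k) (eseq U j) i = 0 := by
  refine mv_later (j := j + 1) hjk hk ?_ i
  intro i
  obtain ⟨s1, s2, -⟩ := eseq_spec U j (by omega)
  have : ∑ i, eseq U j i * eseq U j i = 1 := by simpa only [pow_two] using s1
  rw [mv_Mseq_succ, s2, this]; ring

lemma ip_self (U : ℕ → Fin n → ℝ) (k : ℕ) (hk : k + 2 ≤ n) :
    ip U k (U k) = √(qf (Mseq U k) (U k)) := by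
  rw [ip_eq U k hk]
  obtain ⟨s1, s2, s3⟩ := eseq_spec U k hk
  simp only [s3]
  calc _ = √(qf (Mseq U k) (U k)) * ∑ i, eseq U k i ^ 2 := by
        rw [mul_sum]; exact sum_congr rfl fun _ _ => by ring
    _ = _ := by rw [s1, mul_one]

lemma mv_own_zero {U : ℕ → Fin n → ℝ} {j k : ℕ} (hjk : j < k) (hk : k + 1 ≤ n) (i : Fin n) :
    mv (Mseq U k) (U j) i = 0 := by
  refine mv_later (j := j + 1) hjk hk ?_ i
  intro i
  obtain ⟨s1, s2, s3⟩ := eseq_spec U j (by omega)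
  have := ip_self U j (by omega)
  unfold ip at this
  rw [mv_Mseq_succ, s3, this]; ring

lemma ip_lower {U : ℕ → Fin n → ℝ} {j k : ℕ} (hjk : j < k) (hk : k + 2 ≤ n) :
    ip U k (U j) = 0 := by
  rw [ip_eq U k hk]
  simp [mv_own_zero hjk (by omega : k + 1 ≤ n)]

lemma eseq_inner {U : ℕ → Fin n → ℝ} {j k : ℕ} (hj : j + 2 ≤ n) (hk : k + 2 ≤ n) :
    ∑ i, eseq U j i * eseq U k i = if j = k then 1 else 0 := by
  rcases lt_trichotomy j k with h | h | h
  · rw [if_neg h.ne]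
    have e := ip_eq U k hk (eseq U j)
    simp only [mv_eseq_zero h (by omega : k + 1 ≤ n), mul_zero, sum_const_zero] at e
    unfold ip at e
    rw [← e]; exact sum_congr rfl fun _ _ => by ring
  · subst h; simp only [if_true]
    simpa only [pow_two] using (eseq_spec U j hj).1
  · rw [if_neg h.ne']
    have e := ip_eq U j hj (eseq U k)
    simp only [mv_eseq_zero h (by omega : j + 1 ≤ n), mul_zero, sum_const_zero] at e
    exact e

/-- upper triangular Gram-Schmidt matrix -/
noncomputable def Tm (p : ℕ) (U : ℕ → Fin n → ℝ) : Matrix (Fin p) (Fin p) ℝ :=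
  fun j k => ip U j (U k)

/-- Gram matrix -/
noncomputable def gram (p : ℕ) (U : ℕ → Fin n → ℝ) : Matrix (Fin p) (Fin p) ℝ :=
  fun a b => ∑ i, U a i * U b i

lemma gram_eq {p : ℕ} (hp : p + 1 ≤ n) (U : ℕ → Fin n → ℝ) (hU : ∀ k < p, ∑ i, U k i = 0) :
    gram p U = (Tm p U).transpose * Tm p U := by
  funext a b
  rw [Matrix.mul_apply]
  simp only [Matrix.transpose_apply]
  unfold gram Tm
  have ea : ∀ i, U a i = ∑ j : Fin p, ip U j (U a) * eseq U j i := by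
    intro i
    have := expand (by omega) U (U a) (hU a a.2) p i
    rw [mv_own_zero a.2 hp, add_zero, ← Fin.sum_univ_eq_sum_range
      (fun j => ip U j (U a) * eseq U j i)] at this
    exact this
  conv_lhs => enter [2, i, 1]; rw [ea]
  simp only [sum_mul]
  rw [sum_comm]
  refine sum_congr rfl fun j _ => ?_
  conv_rhs => enter [2]; unfold ip
  rw [mul_sum]
  exact sum_congr rfl fun i _ => by ring

lemma Tm_upper {p : ℕ} (hp : p + 1 ≤ n) (U : ℕ → Fin n → ℝ) : (Tm p U).BlockTriangular id := by
  intro i j hij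
  exact ip_lower (by simpa using hij) (by have := i.2; omega)

lemma Tm_det {p : ℕ} (hp : p + 1 ≤ n) (U : ℕ → Fin n → ℝ) :
    (Tm p U).det = ∏ k : Fin p, √(qf (Mseq U k) (U k)) := by
  rw [Matrix.det_of_upperTriangular (Tm_upper hp U)]
  exact prod_congr rfl fun k _ => ip_self U k (by have := k.2; omega)

lemma gram_det {p : ℕ} (hp : p + 1 ≤ n) (U : ℕ → Fin n → ℝ) (hU : ∀ k < p, ∑ i, U k i = 0) :
    (gram p U).det = ∏ k : Fin p, qf (Mseq U k) (U k) := by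
  rw [gram_eq hp U hU, Matrix.det_mul, Matrix.det_transpose, Tm_det hp, ← prod_mul_distrib]
  refine prod_congr rfl fun k _ => Real.mul_self_sqrt ?_
  exact (Mseq_spec (by omega) U k (by have := k.2; omega)).1.qf_nonneg _

end recursion


section onestep
open scoped BigOperators
variable {n : ℕ}

lemma aa_cc_identity (s : ℝ) (hn : 4 ≤ n) :
    aa n s * ((n : ℝ) - 1) ^ 2 / n + cc n s * ((n : ℝ) ^ 2 - 1) = 1 := by
  have hn' : (4 : ℝ) ≤ n := by exact_mod_cast hn
  have h0 : (n : ℝ) ≠ 0 := by linarith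
  have h1 : (n : ℝ) - 1 ≠ 0 := by linarith
  have h2 : (n : ℝ) - 2 ≠ 0 := by linarith
  have h3 : (n : ℝ) - 3 ≠ 0 := by linarith
  unfold aa cc
  field_simp
  ring

lemma aa_cc_bound (s : ℝ) (hn : 6 ≤ n) (hs0 : 0 ≤ s) (hs : s ≤ 3 / n) :
    |aa n s| ≤ 25 / (n : ℝ) ^ 2 ∧ |cc n s| ≤ 5 / (n : ℝ) ^ 2 := by
  have hn' : (6 : ℝ) ≤ n := by exact_mod_cast hn
  have hs2 : s ≤ 1 / 2 := hs.trans (by rw [div_le_div_iff₀ (by linarith) (by norm_num)]; linarith)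
  obtain ⟨r, hr⟩ : ∃ r : ℝ, r = 1 / n := ⟨_, rfl⟩
  obtain ⟨A, hA⟩ : ∃ A : ℝ, A = 1 / (n - 1) := ⟨_, rfl⟩
  obtain ⟨B, hB⟩ : ∃ A : ℝ, A = 1 / (n - 2) := ⟨_, rfl⟩
  obtain ⟨C, hC⟩ : ∃ A : ℝ, A = 1 / (n - 3) := ⟨_, rfl⟩
  have r0 : 0 ≤ r := by rw [hr]; positivity
  have r1 : r ≤ 1 / 6 := by rw [hr]; gcongr
  have A0 : 0 ≤ A := by rw [hA]; apply div_nonneg <;> linarith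
  have B0 : 0 ≤ B := by rw [hB]; apply div_nonneg <;> linarith
  have C0 : 0 ≤ C := by rw [hC]; apply div_nonneg <;> linarith
  have A1 : A ≤ 2 * r := by
    rw [hA, hr, mul_one_div, div_le_div_iff₀ (by linarith) (by linarith)]; linarith
  have B1 : B ≤ 2 * r := by
    rw [hB, hr, mul_one_div, div_le_div_iff₀ (by linarith) (by linarith)]; linarith
  have C1 : C ≤ 2 * r := by
    rw [hC, hr, mul_one_div, div_le_div_iff₀ (by linarith) (by linarith)]; linarith
  have q1 : 0 ≤ r * A := by positivity
  have q1' : r * A ≤ 2 * r ^ 2 := by nlinarith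
  have q2 : 0 ≤ r * A * B := by positivity
  have q2' : r * A * B ≤ 2 / 3 * r ^ 2 := by
    have : r * A * B ≤ r * A * (1 / 3) := by gcongr; linarith
    linarith
  have q3 : 0 ≤ r * A * B * C := by positivity
  have q3' : r * A * B * C ≤ 2 / 9 * r ^ 2 := by
    have : r * A * B * C ≤ r * A * B * (1 / 3) := by gcongr; linarith
    linarith
  have hs3 : s ≤ 3 * r := by rw [hr, mul_one_div]; exact hs
  have ecc : cc n s = (1 - s) * (r * A) - 2 * ((2 * s - 1) * (r * A * B))
      + (3 - 6 * s) * (r * A * B * C) := by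
    rw [hr, hA, hB, hC]; unfold cc; simp only [div_eq_mul_inv, mul_inv, one_mul]
  have eaa : aa n s = s * r + 4 * (s * (r * A)) - 3 * ((1 - s) * (r * A))
      + 12 * ((2 * s - 1) * (r * A * B)) - 6 * ((3 - 6 * s) * (r * A * B * C)) := by
    rw [hr, hA, hB, hC]; unfold aa; simp only [div_eq_mul_inv, mul_inv, one_mul]
  have t0 : 0 ≤ s * r := by positivity
  have t0' : s * r ≤ 3 * r ^ 2 := by nlinarith
  have t1 : 0 ≤ s * (r * A) := by positivity
  have t1' : s * (r * A) ≤ 1 / 2 * (r * A) := by gcongr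
  have t2 : 0 ≤ s * (r * A * B) := by positivity
  have t2' : s * (r * A * B) ≤ 1 / 2 * (r * A * B) := by gcongr
  have t3 : 0 ≤ s * (r * A * B * C) := by positivity
  have t3' : s * (r * A * B * C) ≤ 1 / 2 * (r * A * B * C) := by gcongr
  have e1 : 25 / (n : ℝ) ^ 2 = 25 * r ^ 2 := by rw [hr]; ring
  have e2 : 5 / (n : ℝ) ^ 2 = 5 * r ^ 2 := by rw [hr]; ring
  rw [e1, e2, ecc, eaa, abs_le, abs_le]
  refine ⟨⟨?_, ?_⟩, ⟨?_, ?_⟩⟩ <;> nlinarith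

/-- standardized quadratic form -/
noncomputable def Yst (x : Fin n → ℝ) (M : Matrix (Fin n) (Fin n) ℝ) (σ : Equiv.Perm (Fin n)) : ℝ :=
  qf M (fun i => x (σ i)) * (((n : ℝ) - 1) / ∑ i, M i i) - 1

/-- deviation of the diagonal from constancy -/
noncomputable def psi (M : Matrix (Fin n) (Fin n) ℝ) : ℝ := ∑ i, M i i ^ 2 - (∑ i, M i i) ^ 2 / n

lemma psi_nonneg (hn : 1 ≤ n) (M : Matrix (Fin n) (Fin n) ℝ) : 0 ≤ psi M := by
  unfold psi
  have := sq_sum_le_card_mul_sum_sq (s := (univ : Finset (Fin n))) (f := fun i => M i i)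
  simp only [card_univ, Fintype.card_fin] at this
  have hn' : (0 : ℝ) < n := by positivity
  rw [sub_nonneg, div_le_iff₀ hn']; linarith

lemma sqrt_le_self_six {t : ℝ} (ht : 6 ≤ t) : √t ≤ t := by
  rw [Real.sqrt_le_left (by linarith)]; nlinarith

section
variable (x : Fin n → ℝ) (h1 : ∑ i, x i = 0) (h2 : ∑ i, x i ^ 2 = 1)
  (hb : ∀ i, x i ^ 2 ≤ 3 / n) (hn : 6 ≤ n) {M : Matrix (Fin n) (Fin n) ℝ} (h : IsPr M)
  (κ : ℝ) (hκ : 0 < κ) (hm : κ * n ≤ ∑ i, M i i)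

include hn hκ hm in
lemma tr_facts : 0 < ∑ i, M i i ∧ 0 < ((n : ℝ) - 1) / ∑ i, M i i ∧
    ((n : ℝ) - 1) / ∑ i, M i i ≤ 1 / κ := by
  have hn' : (6 : ℝ) ≤ n := by exact_mod_cast hn
  have h0 : 0 < κ * n := by positivity
  refine ⟨by linarith, div_pos (by linarith) (by linarith), ?_⟩
  rw [div_le_div_iff₀ (by linarith) hκ]; nlinarith

include hn hκ hm in
lemma Yst_eq (σ : Equiv.Perm (Fin n)) :
    Yst x M σ = Fst x M σ * (((n : ℝ) - 1) / ∑ i, M i i) := by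
  have hn' : (6 : ℝ) ≤ n := by exact_mod_cast hn
  obtain ⟨a, b, -⟩ := tr_facts hn κ hκ hm
  have : (n : ℝ) - 1 ≠ 0 := by linarith
  unfold Yst Fst; field_simp

include h1 h2 hn hκ hm h in
lemma Yst_mean : (𝔼 σ, Yst x M σ) = 0 := by
  have hn' : (6 : ℝ) ≤ n := by exact_mod_cast hn
  obtain ⟨a, b, -⟩ := tr_facts hn κ hκ hm
  unfold Yst
  rw [Finset.expect_sub_distrib, ← Finset.expect_mul, qf_moment_one x h1 h2 (by omega) M h.row,
    Fintype.expect_const]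
  have : (n : ℝ) - 1 ≠ 0 := by linarith
  field_simp; ring

include h1 h2 hb hn hκ hm h in
lemma Yst_two : (𝔼 σ, Yst x M σ ^ 2) ≤ 4000 / κ ^ 2 / n := by
  have hn' : (6 : ℝ) ≤ n := by exact_mod_cast hn
  obtain ⟨a, b, c⟩ := tr_facts hn κ hκ hm
  simp only [Yst_eq x hn κ hκ hm, mul_pow, ← Finset.expect_mul]
  calc _ ≤ 4000 / (n : ℝ) * (1 / κ) ^ 2 := by
        have := Fst_two x h1 h2 hb (by omega) h
        gcongr
    _ = _ := by ring

include h1 h2 hb hn hκ hm h in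
lemma Yst_four : (𝔼 σ, Yst x M σ ^ 4) ≤ 10 ^ 8 / κ ^ 4 / n ^ 2 := by
  have hn' : (6 : ℝ) ≤ n := by exact_mod_cast hn
  obtain ⟨a, b, c⟩ := tr_facts hn κ hκ hm
  simp only [Yst_eq x hn κ hκ hm, mul_pow, ← Finset.expect_mul]
  calc _ ≤ 10 ^ 8 / (n : ℝ) ^ 2 * (1 / κ) ^ 4 := by
        have := Fst_four x h1 h2 hb (by omega) h
        gcongr
    _ = _ := by ring

include h1 h2 hb hn hκ hm h in
lemma Yst_abs : (𝔼 σ, |Yst x M σ|) ≤ (4000 / κ ^ 2 + 1) / √n := by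
  have hn' : (6 : ℝ) ≤ n := by exact_mod_cast hn
  have hs : 0 < √(n : ℝ) := Real.sqrt_pos.2 (by linarith)
  have hsq : √(n : ℝ) ^ 2 = n := Real.sq_sqrt (by linarith)
  have h2' := Yst_two x h1 h2 hb hn h κ hκ hm
  calc (𝔼 σ, |Yst x M σ|) ≤ 𝔼 σ, (√n * Yst x M σ ^ 2 + 1 / √n) := by
        refine Finset.expect_le_expect fun σ _ => ?_
        rw [← sq_abs (Yst x M σ)]
        have := sq_nonneg (√n * |Yst x M σ| - 1)
        have h0 := abs_nonneg (Yst x M σ)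
        rw [← sub_le_iff_le_add', le_div_iff₀ hs]
        nlinarith
    _ = √n * (𝔼 σ, Yst x M σ ^ 2) + 1 / √n := by
        rw [Finset.expect_add_distrib, ← Finset.mul_expect, Fintype.expect_const]
    _ ≤ √n * (4000 / κ ^ 2 / n) + 1 / √n := by gcongr
    _ = _ := by
        generalize √(n : ℝ) = r at *
        rw [← hsq]; field_simp

include h1 h2 hb hn hκ hm h in
lemma Yst_three : (𝔼 σ, |Yst x M σ| ^ 3) ≤ (10 ^ 8 / κ ^ 4 + 4000 / κ ^ 2) / (√n * n) := by
  have hn' : (6 : ℝ) ≤ n := by exact_mod_cast hn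
  have hs : 0 < √(n : ℝ) := Real.sqrt_pos.2 (by linarith)
  have hsq : √(n : ℝ) ^ 2 = n := Real.sq_sqrt (by linarith)
  have h2' := Yst_two x h1 h2 hb hn h κ hκ hm
  have h4' := Yst_four x h1 h2 hb hn h κ hκ hm
  calc (𝔼 σ, |Yst x M σ| ^ 3) ≤ 𝔼 σ, (√n * Yst x M σ ^ 4 + 1 / √n * Yst x M σ ^ 2) := by
        refine Finset.expect_le_expect fun σ _ => ?_
        rw [← sq_abs (Yst x M σ), ← Even.pow_abs (by decide : Even 4) (Yst x M σ)]
        have h0 := abs_nonneg (Yst x M σ)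
        generalize |Yst x M σ| = a at *
        have := sq_nonneg (√n * a - 1)
        rw [one_div_mul_eq_div, ← sub_le_iff_le_add', le_div_iff₀ hs]
        have h3 : 0 ≤ a ^ 2 * ((√n * a - 1) ^ 2 + √n * a) := by positivity
        nlinarith
    _ = √n * (𝔼 σ, Yst x M σ ^ 4) + 1 / √n * (𝔼 σ, Yst x M σ ^ 2) := by
        rw [Finset.expect_add_distrib, ← Finset.mul_expect, ← Finset.mul_expect]
    _ ≤ √n * (10 ^ 8 / κ ^ 4 / n ^ 2) + 1 / √n * (4000 / κ ^ 2 / n) := by gcongr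
    _ = _ := by
        generalize √(n : ℝ) = r at *
        rw [← hsq]; field_simp

include h1 h2 hn hκ hm h in
lemma Yst_var (s : ℝ) (h4 : ∑ i, x i ^ 4 = s) :
    (𝔼 σ, Yst x M σ ^ 2)
      = 2 * cc n s * ((n : ℝ) - 1) * ((n : ℝ) - 1 - ∑ i, M i i) / ∑ i, M i i
        + aa n s * (((n : ℝ) - 1) / ∑ i, M i i) ^ 2 * psi M := by
  have hn' : (6 : ℝ) ≤ n := by exact_mod_cast hn
  obtain ⟨a, b, c⟩ := tr_facts hn κ hκ hm
  have e1 := qf_moment_one x h1 h2 (by omega) M h.row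
  have e2 := qf_moment_two x s h1 h2 h4 (by omega) M h.symm h.row
  rw [h.sum_sq] at e2
  have id := aa_cc_identity (n := n) s (by omega)
  have e3 : ∀ σ, Yst x M σ ^ 2 = (((n : ℝ) - 1) / ∑ i, M i i) ^ 2 * qf M (fun i => x (σ i)) ^ 2
      - 2 * (((n : ℝ) - 1) / ∑ i, M i i) * qf M (fun i => x (σ i)) + 1 := by
    intro σ; unfold Yst; ring
  simp only [e3, Finset.expect_add_distrib, Finset.expect_sub_distrib, ← Finset.mul_expect, e1, e2,
    Fintype.expect_const]
  unfold psi
  generalize ∑ i, M i i ^ 2 = q at *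
  generalize ∑ i, M i i = m at *
  have g1 : (n : ℝ) - 1 ≠ 0 := by linarith
  have g2 : (n : ℝ) ≠ 0 := by linarith
  have e5 : ((((n : ℝ) - 1) / m) ^ 2 * (aa n s * q + cc n s * (m ^ 2 + 2 * m))
      - 2 * (((n : ℝ) - 1) / m) * (m / ((n : ℝ) - 1)) + 1)
      - (2 * cc n s * ((n : ℝ) - 1) * ((n : ℝ) - 1 - m) / m
        + aa n s * (((n : ℝ) - 1) / m) ^ 2 * (q - m ^ 2 / n))
      = aa n s * ((n : ℝ) - 1) ^ 2 / n + cc n s * ((n : ℝ) ^ 2 - 1) - 1 := by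
    field_simp
    ring
  linarith

set_option maxHeartbeats 1000000 in
include h1 h2 hb hn hκ hm h in
lemma psi_step (s : ℝ) (h4 : ∑ i, x i ^ 4 = s) (hs : s ≤ 3 / n) :
    (𝔼 σ : Equiv.Perm (Fin n), psi (fun i j => M i j - nextE M (fun k => x (σ k)) i * nextE M (fun k => x (σ k)) j))
      ≤ psi M + (8200 / κ ^ 2 + 2 + 8000 / κ ^ 2) / √n := by
  have hn' : (6 : ℝ) ≤ n := by exact_mod_cast hn
  obtain ⟨a, b, c⟩ := tr_facts hn κ hκ hm
  have hs0 : 0 ≤ s := by rw [← h4]; exact sum_nonneg fun _ _ => by positivity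
  obtain ⟨ba, bc⟩ := aa_cc_bound s hn hs0 hs
  set m := ∑ i, M i i with hmdef
  set R := ((n : ℝ) - 1) / m with hR
  set w : Equiv.Perm (Fin n) → Fin n → ℝ := fun σ => mv M (fun k => x (σ k)) with hw
  have key : ∀ σ : Equiv.Perm (Fin n), psi (fun i j => M i j - nextE M (fun k => x (σ k)) i * nextE M (fun k => x (σ k)) j)
      ≤ psi M + 2 * m / n - 2 * (R * ∑ i, M i i * w σ i ^ 2) + 2 * |Yst x M σ|
        + 2 * R ^ 2 * ∑ i, w σ i ^ 4 + 2 * Yst x M σ ^ 2 := by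
    intro σ
    obtain ⟨s1, s2, s3⟩ := nextE_spec h a.ne' (fun k => x (σ k))
    set e := nextE M (fun k => x (σ k)) with he
    have hq := h.qf_nonneg (fun k => x (σ k))
    have hwe : ∀ i, w σ i ^ 2 * R = e i ^ 2 * (1 + Yst x M σ) := by
      intro i
      rw [hw]; simp only [s3, mul_pow, Real.sq_sqrt hq]; unfold Yst; rw [hR]; ring
    have g1 : psi (fun i j => M i j - e i * e j)
        = psi M + (2 * m - 1) / n - 2 * ∑ i, M i i * e i ^ 2 + ∑ i, e i ^ 4 := by
      unfold psi
      have t1 : ∑ i, (M i i - e i * e i) = m - 1 := by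
        rw [sum_sub_distrib, ← hmdef]; simp only [← pow_two, s1]
      have t2 : ∑ i, (M i i - e i * e i) ^ 2
          = ∑ i, M i i ^ 2 - 2 * ∑ i, M i i * e i ^ 2 + ∑ i, e i ^ 4 := by
        rw [mul_sum, ← sum_sub_distrib, ← sum_add_distrib]
        exact sum_congr rfl fun i _ => by ring
      rw [t1, t2, ← hmdef]; ring
    have g2 : R * ∑ i, M i i * w σ i ^ 2 - |Yst x M σ| ≤ ∑ i, M i i * e i ^ 2 := by
      have t1 : R * ∑ i, M i i * w σ i ^ 2 = (1 + Yst x M σ) * ∑ i, M i i * e i ^ 2 := by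
        rw [mul_sum, mul_sum]
        refine sum_congr rfl fun i _ => ?_
        linear_combination M i i * hwe i
      have t2 : ∑ i, M i i * e i ^ 2 ≤ 1 := by
        rw [← s1]; refine sum_le_sum fun i _ => ?_
        nlinarith [h.diag_le_one i, sq_nonneg (e i)]
      have t3 : 0 ≤ ∑ i, M i i * e i ^ 2 :=
        sum_nonneg fun i _ => mul_nonneg (h.diag_nonneg i) (sq_nonneg _)
      rw [t1]
      have := le_abs_self (Yst x M σ)
      have := abs_nonneg (Yst x M σ)
      nlinarith
    have g3 : ∑ i, e i ^ 4 ≤ 2 * R ^ 2 * ∑ i, w σ i ^ 4 + 2 * Yst x M σ ^ 2 := by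
      have t1 : ∀ i, e i ^ 4 ≤ 2 * R ^ 2 * w σ i ^ 4 + 2 * Yst x M σ ^ 2 * e i ^ 2 := by
        intro i
        have t2 : R ^ 2 * w σ i ^ 4 = e i ^ 4 * (1 + Yst x M σ) ^ 2 := by
          linear_combination (w σ i ^ 2 * R + e i ^ 2 * (1 + Yst x M σ)) * hwe i
        have t3 : e i ^ 2 ≤ 1 := by
          rw [← s1]; exact single_le_sum (f := fun i => e i ^ 2) (fun _ _ => sq_nonneg _) (mem_univ i)
        have t4 : e i ^ 4 ≤ e i ^ 2 := by nlinarith [sq_nonneg (e i)]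
        have t5 : 1 ≤ 2 * (1 + Yst x M σ) ^ 2 + 2 * Yst x M σ ^ 2 := by
          nlinarith [sq_nonneg (1 + 2 * Yst x M σ)]
        have t6 : 0 ≤ e i ^ 4 := by positivity
        have t7 : 0 ≤ Yst x M σ ^ 2 := sq_nonneg _
        nlinarith [mul_le_mul_of_nonneg_left t4 t7, mul_le_mul_of_nonneg_left t5 t6]
      calc _ ≤ ∑ i, (2 * R ^ 2 * w σ i ^ 4 + 2 * Yst x M σ ^ 2 * e i ^ 2) :=
            sum_le_sum fun i _ => t1 i
        _ = _ := by rw [sum_add_distrib, ← mul_sum, ← mul_sum, s1, mul_one]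
    rw [g1]
    have g4 : (2 * m - 1) / n ≤ 2 * m / n := by gcongr; linarith
    linarith
  have m2 : ∀ i, (𝔼 σ, w σ i ^ 2) = M i i / (n - 1) := by
    intro i
    have := lin_moment_two x h1 h2 (by omega) (fun j => M i j) (h.row i)
    rw [h.sq_row] at this
    exact this
  have m4 : ∀ i, (𝔼 σ, w σ i ^ 4) ≤ 40 / n ^ 2 := by
    intro i
    have := lin_moment_four x s h1 h2 h4 (by omega) (fun j => M i j) (h.row i)
    rw [h.sq_row] at this
    have e : (𝔼 σ, w σ i ^ 4) = aa n s * ∑ j, M i j ^ 4 + 3 * cc n s * M i i ^ 2 := this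
    rw [e]
    have t1 : ∑ j, M i j ^ 4 ≤ 1 := by
      calc _ ≤ ∑ j, M i j ^ 2 := sum_le_sum fun j _ => by
            nlinarith [h.entry_sq_le_one i j, sq_nonneg (M i j)]
        _ ≤ 1 := by rw [h.sq_row]; exact h.diag_le_one i
    have t2 : 0 ≤ ∑ j, M i j ^ 4 := sum_nonneg fun _ _ => by positivity
    have t3 : M i i ^ 2 ≤ 1 := h.entry_sq_le_one i i
    have t4 : aa n s * ∑ j, M i j ^ 4 ≤ 25 / n ^ 2 := by
      calc _ ≤ |aa n s| * ∑ j, M i j ^ 4 := by gcongr; exact le_abs_self _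
        _ ≤ 25 / n ^ 2 * 1 := by gcongr
        _ = _ := by ring
    have t5 : cc n s * M i i ^ 2 ≤ 5 / n ^ 2 := by
      calc _ ≤ |cc n s| * M i i ^ 2 := by gcongr; exact le_abs_self _
        _ ≤ 5 / n ^ 2 * 1 := by gcongr
        _ = _ := by ring
    have t6 : 40 / (n : ℝ) ^ 2 = 25 / n ^ 2 + 3 * (5 / n ^ 2) := by ring
    rw [t6]; linarith
  have hsum : R * ∑ i, M i i * (𝔼 σ, w σ i ^ 2) ≥ m / n := by
    simp only [m2]
    have e1 : ∑ i, M i i * (M i i / ((n : ℝ) - 1)) = (∑ i, M i i ^ 2) / (n - 1) := by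
      rw [sum_div]; exact sum_congr rfl fun _ _ => by ring
    have hp := psi_nonneg (by omega) M
    unfold psi at hp
    rw [← hmdef] at hp
    rw [e1, hR]
    have g1 : (n : ℝ) - 1 ≠ 0 := by linarith
    have e2 : ((n : ℝ) - 1) / m * ((∑ i, M i i ^ 2) / (n - 1)) = (∑ i, M i i ^ 2) / m := by
      field_simp
    rw [e2, ge_iff_le, le_div_iff₀ a]
    have : m / n * m = m ^ 2 / n := by ring
    linarith
  have hA := Yst_abs x h1 h2 hb hn h κ hκ hm
  have hT := Yst_two x h1 h2 hb hn h κ hκ hm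
  have hsn : √(n : ℝ) ≤ n := sqrt_le_self_six hn'
  have hsp : 0 < √(n : ℝ) := Real.sqrt_pos.2 (by linarith)
  calc _ ≤ 𝔼 σ, (psi M + 2 * m / n - 2 * (R * ∑ i, M i i * w σ i ^ 2) + 2 * |Yst x M σ|
        + 2 * R ^ 2 * ∑ i, w σ i ^ 4 + 2 * Yst x M σ ^ 2) :=
        Finset.expect_le_expect fun σ _ => key σ
    _ = psi M + 2 * m / n - 2 * (R * ∑ i, M i i * (𝔼 σ, w σ i ^ 2)) + 2 * (𝔼 σ, |Yst x M σ|)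
        + 2 * R ^ 2 * ∑ i, (𝔼 σ, w σ i ^ 4) + 2 * (𝔼 σ, Yst x M σ ^ 2) := by
        simp only [Finset.expect_add_distrib, Finset.expect_sub_distrib, ← Finset.mul_expect,
          Finset.expect_sum_comm, Fintype.expect_const]
    _ ≤ psi M + 2 * m / n - 2 * (m / n) + 2 * ((4000 / κ ^ 2 + 1) / √n)
        + 2 * (1 / κ) ^ 2 * ∑ i : Fin n, 40 / (n : ℝ) ^ 2 + 2 * (4000 / κ ^ 2 / n) := by
        have : ∑ i, (𝔼 σ, w σ i ^ 4) ≤ ∑ i : Fin n, 40 / (n : ℝ) ^ 2 := sum_le_sum fun i _ => m4 i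
        have g : 2 * R ^ 2 * ∑ i, (𝔼 σ, w σ i ^ 4) ≤ 2 * (1 / κ) ^ 2 * ∑ i : Fin n, 40 / (n : ℝ) ^ 2 := by
          have : 0 ≤ ∑ i, (𝔼 σ, w σ i ^ 4) :=
            sum_nonneg fun i _ => Finset.expect_nonneg fun _ _ => by positivity
          gcongr
        linarith
    _ = psi M + (8000 / κ ^ 2 + 2) / √n + (80 / κ ^ 2 + 8000 / κ ^ 2) / n := by
        simp only [sum_const, card_univ, Fintype.card_fin, nsmul_eq_mul]
        field_simp; ring
    _ ≤ psi M + (8000 / κ ^ 2 + 2) / √n + (80 / κ ^ 2 + 8000 / κ ^ 2) / √n := by gcongr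
    _ ≤ _ := by
        rw [add_assoc, ← add_div]
        refine add_le_add le_rfl (div_le_div_of_nonneg_right ?_ hsp.le)
        have : 0 < 1 / κ ^ 2 := by positivity
        have e1 : 8000 / κ ^ 2 = 8000 * (1 / κ ^ 2) := by ring
        have e2 : 80 / κ ^ 2 = 80 * (1 / κ ^ 2) := by ring
        have e3 : 8200 / κ ^ 2 = 8200 * (1 / κ ^ 2) := by ring
        rw [e1, e2, e3]; linarith
end
end onestep


section global
open scoped BigOperators
variable {n p : ℕ}

lemma expect_update {E : Type*} [AddCommMonoid E] [Module ℚ≥0 E]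
    (k : Fin p) (F : (Fin p → Equiv.Perm (Fin n)) → E) :
    (𝔼 ω, F ω) = 𝔼 ω : Fin p → Equiv.Perm (Fin n), 𝔼 σ : Equiv.Perm (Fin n),
      F (Function.update ω k σ) := by
  let S : ((Fin p → Equiv.Perm (Fin n)) × Equiv.Perm (Fin n)) ≃
      ((Fin p → Equiv.Perm (Fin n)) × Equiv.Perm (Fin n)) :=
    { toFun := fun a => (Function.update a.1 k a.2, a.1 k)
      invFun := fun a => (Function.update a.1 k a.2, a.1 k)
      left_inv := fun a => by simp
      right_inv := fun a => by simp }
  have h1 : (𝔼 ω : Fin p → Equiv.Perm (Fin n), 𝔼 σ : Equiv.Perm (Fin n),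
      F (Function.update ω k σ)) = 𝔼 a : (Fin p → Equiv.Perm (Fin n)) × Equiv.Perm (Fin n),
        F (Function.update a.1 k a.2) := by
    rw [← Finset.univ_product_univ, Finset.expect_product]
  have h2 : (𝔼 ω : Fin p → Equiv.Perm (Fin n), 𝔼 σ : Equiv.Perm (Fin n),
      F ω) = 𝔼 a : (Fin p → Equiv.Perm (Fin n)) × Equiv.Perm (Fin n), F a.1 := by
    rw [← Finset.univ_product_univ, Finset.expect_product]
  simp only [Fintype.expect_const] at h2
  rw [h1, h2]
  exact (Fintype.expect_equiv S _ _ (fun _ => rfl)).symm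

/-- the properties of the normalized score vector that are used -/
structure GoodX (x : Fin n → ℝ) : Prop where
  sum : ∑ i, x i = 0
  sq : ∑ i, x i ^ 2 = 1
  bd : ∀ i, x i ^ 2 ≤ 3 / n

lemma GoodX.four {x : Fin n → ℝ} (h : GoodX x) : ∑ i, x i ^ 4 ≤ 3 / n := by
  calc _ ≤ ∑ i, 3 / (n : ℝ) * x i ^ 2 := sum_le_sum fun i _ => by
        nlinarith [h.bd i, sq_nonneg (x i)]
    _ = _ := by rw [← mul_sum, h.sq, mul_one]

/-- the columns -/
noncomputable def Uv (x : Fin n → ℝ) (ω : Fin p → Equiv.Perm (Fin n)) (k : ℕ) : Fin n → ℝ :=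
  if h : k < p then fun i => x (ω ⟨k, h⟩ i) else 0

lemma Uv_of_lt (x : Fin n → ℝ) (ω : Fin p → Equiv.Perm (Fin n)) {k : ℕ} (h : k < p) :
    Uv x ω k = fun i => x (ω ⟨k, h⟩ i) := by unfold Uv; rw [dif_pos h]

lemma Uv_update_ne (x : Fin n → ℝ) (ω : Fin p → Equiv.Perm (Fin n)) (k : Fin p) (σ) {j : ℕ}
    (h : j ≠ k) : Uv x (Function.update ω k σ) j = Uv x ω j := by
  unfold Uv
  by_cases hj : j < p
  · simp only [dif_pos hj]
    rw [Function.update_of_ne]; intro e; exact h (by rw [← e])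
  · simp only [dif_neg hj]

lemma Uv_update_self (x : Fin n → ℝ) (ω : Fin p → Equiv.Perm (Fin n)) (k : Fin p) (σ) :
    Uv x (Function.update ω k σ) k = fun i => x (σ i) := by
  rw [Uv_of_lt x _ k.2]; simp

/-- residual projection -/
noncomputable def Mk (x : Fin n → ℝ) (ω : Fin p → Equiv.Perm (Fin n)) (k : ℕ) :
    Matrix (Fin n) (Fin n) ℝ := Mseq (Uv x ω) k

lemma Mk_update (x : Fin n → ℝ) (ω : Fin p → Equiv.Perm (Fin n)) (k : Fin p) (σ) {j : ℕ}
    (h : j ≤ k) : Mk x (Function.update ω k σ) j = Mk x ω j :=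
  Mseq_congr fun i hi => Uv_update_ne x ω k σ (by omega)

/-- standardized residual -/
noncomputable def Yv (x : Fin n → ℝ) (ω : Fin p → Equiv.Perm (Fin n)) (k : ℕ) : ℝ :=
  if h : k < p then Yst x (Mk x ω k) (ω ⟨k, h⟩) else 0

lemma Yv_update_lt (x : Fin n → ℝ) (ω : Fin p → Equiv.Perm (Fin n)) (k : Fin p) (σ) {j : ℕ}
    (h : j < k) : Yv x (Function.update ω k σ) j = Yv x ω j := by
  unfold Yv
  have hj : j < p := h.trans k.2
  simp only [dif_pos hj]
  rw [Mk_update x ω k σ h.le, Function.update_of_ne]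
  intro e; rw [← e] at h; simp at h

lemma Yv_update_self (x : Fin n → ℝ) (ω : Fin p → Equiv.Perm (Fin n)) (k : Fin p) (σ) :
    Yv x (Function.update ω k σ) k = Yst x (Mk x ω k) σ := by
  unfold Yv
  simp only [dif_pos k.2]
  rw [Mk_update x ω k σ le_rfl]; simp

variable (κ : ℝ) (hκ : 0 < κ) (hn : 6 ≤ n) (hp : κ * n ≤ n - p) {x : Fin n → ℝ} (hx : GoodX x)

include hκ hn hp in
lemma p_lt : p + 1 ≤ n := by
  have : (0 : ℝ) < κ * n := by positivity
  have : (p : ℝ) < n := by linarith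
  exact_mod_cast this

include hκ hn hp in
lemma Mk_spec (x : Fin n → ℝ) (ω : Fin p → Equiv.Perm (Fin n)) {k : ℕ} (hk : k < p) :
    IsPr (Mk x ω k) ∧ ∑ i, Mk x ω k i i = (n : ℝ) - 1 - k ∧ κ * n ≤ ∑ i, Mk x ω k i i := by
  have hpn := p_lt κ hκ hn hp
  obtain ⟨a, b⟩ := Mseq_spec (by omega) (Uv x ω) k (by omega)
  refine ⟨a, b, ?_⟩
  have : (k : ℝ) + 1 ≤ p := by exact_mod_cast hk
  unfold Mk; rw [b]; linarith

include hκ hn hp hx in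
lemma psi_bound (k : ℕ) (hk : k ≤ p) :
    (𝔼 ω : Fin p → Equiv.Perm (Fin n), psi (Mk x ω k))
      ≤ k * ((8200 / κ ^ 2 + 2 + 8000 / κ ^ 2) / √n) := by
  induction k with
  | zero =>
    have hn' : (6 : ℝ) ≤ n := by exact_mod_cast hn
    have : ∀ ω : Fin p → Equiv.Perm (Fin n), psi (Mk x ω 0) = 0 := by
      intro ω
      unfold psi Mk Mseq
      simp [dl]
      field_simp
      ring
    simp [this]
  | succ k ih =>
    have hkp : k < p := hk
    have ih' := ih hkp.le
    rw [expect_update ⟨k, hkp⟩]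
    have step : ∀ ω : Fin p → Equiv.Perm (Fin n),
        (𝔼 σ, psi (Mk x (Function.update ω ⟨k, hkp⟩ σ) (k + 1)))
          ≤ psi (Mk x ω k) + (8200 / κ ^ 2 + 2 + 8000 / κ ^ 2) / √n := by
      intro ω
      obtain ⟨a, -, c⟩ := Mk_spec κ hκ hn hp x ω hkp
      have := psi_step x hx.sum hx.sq hx.bd hn a κ hκ c _ rfl hx.four
      refine le_trans (le_of_eq ?_) this
      refine Finset.expect_congr rfl fun σ _ => ?_
      congr 1
      funext i j
      have e1 := Mk_update x ω ⟨k, hkp⟩ σ (j := k) le_rfl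
      have e2 := Uv_update_self x ω ⟨k, hkp⟩ σ
      simp only at e2
      unfold Mk at e1 ⊢
      rw [Mseq_succ]; unfold eseq
      rw [e1, e2]
    calc _ ≤ 𝔼 ω : Fin p → Equiv.Perm (Fin n),
          (psi (Mk x ω k) + (8200 / κ ^ 2 + 2 + 8000 / κ ^ 2) / √n) :=
          Finset.expect_le_expect fun ω _ => step ω
      _ = (𝔼 ω : Fin p → Equiv.Perm (Fin n), psi (Mk x ω k))
          + (8200 / κ ^ 2 + 2 + 8000 / κ ^ 2) / √n := by
          rw [Finset.expect_add_distrib, Fintype.expect_const]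
      _ ≤ _ := by push_cast; linarith

/-- deterministic part of the conditional variances -/
noncomputable def vk (n : ℕ) (s : ℝ) (k : ℕ) : ℝ :=
  2 * cc n s * ((n : ℝ) - 1) * k / ((n : ℝ) - 1 - k)

lemma norm_expect_le {ι : Type*} [Fintype ι] [Nonempty ι] (f : ι → ℂ) (g : ι → ℝ)
    (h : ∀ i, ‖f i‖ ≤ g i) : ‖𝔼 i, f i‖ ≤ 𝔼 i, g i := by
  rw [Fintype.expect_eq_sum_div_card, Fintype.expect_eq_sum_div_card, norm_div]
  simp only [Complex.norm_natCast]
  gcongr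
  exact norm_sum_le_of_le _ fun i _ => h i

lemma ofReal_expect {ι : Type*} [Fintype ι] (f : ι → ℝ) :
    ((𝔼 i, f i : ℝ) : ℂ) = 𝔼 i, (f i : ℂ) := by
  rw [Fintype.expect_eq_sum_div_card, Fintype.expect_eq_sum_div_card]; push_cast; rfl

lemma cc_nonneg {s : ℝ} (hn : 6 ≤ n) (hs : s ≤ 3 / n) : 0 ≤ cc n s := by
  have hn' : (6 : ℝ) ≤ n := by exact_mod_cast hn
  have hs2 : s ≤ 1 / 2 := hs.trans (by rw [div_le_div_iff₀ (by linarith) (by norm_num)]; linarith)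
  have e : cc n s = (1 - s) / (n * (n - 1)) + 2 * ((1 - 2 * s) / (n * (n - 1) * (n - 2)))
    + (3 - 6 * s) / (n * (n - 1) * (n - 2) * (n - 3)) := by
    unfold cc; ring
  have h1 : (0 : ℝ) ≤ n - 1 := by linarith
  have h2 : (0 : ℝ) ≤ n - 2 := by linarith
  have h3 : (0 : ℝ) ≤ n - 3 := by linarith
  rw [e]
  have : 0 ≤ 1 - s := by linarith
  have : 0 ≤ 1 - 2 * s := by linarith
  have : 0 ≤ 3 - 6 * s := by linarith
  positivity

include hκ hn hp in
lemma vk_bound {s : ℝ} (hs0 : 0 ≤ s) (hs : s ≤ 3 / n) {k : ℕ} (hk : k < p) :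
    0 ≤ vk n s k ∧ vk n s k ≤ 10 / κ / n := by
  have hn' : (6 : ℝ) ≤ n := by exact_mod_cast hn
  have hpn := p_lt κ hκ hn hp
  have hk1 : (k : ℝ) + 1 ≤ p := by exact_mod_cast hk
  have hpn' : (p : ℝ) + 1 ≤ n := by exact_mod_cast hpn
  have hc := cc_nonneg hn hs
  have hc2 : cc n s ≤ 5 / n ^ 2 := le_trans (le_abs_self _) (aa_cc_bound s hn hs0 hs).2
  have hm : κ * n ≤ (n : ℝ) - 1 - k := by linarith
  have hκn : 0 < κ * n := by positivity
  have h1 : (0 : ℝ) ≤ n - 1 := by linarith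
  unfold vk
  constructor
  · apply div_nonneg _ (by linarith); positivity
  · calc _ ≤ 2 * (5 / n ^ 2) * n * n / (κ * n) := by
          gcongr
          · linarith
          · linarith
      _ = _ := by field_simp; ring

include hκ hn hp hx in
/-- one step of the characteristic function recursion -/
lemma char_step (h : ℝ → ℂ) (hh : ∀ u, ‖h u‖ ≤ 1) (α z : ℂ) (C : ℝ) (hC0 : 0 ≤ C)
    (hC : ∀ u, ‖h u - 1 - α * u - z * (u : ℂ) ^ 2‖ ≤ C * |u| ^ 3) (hz : z.re ≤ 0)
    (hzn : ‖z‖ * (10 / κ) ≤ n) (k : ℕ) (hk : k < p) :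
    ‖(𝔼 ω : Fin p → Equiv.Perm (Fin n), ∏ j ∈ range (k + 1), h (Yv x ω j))
      - Complex.exp (z * vk n (∑ i, x i ^ 4) k) *
        𝔼 ω : Fin p → Equiv.Perm (Fin n), ∏ j ∈ range k, h (Yv x ω j)‖
      ≤ (C * (10 ^ 8 / κ ^ 4 + 4000 / κ ^ 2)
        + ‖z‖ * 25 / κ ^ 2 * (8200 / κ ^ 2 + 2 + 8000 / κ ^ 2)
        + (‖z‖ * (10 / κ)) ^ 2) / (√n * n) := by
  have hn' : (6 : ℝ) ≤ n := by exact_mod_cast hn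
  have hsn := sqrt_le_self_six hn'
  have hsp : 0 < √(n : ℝ) := Real.sqrt_pos.2 (by linarith)
  have hsq : √(n : ℝ) ^ 2 = n := Real.sq_sqrt (by linarith)
  set s := ∑ i, x i ^ 4 with hs
  have hs0 : 0 ≤ s := sum_nonneg fun _ _ => by positivity
  have hs3 : s ≤ 3 / n := hx.four
  set D := 8200 / κ ^ 2 + 2 + 8000 / κ ^ 2 with hD
  set W : (Fin p → Equiv.Perm (Fin n)) → ℂ := fun ω => ∏ j ∈ range k, h (Yv x ω j) with hW
  have hW1 : ∀ ω, ‖W ω‖ ≤ 1 := by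
    intro ω; rw [hW]; simp only [norm_prod]
    exact prod_le_one (fun _ _ => norm_nonneg _) fun j _ => hh _
  have e1 : (𝔼 ω : Fin p → Equiv.Perm (Fin n), ∏ j ∈ range (k + 1), h (Yv x ω j))
      = 𝔼 ω, W ω * 𝔼 σ, h (Yst x (Mk x ω k) σ) := by
    rw [expect_update ⟨k, hk⟩]
    refine Finset.expect_congr rfl fun ω _ => ?_
    rw [Finset.mul_expect]
    refine Finset.expect_congr rfl fun σ _ => ?_
    rw [prod_range_succ]
    have := Yv_update_self x ω ⟨k, hk⟩ σ
    simp only at this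
    rw [this, hW]
    congr 1
    refine prod_congr rfl fun j hj => ?_
    rw [Yv_update_lt x ω ⟨k, hk⟩ σ (mem_range.1 hj)]
  obtain ⟨v0, v1⟩ := vk_bound κ hκ hn hp hs0 hs3 hk
  set v := vk n s k with hv
  have e2 : ∀ ω : Fin p → Equiv.Perm (Fin n), ‖(𝔼 σ, h (Yst x (Mk x ω k) σ)) - Complex.exp (z * v)‖
      ≤ C * ((10 ^ 8 / κ ^ 4 + 4000 / κ ^ 2) / (√n * n)) + ‖z‖ * (25 / n ^ 2 * (1 / κ) ^ 2 * psi (Mk x ω k))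
        + (‖z‖ * (10 / κ / n)) ^ 2 := by
    intro ω
    obtain ⟨a, b, c⟩ := Mk_spec κ hκ hn hp x ω hk
    have y1 := Yst_mean x hx.sum hx.sq hn a κ hκ c
    have y2 := Yst_var x hx.sum hx.sq hn a κ hκ c s rfl
    have y3 := Yst_three x hx.sum hx.sq hx.bd hn a κ hκ c
    obtain ⟨q1, q2, q3⟩ := tr_facts hn κ hκ c
    have t1 : ‖(𝔼 σ, h (Yst x (Mk x ω k) σ)) - 1 - z * (𝔼 σ, Yst x (Mk x ω k) σ ^ 2 : ℝ)‖
        ≤ C * ((10 ^ 8 / κ ^ 4 + 4000 / κ ^ 2) / (√n * n)) := by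
      have : (𝔼 σ, h (Yst x (Mk x ω k) σ)) - 1 - z * (𝔼 σ, Yst x (Mk x ω k) σ ^ 2 : ℝ)
          = 𝔼 σ, (h (Yst x (Mk x ω k) σ) - 1 - α * (Yst x (Mk x ω k) σ : ℝ)
            - z * ((Yst x (Mk x ω k) σ : ℝ) : ℂ) ^ 2) := by
        rw [Finset.expect_sub_distrib, Finset.expect_sub_distrib, Finset.expect_sub_distrib,
          ← Finset.mul_expect, ← Finset.mul_expect, ← ofReal_expect, y1, ofReal_expect,
          Fintype.expect_const]
        push_cast; ring
      rw [this]
      refine (norm_expect_le _ _ fun σ => hC _).trans ?_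
      rw [← Finset.mul_expect]
      exact mul_le_mul_of_nonneg_left y3 hC0
    have t2 : (𝔼 σ, Yst x (Mk x ω k) σ ^ 2)
        = v + aa n s * (((n : ℝ) - 1) / ∑ i, Mk x ω k i i) ^ 2 * psi (Mk x ω k) := by
      rw [y2]
      congr 1
      rw [b, hv]; unfold vk; congr 1; ring
    have hpsi := psi_nonneg (by omega) (Mk x ω k)
    have t3 : |aa n s * (((n : ℝ) - 1) / ∑ i, Mk x ω k i i) ^ 2 * psi (Mk x ω k)|
        ≤ 25 / n ^ 2 * (1 / κ) ^ 2 * psi (Mk x ω k) := by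
      rw [abs_mul, abs_mul, abs_of_nonneg hpsi, abs_of_nonneg (sq_nonneg (((n : ℝ) - 1) / ∑ i, Mk x ω k i i))]
      have := (aa_cc_bound s hn hs0 hs3).1
      gcongr
    have hzv : ‖z * v‖ ≤ ‖z‖ * (10 / κ / n) := by
      rw [norm_mul, Complex.norm_real, Real.norm_of_nonneg v0]
      gcongr
    have t4 : ‖Complex.exp (z * v) - 1 - z * v‖ ≤ (‖z‖ * (10 / κ / n)) ^ 2 := by
      refine (Complex.norm_exp_sub_one_sub_id_le ?_).trans ?_
      · refine hzv.trans ?_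
        rw [← mul_div_assoc, div_le_one (by linarith)]; exact hzn
      · gcongr
    have t5 : (𝔼 σ, h (Yst x (Mk x ω k) σ)) - Complex.exp (z * v)
        = ((𝔼 σ, h (Yst x (Mk x ω k) σ)) - 1 - z * (𝔼 σ, Yst x (Mk x ω k) σ ^ 2 : ℝ))
          + z * ((aa n s * (((n : ℝ) - 1) / ∑ i, Mk x ω k i i) ^ 2 * psi (Mk x ω k) : ℝ) : ℂ)
          - (Complex.exp (z * v) - 1 - z * v) := by
      rw [t2]; push_cast; ring
    rw [t5]
    refine (norm_sub_le _ _).trans (add_le_add ((norm_add_le _ _).trans (add_le_add t1 ?_)) t4)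
    rw [norm_mul, Complex.norm_real, Real.norm_eq_abs]
    gcongr
  rw [e1]
  have e3 : (𝔼 ω, W ω * 𝔼 σ, h (Yst x (Mk x ω k) σ)) - Complex.exp (z * v) * 𝔼 ω, W ω
      = 𝔼 ω, W ω * ((𝔼 σ, h (Yst x (Mk x ω k) σ)) - Complex.exp (z * v)) := by
    simp only [mul_sub]
    rw [Finset.expect_sub_distrib, ← Finset.expect_mul]; ring
  rw [e3]
  have hpb := psi_bound κ hκ hn hp hx k hk.le
  have hpn := p_lt κ hκ hn hp
  have hkn : (k : ℝ) ≤ n := by exact_mod_cast (by omega : k ≤ n)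
  have hD0 : 0 ≤ D := by rw [hD]; positivity
  calc _ ≤ 𝔼 ω : Fin p → Equiv.Perm (Fin n), (C * ((10 ^ 8 / κ ^ 4 + 4000 / κ ^ 2) / (√n * n)) + ‖z‖ * (25 / n ^ 2 * (1 / κ) ^ 2 * psi (Mk x ω k))
        + (‖z‖ * (10 / κ / n)) ^ 2) := by
        refine norm_expect_le _ _ fun ω => ?_
        rw [norm_mul]
        calc _ ≤ 1 * ‖(𝔼 σ, h (Yst x (Mk x ω k) σ)) - Complex.exp (z * v)‖ := by
              gcongr; exact hW1 ω
          _ ≤ _ := by rw [one_mul]; exact e2 ω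
    _ = C * ((10 ^ 8 / κ ^ 4 + 4000 / κ ^ 2) / (√n * n)) + ‖z‖ * (25 / n ^ 2 * (1 / κ) ^ 2 * 𝔼 ω : Fin p → Equiv.Perm (Fin n), psi (Mk x ω k))
        + (‖z‖ * (10 / κ / n)) ^ 2 := by
        simp only [Finset.expect_add_distrib, ← Finset.mul_expect, Fintype.expect_const]
    _ ≤ C * ((10 ^ 8 / κ ^ 4 + 4000 / κ ^ 2) / (√n * n)) + ‖z‖ * (25 / n ^ 2 * (1 / κ) ^ 2 * (n * (D / √n)))
        + (‖z‖ * (10 / κ)) ^ 2 / (√n * n) := by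
        have g1 : (𝔼 ω : Fin p → Equiv.Perm (Fin n), psi (Mk x ω k)) ≤ n * (D / √n) :=
          hpb.trans (by gcongr)
        have g2 : (‖z‖ * (10 / κ / n)) ^ 2 ≤ (‖z‖ * (10 / κ)) ^ 2 / (√n * n) := by
          have : (‖z‖ * (10 / κ / n)) ^ 2 = (‖z‖ * (10 / κ)) ^ 2 / (n * n) := by field_simp
          rw [this]; gcongr
        gcongr
    _ = _ := by field_simp

include hκ hn hp hx in
lemma char_total (h : ℝ → ℂ) (hh : ∀ u, ‖h u‖ ≤ 1) (α z : ℂ) (C : ℝ) (hC0 : 0 ≤ C)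
    (hC : ∀ u, ‖h u - 1 - α * u - z * (u : ℂ) ^ 2‖ ≤ C * |u| ^ 3) (hz : z.re ≤ 0)
    (hzn : ‖z‖ * (10 / κ) ≤ n) (k : ℕ) (hk : k ≤ p) :
    ‖(𝔼 ω : Fin p → Equiv.Perm (Fin n), ∏ j ∈ range k, h (Yv x ω j))
      - Complex.exp (z * (∑ j ∈ range k, vk n (∑ i, x i ^ 4) j : ℝ))‖
      ≤ k * ((C * (10 ^ 8 / κ ^ 4 + 4000 / κ ^ 2)
        + ‖z‖ * 25 / κ ^ 2 * (8200 / κ ^ 2 + 2 + 8000 / κ ^ 2)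
        + (‖z‖ * (10 / κ)) ^ 2) / (√n * n)) := by
  induction k with
  | zero => simp
  | succ k ih =>
    have ih' := ih (by omega)
    have st := char_step κ hκ hn hp hx h hh α z C hC0 hC hz hzn k hk
    have hs0 : 0 ≤ ∑ i, x i ^ 4 := sum_nonneg fun _ _ => by positivity
    obtain ⟨v0, v1⟩ := vk_bound κ hκ hn hp hs0 hx.four (k := k) hk
    have hexp : ‖Complex.exp (z * vk n (∑ i, x i ^ 4) k)‖ ≤ 1 := by
      rw [Complex.norm_exp, Real.exp_le_one_iff]
      simp only [Complex.mul_re, Complex.ofReal_re, Complex.ofReal_im, mul_zero, sub_zero]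
      exact mul_nonpos_of_nonpos_of_nonneg hz v0
    have e : (𝔼 ω : Fin p → Equiv.Perm (Fin n), ∏ j ∈ range (k + 1), h (Yv x ω j))
        - Complex.exp (z * (∑ j ∈ range (k + 1), vk n (∑ i, x i ^ 4) j : ℝ))
        = ((𝔼 ω : Fin p → Equiv.Perm (Fin n), ∏ j ∈ range (k + 1), h (Yv x ω j))
          - Complex.exp (z * vk n (∑ i, x i ^ 4) k) *
            𝔼 ω : Fin p → Equiv.Perm (Fin n), ∏ j ∈ range k, h (Yv x ω j))
          + Complex.exp (z * vk n (∑ i, x i ^ 4) k) *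
            ((𝔼 ω : Fin p → Equiv.Perm (Fin n), ∏ j ∈ range k, h (Yv x ω j))
            - Complex.exp (z * (∑ j ∈ range k, vk n (∑ i, x i ^ 4) j : ℝ))) := by
      rw [mul_sub, ← Complex.exp_add, sum_range_succ]; push_cast; ring_nf
    rw [e]
    refine (norm_add_le _ _).trans ?_
    rw [norm_mul]
    have := mul_le_mul hexp ih' (norm_nonneg _) zero_le_one
    rw [Nat.cast_succ, add_mul, one_mul]
    linarith

end global


section analysis
open Filter Topology

lemma log_quad {u : ℝ} (hu : |u| ≤ 1 / 2) : |Real.log (1 + u) - u + u ^ 2 / 2| ≤ 2 * |u| ^ 3 := by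
  have h := Real.abs_log_sub_add_sum_range_le (x := -u) (by rw [abs_neg]; linarith) 2
  rw [abs_neg] at h
  have e : (∑ i ∈ range 2, (-u) ^ (i + 1) / ((i : ℝ) + 1)) + Real.log (1 - -u)
      = Real.log (1 + u) - u + u ^ 2 / 2 := by
    rw [sum_range_succ, sum_range_succ, range_zero, sum_empty]
    rw [sub_neg_eq_add]; push_cast; ring
  rw [e] at h
  refine h.trans ?_
  rw [div_le_iff₀ (by linarith)]
  have : 0 ≤ |u| ^ 3 := by positivity
  norm_num
  nlinarith

lemma ht_bound (t : ℝ) : ∃ C : ℝ, 0 ≤ C ∧ ∀ u : ℝ,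
    ‖Complex.exp (t * Complex.I * (Real.log (1 + u) : ℝ)) - 1 - (t * Complex.I) * u
      - ((-(t : ℂ) ^ 2 - t * Complex.I) / 2) * (u : ℂ) ^ 2‖ ≤ C * |u| ^ 3 := by
  set z : ℂ := (-(t : ℂ) ^ 2 - t * Complex.I) / 2 with hz
  refine ⟨(16 + 4 * |t| + 2 * ‖z‖) + (8 * |t| ^ 3 * Real.exp (|t| * 2) + |t| * 2 + |t| ^ 2 * 5), by positivity, ?_⟩
  intro u
  have hexp : ‖Complex.exp (t * Complex.I * (Real.log (1 + u) : ℝ))‖ = 1 := by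
    have : (t * Complex.I * (Real.log (1 + u) : ℝ) : ℂ) = ((t * Real.log (1 + u) : ℝ) : ℂ) * Complex.I := by
      push_cast; ring
    rw [this, Complex.norm_exp_ofReal_mul_I]
  rcases le_total |u| (1 / 2) with hu | hu
  · set l := Real.log (1 + u) with hl
    have q := log_quad hu
    rw [← hl] at q
    have u0 := abs_nonneg u
    have hu2 : |u| ^ 2 ≤ |u| / 2 := by nlinarith
    have hu3 : |u| ^ 3 ≤ |u| ^ 2 / 2 := by nlinarith [sq_nonneg |u|]
    have l1 : |l - u| ≤ 3 / 2 * |u| ^ 2 := by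
      have : l - u = (l - u + u ^ 2 / 2) - u ^ 2 / 2 := by ring
      rw [this]
      refine (abs_sub _ _).trans ?_
      rw [abs_of_nonneg (by positivity : 0 ≤ u ^ 2 / 2)]
      have := sq_abs u
      linarith
    have l2 : |l| ≤ 2 * |u| := by
      have : l = (l - u) + u := by ring
      rw [this]; refine (abs_add_le _ _).trans ?_
      linarith
    have l3 : |l ^ 2 - u ^ 2| ≤ 5 * |u| ^ 3 := by
      rw [sq_sub_sq, abs_mul]
      have : |l + u| ≤ 3 * |u| := (abs_add_le _ _).trans (by linarith)
      calc _ ≤ 3 * |u| * (3 / 2 * |u| ^ 2) := by gcongr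
        _ ≤ _ := by nlinarith [pow_nonneg u0 3]
    have ex := Complex.norm_exp_sub_sum_le_norm_mul_exp (t * Complex.I * (l : ℝ)) 3
    have es : ∑ m ∈ range 3, (t * Complex.I * (l : ℝ) : ℂ) ^ m / (m.factorial : ℂ)
        = 1 + t * Complex.I * l - (t : ℂ) ^ 2 * l ^ 2 / 2 := by
      simp only [sum_range_succ, range_zero, sum_empty]
      simp [Nat.factorial]
      ring_nf; rw [Complex.I_sq]; ring
    rw [es] at ex
    have hn1 : ‖(t * Complex.I * (l : ℝ) : ℂ)‖ = |t| * |l| := by simp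
    rw [hn1] at ex
    have ex2 : ‖Complex.exp (t * Complex.I * (l : ℝ)) - (1 + t * Complex.I * l - (t : ℂ) ^ 2 * l ^ 2 / 2)‖
        ≤ 8 * |t| ^ 3 * Real.exp (|t| * 2) * |u| ^ 3 := by
      refine ex.trans ?_
      calc _ ≤ (|t| * (2 * |u|)) ^ 3 * Real.exp (|t| * 2) := by
            gcongr
            linarith
        _ = _ := by ring
    have dec : Complex.exp (t * Complex.I * (l : ℝ)) - 1 - (t * Complex.I) * u - z * (u : ℂ) ^ 2
        = (Complex.exp (t * Complex.I * (l : ℝ)) - (1 + t * Complex.I * l - (t : ℂ) ^ 2 * l ^ 2 / 2))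
          + (t * Complex.I) * ((l - u + u ^ 2 / 2 : ℝ) : ℂ) + (-(t : ℂ) ^ 2 / 2) * ((l ^ 2 - u ^ 2 : ℝ) : ℂ) := by
      rw [hz]; push_cast; ring
    rw [dec]
    have b2 : ‖(t * Complex.I) * ((l - u + u ^ 2 / 2 : ℝ) : ℂ)‖ ≤ |t| * 2 * |u| ^ 3 := by
      rw [norm_mul, Complex.norm_real]
      have : ‖(t * Complex.I : ℂ)‖ = |t| := by simp
      rw [this, Real.norm_eq_abs, mul_assoc]
      gcongr
    have b3 : ‖(-(t : ℂ) ^ 2 / 2) * ((l ^ 2 - u ^ 2 : ℝ) : ℂ)‖ ≤ |t| ^ 2 * 5 * |u| ^ 3 := by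
      rw [norm_mul, Complex.norm_real, Real.norm_eq_abs]
      have : ‖(-(t : ℂ) ^ 2 / 2)‖ = |t| ^ 2 / 2 := by simp
      rw [this]
      calc _ ≤ |t| ^ 2 / 2 * (5 * |u| ^ 3) := by gcongr
        _ ≤ _ := by nlinarith [mul_nonneg (sq_nonneg |t|) (pow_nonneg u0 3)]
    have := (norm_add_le _ _).trans (add_le_add ((norm_add_le _ _).trans (add_le_add ex2 b2)) b3)
    refine this.trans ?_
    have : 0 ≤ (16 + 4 * |t| + 2 * ‖z‖) * |u| ^ 3 := by positivity
    linarith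
  · have h1 : 1 ≤ 8 * |u| ^ 3 := by
      have : (1 / 2 : ℝ) ^ 3 ≤ |u| ^ 3 := by gcongr
      norm_num at this; linarith
    have h2 : |u| ≤ 4 * |u| ^ 3 := by
      have : (1 / 2 : ℝ) ^ 2 ≤ |u| ^ 2 := by gcongr
      nlinarith [abs_nonneg u]
    have h3 : |u| ^ 2 ≤ 2 * |u| ^ 3 := by nlinarith [sq_nonneg |u|]
    have b := norm_sub_le (Complex.exp (t * Complex.I * (Real.log (1 + u) : ℝ)) - 1 - (t * Complex.I) * u) (z * (u : ℂ) ^ 2)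
    have b2 := norm_sub_le (Complex.exp (t * Complex.I * (Real.log (1 + u) : ℝ)) - 1) ((t * Complex.I) * u)
    have b3 := norm_sub_le (Complex.exp (t * Complex.I * (Real.log (1 + u) : ℝ))) 1
    rw [hexp, norm_one] at b3
    have c1 : ‖z * (u : ℂ) ^ 2‖ = ‖z‖ * |u| ^ 2 := by simp
    have c2 : ‖(t * Complex.I * u : ℂ)‖ = |t| * |u| := by simp
    rw [c1] at b; rw [c2] at b2
    have d1 : ‖z‖ * |u| ^ 2 ≤ ‖z‖ * (2 * |u| ^ 3) := by gcongr
    have d2 : |t| * |u| ≤ |t| * (4 * |u| ^ 3) := by gcongr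
    have : 0 ≤ (8 * |t| ^ 3 * Real.exp (|t| * 2) + |t| * 2 + |t| ^ 2 * 5) * |u| ^ 3 := by positivity
    linarith


lemma cc_lim (s : ℕ → ℝ) (hs0 : ∀ n, 0 ≤ s n) (hs : ∀ᶠ n in atTop, s n ≤ 3 / (n : ℝ)) :
    Tendsto (fun n : ℕ => cc n (s n) * ((n : ℝ) - 1) ^ 2) atTop (𝓝 1) := by
  have hinv : Tendsto (fun n : ℕ => (1 : ℝ) / n) atTop (𝓝 0) := tendsto_one_div_atTop_nhds_zero_nat
  have h1 : Tendsto (fun n : ℕ => cc n (s n) * ((n : ℝ) ^ 2 - 1) - 1) atTop (𝓝 0) := by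
    have hb : Tendsto (fun n : ℕ => 25 * ((1 : ℝ) / n)) atTop (𝓝 0) := by simpa using hinv.const_mul 25
    refine squeeze_zero_norm' ?_ hb
    filter_upwards [hs, eventually_ge_atTop 6] with n h1 h6
    have hn' : (6 : ℝ) ≤ n := by exact_mod_cast h6
    have id := aa_cc_identity (n := n) (s n) (by omega)
    have : cc n (s n) * ((n : ℝ) ^ 2 - 1) - 1 = - (aa n (s n) * (((n : ℝ) - 1) ^ 2 / n)) := by
      rw [← mul_div_assoc]; linarith
    rw [this, norm_neg, norm_mul, Real.norm_eq_abs, Real.norm_of_nonneg (by positivity)]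
    calc _ ≤ 25 / (n : ℝ) ^ 2 * ((n : ℝ) ^ 2 / n) := by
          have := (aa_cc_bound (s n) h6 (hs0 n) h1).1
          gcongr
          · linarith
          · linarith
      _ = _ := by field_simp
  have h2 : Tendsto (fun n : ℕ => (1 - (1 : ℝ) / n) / (1 + 1 / n)) atTop (𝓝 ((1 - 0) / (1 + 0))) :=
    (hinv.const_sub 1).div (hinv.const_add 1) (by norm_num)
  have h3 := (h1.add_const 1).mul h2
  norm_num at h3
  refine h3.congr' ?_
  filter_upwards [eventually_ge_atTop 6] with n h6
  have hn' : (6 : ℝ) ≤ n := by exact_mod_cast h6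
  have : (n : ℝ) + 1 ≠ 0 := by linarith
  field_simp
  ring

variable {y : ℝ} (hy0 : 0 < y) (hy1 : y < 1) {p : ℕ → ℕ}
    (hpy : Tendsto (fun n => (p n : ℝ) / (n : ℝ)) atTop (𝓝 y))

include hy1 hpy in
lemma ev_kappa : ∀ᶠ n : ℕ in atTop, (1 - y) / 2 * (n : ℝ) ≤ n - p n := by
  have : ∀ᶠ n in atTop, (p n : ℝ) / (n : ℝ) < (1 + y) / 2 :=
    hpy.eventually_lt_const (by linarith)
  filter_upwards [this, eventually_ge_atTop 1] with n h h1
  have hn' : (1 : ℝ) ≤ n := by exact_mod_cast h1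
  rw [div_lt_iff₀ (by linarith)] at h
  linarith

include hy1 hpy in
/-- the auxiliary `n - 1 - p n` -/
lemma ev_large (K : ℝ) : ∀ᶠ n : ℕ in atTop, K ≤ (n : ℝ) - 1 - p n := by
  have h2 : Tendsto (fun n : ℕ => (1 - y) / 2 * (n : ℝ)) atTop atTop :=
    Tendsto.const_mul_atTop (by linarith) tendsto_natCast_atTop_atTop
  filter_upwards [ev_kappa hy1 hpy, h2.eventually_ge_atTop (K + 1)] with n h h1
  linarith

include hpy in
lemma lim_ratio : Tendsto (fun n : ℕ => ((n : ℝ) - p n) / n) atTop (𝓝 (1 - y)) := by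
  refine (hpy.const_sub 1).congr' ?_
  filter_upwards [eventually_ge_atTop 1] with n h1
  have hn' : (1 : ℝ) ≤ n := by exact_mod_cast h1
  field_simp

include hpy in
lemma lim_ratio2 : Tendsto (fun n : ℕ => ((n : ℝ) - 1 - p n) / (n - 1)) atTop (𝓝 (1 - y)) := by
  have hinv : Tendsto (fun n : ℕ => (1 : ℝ) / n) atTop (𝓝 0) := tendsto_one_div_atTop_nhds_zero_nat
  have := ((lim_ratio hpy).sub hinv).div (hinv.const_sub 1) (by norm_num)
  norm_num at this
  refine this.congr' ?_
  filter_upwards [eventually_ge_atTop 2] with n h1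
  have hn' : (2 : ℝ) ≤ n := by exact_mod_cast h1
  have : (n : ℝ) - 1 ≠ 0 := by linarith
  simp only [Pi.div_apply]
  field_simp
  try ring

lemma log_lower {a : ℝ} (ha : 0 < a) : Real.log (a + 1) - Real.log a ≤ 1 / a := by
  rw [← Real.log_div (by linarith) ha.ne']
  have := Real.log_le_sub_one_of_pos (x := (a + 1) / a) (by positivity)
  have e : (a + 1) / a - 1 = 1 / a := by field_simp; ring
  linarith

lemma log_upper {a : ℝ} (ha : 1 < a) : 1 / a ≤ Real.log a - Real.log (a - 1) := by
  have := Real.log_le_sub_one_of_pos (x := (a - 1) / a) (div_pos (by linarith) (by linarith))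
  rw [Real.log_div (by linarith) (by linarith)] at this
  have e : (a - 1) / a - 1 = - (1 / a) := by field_simp; ring
  linarith

lemma harm_bounds (N : ℝ) (q : ℕ) (h : 1 ≤ N - q) :
    Real.log (N + 1) - Real.log (N + 1 - q) ≤ ∑ k ∈ range q, 1 / (N - k) ∧
    ∑ k ∈ range q, 1 / (N - k) ≤ Real.log N - Real.log (N - q) := by
  induction q with
  | zero => simp
  | succ q ih =>
    push_cast at h
    obtain ⟨a, b⟩ := ih (by linarith)
    have l1 := log_lower (a := N - q) (by linarith)
    have l2 := log_upper (a := N - q) (by linarith)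
    rw [sum_range_succ]
    push_cast
    rw [show N + 1 - ((q : ℝ) + 1) = N - q by ring, show N - ((q : ℝ) + 1) = N - q - 1 by ring]
    rw [show N - q + 1 = N + 1 - q by ring] at l1
    constructor <;> linarith

include hy1 hpy in
lemma harm_lim : Tendsto (fun n : ℕ => ∑ k ∈ range (p n), 1 / ((n : ℝ) - 1 - k)) atTop
    (𝓝 (- Real.log (1 - y))) := by
  have a1 := ((lim_ratio hpy).log (by linarith)).neg
  have a2 := ((lim_ratio2 hpy).log (by linarith)).neg
  refine tendsto_of_tendsto_of_tendsto_of_le_of_le' a1 a2 ?_ ?_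
  · filter_upwards [ev_large hy1 hpy 1, eventually_ge_atTop 2] with n h1 h2
    have hn' : (2 : ℝ) ≤ n := by exact_mod_cast h2
    have := (harm_bounds ((n : ℝ) - 1) (p n) h1).1
    rw [Real.log_div (by linarith) (by linarith)]
    rw [sub_add_cancel] at this
    linarith
  · filter_upwards [ev_large hy1 hpy 1, eventually_ge_atTop 2] with n h1 h2
    have hn' : (2 : ℝ) ≤ n := by exact_mod_cast h2
    have := (harm_bounds ((n : ℝ) - 1) (p n) h1).2
    rw [Real.log_div (by linarith) (by linarith)]
    linarith

include hy1 hpy in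
lemma vk_lim (s : ℕ → ℝ) (hs0 : ∀ n, 0 ≤ s n) (hs : ∀ᶠ n in atTop, s n ≤ 3 / (n : ℝ)) :
    Tendsto (fun n : ℕ => ∑ k ∈ range (p n), vk n (s n) k) atTop
      (𝓝 (-2 * Real.log (1 - y) - 2 * y)) := by
  have hinv : Tendsto (fun n : ℕ => (1 : ℝ) / n) atTop (𝓝 0) := tendsto_one_div_atTop_nhds_zero_nat
  have h1 := cc_lim s hs0 hs
  have h2 := harm_lim hy1 hpy
  have h3 := hpy.div (hinv.const_sub 1) (by norm_num)
  have := (h1.mul (h2.sub h3)).const_mul 2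
  have e : 2 * (1 * (-Real.log (1 - y) - y / (1 - 0))) = -2 * Real.log (1 - y) - 2 * y := by
    rw [sub_zero, div_one]; ring
  rw [e] at this
  refine this.congr' ?_
  filter_upwards [ev_large hy1 hpy 1, eventually_ge_atTop 2] with n h1 h2
  have hn' : (2 : ℝ) ≤ n := by exact_mod_cast h2
  have hk : ∀ k ∈ range (p n), vk n (s n) k = 2 * cc n (s n) * ((n : ℝ) - 1) *
      (((n : ℝ) - 1) * (1 / ((n : ℝ) - 1 - k)) - 1) := by
    intro k hk
    have : (k : ℝ) + 1 ≤ p n := by exact_mod_cast mem_range.1 hk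
    have : (n : ℝ) - 1 - k ≠ 0 := by linarith
    unfold vk
    field_simp
    ring
  rw [sum_congr rfl hk, ← mul_sum, sum_sub_distrib, ← mul_sum]
  simp only [sum_const, card_range, nsmul_eq_mul, mul_one, Pi.div_apply]
  have : (n : ℝ) - 1 ≠ 0 := by linarith
  have e2 : (p n : ℝ) / n / (1 - 1 / n) = p n / (n - 1) := by
    field_simp
  rw [e2]
  field_simp

end analysis


section stirling
open Filter Topology

lemma log_fact (N q : ℕ) (h : q ≤ N) :
    ∑ k ∈ range q, Real.log ((N : ℝ) - k) = Real.log (N.factorial) - Real.log ((N - q).factorial) := by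
  induction q with
  | zero => simp
  | succ q ih =>
    rw [sum_range_succ, ih (by omega)]
    obtain ⟨m, rfl⟩ : ∃ m, N = m + (q + 1) := ⟨N - (q + 1), by omega⟩
    rw [show m + (q + 1) - q = m + 1 by omega, show m + (q + 1) - (q + 1) = m by omega,
      Nat.factorial_succ, Nat.cast_mul, Real.log_mul (by positivity) (by positivity)]
    push_cast
    rw [show (m : ℝ) + (q + 1) - q = m + 1 by ring]
    ring

lemma log_fact_stirling (m : ℕ) (hm : 1 ≤ m) : Real.log (m.factorial) =
    Real.log (Stirling.stirlingSeq m) + 1 / 2 * (Real.log 2 + Real.log m) + m * (Real.log m - 1) := by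
  have hm' : (1 : ℝ) ≤ m := by exact_mod_cast hm
  have := Stirling.log_stirlingSeq_formula m
  rw [Real.log_mul (by norm_num) (by linarith), Real.log_div (by linarith) (Real.exp_ne_zero _),
    Real.log_exp] at this
  linarith

variable {y : ℝ} (hy0 : 0 < y) (hy1 : y < 1) {p : ℕ → ℕ}
    (hpy : Tendsto (fun n => (p n : ℝ) / (n : ℝ)) atTop (𝓝 y))

include hy1 hpy in
lemma det_lim : Tendsto (fun n : ℕ => ∑ k ∈ range (p n), Real.log (((n : ℝ) - 1 - k) / (n - 1))
      + ((n : ℝ) - p n) * Real.log (1 - p n / n) + p n) atTop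
    (𝓝 (1 / 2 * Real.log (1 - y) + y)) := by
  have hM : Tendsto (fun n : ℕ => n - 1 - p n) atTop atTop := by
    refine tendsto_atTop.2 fun K => ?_
    filter_upwards [ev_large hy1 hpy (K + 1), eventually_ge_atTop 1] with n h1 h2
    have : (K : ℝ) + 1 + p n + 1 ≤ n := by linarith
    have : K + 1 + p n + 1 ≤ n := by exact_mod_cast this
    omega
  have hN : Tendsto (fun n : ℕ => n - 1) atTop atTop := tendsto_sub_atTop_nat 1
  have hl : Tendsto (fun m : ℕ => Real.log (Stirling.stirlingSeq m)) atTop (𝓝 (Real.log √Real.pi)) :=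
    Stirling.tendsto_stirlingSeq_sqrt_pi.log (by positivity)
  have g : Tendsto (fun m : ℕ => (m : ℝ) * Real.log (1 + 1 / m)) atTop (𝓝 1) :=
    (Real.tendsto_mul_log_one_add_div_atTop 1).comp tendsto_natCast_atTop_atTop
  have r1 := lim_ratio hpy
  have r2 := lim_ratio2 hpy
  have t1 := (hl.comp hN).sub (hl.comp hM)
  have t2 := ((r2.log (by linarith)).const_mul (-1 / 2))
  have t3 := r2.mul (g.comp hN)
  have t4 := g.comp hM
  have t5 := r1.log (by linarith)
  have t := ((t1.add t2).sub t3).add (t4.add t5)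
  have e : Real.log √Real.pi - Real.log √Real.pi + -1 / 2 * Real.log (1 - y) - (1 - y) * 1
      + (1 + Real.log (1 - y)) = 1 / 2 * Real.log (1 - y) + y := by ring
  rw [e] at t
  refine t.congr' ?_
  filter_upwards [ev_large hy1 hpy 1, eventually_ge_atTop 2] with n h1 h2
  have hn' : (2 : ℝ) ≤ n := by exact_mod_cast h2
  have hpn : 1 + p n + 1 ≤ n := by
    have : (1 : ℝ) + p n + 1 ≤ n := by linarith
    exact_mod_cast this
  obtain ⟨m, hm⟩ : ∃ m, n = m + p n + 1 := ⟨n - 1 - p n, by omega⟩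
  simp only [Function.comp]
  clear t t1 t2 t3 t4 t5 r1 r2 hM hpy
  generalize p n = q at *
  have hm1 : 1 ≤ m := by omega
  subst hm
  have hm' : (1 : ℝ) ≤ m := by exact_mod_cast hm1
  have hq : (0 : ℝ) ≤ q := by positivity
  rw [show m + q + 1 - 1 = m + q by omega, show m + q - q = m by omega]
  push_cast
  have s1 : ∑ k ∈ range q, Real.log (((m : ℝ) + q + 1 - 1 - k) / (m + q + 1 - 1))
      = Real.log ((m + q).factorial) - Real.log (m.factorial) - q * Real.log (m + q) := by
    have := log_fact (m + q) q (by omega)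
    rw [show m + q - q = m by omega] at this
    rw [← this]
    have e1 : ∀ k ∈ range q, Real.log (((m : ℝ) + q + 1 - 1 - k) / (m + q + 1 - 1))
        = Real.log (((m + q : ℕ) : ℝ) - k) - Real.log (m + q) := by
      intro k hk
      have : (k : ℝ) + 1 ≤ q := by exact_mod_cast mem_range.1 hk
      push_cast
      rw [add_sub_cancel_right, Real.log_div (by linarith) (by linarith)]
    rw [sum_congr rfl e1, sum_sub_distrib]
    simp
  rw [s1, log_fact_stirling (m + q) (by omega), log_fact_stirling m hm1]
  push_cast
  have l1 : Real.log (((m : ℝ) + q + 1 - 1 - q) / (m + q + 1 - 1)) = Real.log m - Real.log (m + q) := by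
    rw [add_sub_cancel_right, add_sub_cancel_right, Real.log_div (by linarith) (by linarith)]
  have l2 : Real.log (1 + 1 / ((m : ℝ) + q)) = Real.log (m + q + 1) - Real.log (m + q) := by
    rw [← Real.log_div (by linarith) (by linarith)]; congr 1; field_simp
  have l3 : Real.log (1 + 1 / (m : ℝ)) = Real.log (m + 1) - Real.log m := by
    rw [← Real.log_div (by linarith) (by linarith)]; congr 1; field_simp
  have l4 : Real.log (((m : ℝ) + q + 1 - q) / (m + q + 1)) = Real.log (m + 1) - Real.log (m + q + 1) := by
    rw [← Real.log_div (by linarith) (by linarith)]; congr 1; ring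
  have l5 : Real.log (1 - (q : ℝ) / (m + q + 1)) = Real.log (m + 1) - Real.log (m + q + 1) := by
    rw [← Real.log_div (by linarith) (by linarith)]; congr 1; field_simp; ring
  rw [l1, l2, l3, l4, l5]
  have : (m : ℝ) + q ≠ 0 := by linarith
  rw [add_sub_cancel_right, add_sub_cancel_right]
  field_simp
  ring

end stirling


section linalg
variable {ι : Type*} [Fintype ι] [DecidableEq ι]

/-- squared Frobenius norm -/
def fro2 (M : Matrix ι ι ℝ) : ℝ := ∑ i, ∑ j, M i j ^ 2

omit [DecidableEq ι] in
lemma fro2_nonneg (M : Matrix ι ι ℝ) : 0 ≤ fro2 M :=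
  sum_nonneg fun _ _ => sum_nonneg fun _ _ => sq_nonneg _

omit [DecidableEq ι] in
lemma fro2_eq_trace (M : Matrix ι ι ℝ) : fro2 M = (M * M.transpose).trace := by
  unfold fro2 Matrix.trace
  simp only [Matrix.diag_apply, Matrix.mul_apply, Matrix.transpose_apply]
  exact sum_congr rfl fun i _ => sum_congr rfl fun j _ => by ring

omit [DecidableEq ι] in
lemma trace_mul_sq_le (M N : Matrix ι ι ℝ) : (M * N).trace ^ 2 ≤ fro2 M * fro2 N := by
  have e : (M * N).trace = ∑ a : ι × ι, M a.1 a.2 * N a.2 a.1 := by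
    unfold Matrix.trace
    simp only [Matrix.diag_apply, Matrix.mul_apply]
    rw [Fintype.sum_prod_type]
  have e1 : fro2 M = ∑ a : ι × ι, M a.1 a.2 ^ 2 := by
    unfold fro2; rw [Fintype.sum_prod_type]
  have e2 : fro2 N = ∑ a : ι × ι, N a.2 a.1 ^ 2 := by
    unfold fro2; rw [Fintype.sum_prod_type, sum_comm]
  rw [e, e1, e2]
  exact Finset.sum_mul_sq_le_sq_mul_sq _ _ _

omit [DecidableEq ι] in
lemma trace_self_le (M : Matrix ι ι ℝ) : (M * M).trace ≤ fro2 M := by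
  have := trace_mul_sq_le M M
  exact le_of_sq_le_sq (by nlinarith) (fro2_nonneg M)
where
  le_of_sq_le_sq {a b : ℝ} (h : a ^ 2 ≤ b ^ 2) (hb : 0 ≤ b) : a ≤ b := abs_le_of_sq_le_sq' h hb |>.2

omit [DecidableEq ι] in
lemma fro2_mul_le (M N : Matrix ι ι ℝ) : fro2 (M * N) ≤ fro2 M * fro2 N := by
  unfold fro2
  have : ∀ i j, (M * N) i j ^ 2 ≤ (∑ k, M i k ^ 2) * ∑ k, N k j ^ 2 := by
    intro i j; rw [Matrix.mul_apply]; exact Finset.sum_mul_sq_le_sq_mul_sq _ _ _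
  calc _ ≤ ∑ i, ∑ j, (∑ k, M i k ^ 2) * ∑ k, N k j ^ 2 :=
        sum_le_sum fun i _ => sum_le_sum fun j _ => this i j
    _ = _ := by
        simp only [← mul_sum]
        rw [← sum_mul, sum_comm (f := fun j k => N k j ^ 2)]

lemma logdet_sym (X : Matrix ι ι ℝ) (hX : X.transpose = X) (h : fro2 X ≤ 1 / 4) :
    0 < (1 + X).det ∧ |Real.log (1 + X).det - X.trace| ≤ 2 * fro2 X := by
  have hH : X.IsHermitian := by
    rw [Matrix.IsHermitian, Matrix.conjTranspose_eq_transpose_of_trivial, hX]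
  set l := hH.eigenvalues with hl
  set V : Matrix ι ι ℝ := (hH.eigenvectorUnitary : Matrix ι ι ℝ) with hV
  have hVs : V * star V = 1 := (Matrix.mem_unitaryGroup_iff).1 hH.eigenvectorUnitary.2
  have hVs' : star V * V = 1 := (Matrix.mem_unitaryGroup_iff').1 hH.eigenvectorUnitary.2
  have sp : X = V * Matrix.diagonal l * star V := by
    have := hH.spectral_theorem
    rw [Unitary.conjStarAlgAut_apply] at this
    exact this
  have hdet : (1 + X).det = ∏ i, (1 + l i) := by
    have : 1 + X = V * Matrix.diagonal (fun i => 1 + l i) * star V := by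
      have : Matrix.diagonal (fun i => 1 + l i) = (1 : Matrix ι ι ℝ) + Matrix.diagonal l := by
        rw [← Matrix.diagonal_one, Matrix.diagonal_add]
      rw [this, mul_add, add_mul, mul_one, hVs, ← sp]
    rw [this, Matrix.det_mul_right_comm, hVs, one_mul, Matrix.det_diagonal]
  have htr : X.trace = ∑ i, l i := by simpa using hH.trace_eq_sum_eigenvalues
  have hfr : fro2 X = ∑ i, l i ^ 2 := by
    rw [fro2_eq_trace, hX]
    have : X * X = V * (Matrix.diagonal (fun i => l i ^ 2)) * star V := by
      have : Matrix.diagonal (fun i => l i ^ 2) = Matrix.diagonal l * Matrix.diagonal l := by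
        rw [Matrix.diagonal_mul_diagonal]; congr 1; funext i; ring
      rw [this]
      calc X * X = (V * Matrix.diagonal l * star V) * (V * Matrix.diagonal l * star V) := by rw [← sp]
        _ = V * Matrix.diagonal l * (star V * V) * Matrix.diagonal l * star V := by
            simp only [mul_assoc]
        _ = _ := by rw [hVs', mul_one]; simp only [mul_assoc]
    rw [this, Matrix.trace_mul_comm, ← mul_assoc, hVs', one_mul, Matrix.trace_diagonal]
  have hli : ∀ i, |l i| ≤ 1 / 2 := by
    intro i
    have : l i ^ 2 ≤ ∑ i, l i ^ 2 := single_le_sum (f := fun i => l i ^ 2) (fun j _ => sq_nonneg (l j)) (mem_univ i)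
    exact abs_le_of_sq_le_sq (by rw [← hfr] at this; norm_num; linarith) (by norm_num)
  have hpos : ∀ i, 0 < 1 + l i := fun i => by have := abs_le.1 (hli i); linarith
  rw [hdet]
  refine ⟨prod_pos fun i _ => hpos i, ?_⟩
  rw [Real.log_prod fun i _ => (hpos i).ne', htr, hfr, ← sum_sub_distrib, mul_sum]
  refine (abs_sum_le_sum_abs _ _).trans (sum_le_sum fun i _ => ?_)
  have q := log_quad (hli i)
  have u0 := abs_nonneg (l i)
  have h3 : |l i| ^ 3 ≤ |l i| ^ 2 / 2 := by nlinarith [sq_nonneg |l i|, hli i]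
  rw [sq_abs] at h3
  have : Real.log (1 + l i) - l i = (Real.log (1 + l i) - l i + l i ^ 2 / 2) - l i ^ 2 / 2 := by ring
  rw [this]
  refine (abs_sub _ _).trans ?_
  rw [abs_of_nonneg (by positivity : 0 ≤ l i ^ 2 / 2)]
  nlinarith [sq_nonneg (l i)]

lemma fro2_three (A B : Matrix ι ι ℝ) :
    fro2 (1 - A + B) ≤ 3 * (Fintype.card ι + fro2 A + fro2 B) := by
  have h1 : (Fintype.card ι : ℝ) = fro2 (1 : Matrix ι ι ℝ) := by
    unfold fro2
    simp [Matrix.one_apply]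
  rw [h1]
  unfold fro2
  simp only [← sum_add_distrib, mul_sum]
  refine sum_le_sum fun i _ => sum_le_sum fun j _ => ?_
  simp only [Matrix.add_apply, Matrix.sub_apply]
  nlinarith [sq_nonneg ((1 : Matrix ι ι ℝ) i j + A i j), sq_nonneg ((1 : Matrix ι ι ℝ) i j - B i j), sq_nonneg (A i j + B i j)]

lemma logdet_pert (T H ρ R ρ' : Matrix ι ι ℝ) (δ : ℝ) (hT : T.det ≠ 0) (hρ : ρ = T.transpose * T)
    (hR : R = ρ⁻¹) (hH : H.transpose = H) (hρ' : ρ' = ρ + δ • (ρ - 1 + H))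
    (hq : 3 * δ ^ 2 * (Fintype.card ι + fro2 R + fro2 R * fro2 H) ≤ 1 / 4) :
    |Real.log ρ'.det - Real.log ρ.det - δ * (Fintype.card ι - R.trace)|
      ≤ |δ| * √(fro2 R * fro2 H) + 2 * (3 * δ ^ 2 * (Fintype.card ι + fro2 R + fro2 R * fro2 H)) := by
  have hu : IsUnit T.det := isUnit_iff_ne_zero.2 hT
  set S := T⁻¹ with hS
  have hTS : T * S = 1 := Matrix.mul_nonsing_inv _ hu
  have hST : S * T = 1 := Matrix.nonsing_inv_mul _ hu
  have hTS' : S.transpose * T.transpose = 1 := by rw [← Matrix.transpose_mul, hTS, Matrix.transpose_one]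
  have hST' : T.transpose * S.transpose = 1 := by rw [← Matrix.transpose_mul, hST, Matrix.transpose_one]
  have hRS : R = S * S.transpose := by
    rw [hR, hρ, Matrix.mul_inv_rev, ← Matrix.transpose_nonsing_inv]
  set A := S.transpose * S with hA
  set B := S.transpose * H * S with hB
  set X := δ • (1 - A + B) with hX
  have hAt : A.transpose = A := by rw [hA, Matrix.transpose_mul, Matrix.transpose_transpose]
  have hBt : B.transpose = B := by
    rw [hB, Matrix.transpose_mul, Matrix.transpose_mul, Matrix.transpose_transpose, hH, mul_assoc]
  have hXt : X.transpose = X := by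
    rw [hX, Matrix.transpose_smul, Matrix.transpose_add, Matrix.transpose_sub, hAt, hBt,
      Matrix.transpose_one]
  have fA : fro2 A = fro2 R := by
    rw [fro2_eq_trace, fro2_eq_trace, hAt]
    have : R.transpose = R := by rw [hRS, Matrix.transpose_mul, Matrix.transpose_transpose]
    rw [this, hRS, hA, mul_assoc, Matrix.trace_mul_comm]
    simp only [mul_assoc]
  have fB : fro2 B ≤ fro2 R * fro2 H := by
    rw [fro2_eq_trace, hBt]
    have : (B * B).trace = ((R * H) * (R * H)).trace := by
      rw [hRS, hB]
      have : S.transpose * H * S * (S.transpose * H * S) = S.transpose * (H * S * (S.transpose * H * S)) := by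
        simp only [mul_assoc]
      rw [this, Matrix.trace_mul_comm]
      have : H * S * (S.transpose * H * S) * S.transpose = H * (S * (S.transpose * H * S) * S.transpose) := by
        simp only [mul_assoc]
      rw [this, Matrix.trace_mul_comm]
      simp only [mul_assoc]
    rw [this]
    exact (trace_self_le _).trans (fro2_mul_le _ _)
  have fX : fro2 X = δ ^ 2 * fro2 (1 - A + B) := by
    rw [hX]; unfold fro2
    simp only [Matrix.smul_apply, smul_eq_mul, mul_pow, mul_sum]
  have fXb : fro2 X ≤ 3 * δ ^ 2 * (Fintype.card ι + fro2 R + fro2 R * fro2 H) := by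
    rw [fX]
    have := fro2_three A B
    rw [fA] at this
    nlinarith [sq_nonneg δ]
  obtain ⟨d0, d1⟩ := logdet_sym X hXt (fXb.trans hq)
  have hfac : ρ' = T.transpose * (1 + X) * T := by
    have e1 : T.transpose * A * T = 1 := by
      rw [hA, ← mul_assoc, hST', one_mul, hST]
    have e2 : T.transpose * B * T = H := by
      rw [hB]
      have : T.transpose * (S.transpose * H * S) * T = (T.transpose * S.transpose) * H * (S * T) := by
        simp only [mul_assoc]
      rw [this, hST', hST, one_mul, mul_one]
    rw [hρ', hX, mul_add, add_mul, mul_one, ← hρ, Matrix.mul_smul, Matrix.smul_mul, mul_add, add_mul,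
      mul_sub, sub_mul, mul_one, e1, e2, ← hρ]
  have hdet : ρ'.det = ρ.det * (1 + X).det := by
    rw [hfac, hρ, Matrix.det_mul, Matrix.det_mul, Matrix.det_mul]; ring
  have hρd : ρ.det ≠ 0 := by
    rw [hρ, Matrix.det_mul, Matrix.det_transpose]; exact mul_ne_zero hT hT
  have htr : X.trace = δ * (Fintype.card ι - R.trace) + δ * (R * H).trace := by
    have e1 : A.trace = R.trace := by rw [hA, hRS, Matrix.trace_mul_comm]
    have e2 : B.trace = (R * H).trace := by
      rw [hB, hRS, Matrix.trace_mul_comm, ← mul_assoc]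
    rw [hX, Matrix.trace_smul, Matrix.trace_add, Matrix.trace_sub, Matrix.trace_one, e1, e2, smul_eq_mul]
    ring
  rw [hdet, Real.log_mul hρd d0.ne']
  have htRH : |(R * H).trace| ≤ √(fro2 R * fro2 H) := Real.abs_le_sqrt (trace_mul_sq_le R H)
  have : Real.log ρ.det + Real.log (1 + X).det - Real.log ρ.det - δ * (Fintype.card ι - R.trace)
      = δ * (R * H).trace + (Real.log (1 + X).det - X.trace) := by rw [htr]; ring
  rw [this]
  refine (abs_add_le _ _).trans (add_le_add ?_ (d1.trans (by linarith)))
  rw [abs_mul]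
  gcongr

end linalg


section rho
open scoped BigOperators
variable {n p : ℕ}

/-- sign kernel -/
noncomputable def Kx (σ : Equiv.Perm (Fin n)) (i j : Fin n) : ℝ :=
  Real.sign (((σ i : ℕ) : ℝ) - ((σ j : ℕ) : ℝ))

lemma Kx_anti (σ : Equiv.Perm (Fin n)) (i j : Fin n) : Kx σ i j = - Kx σ j i := by
  unfold Kx
  rw [← Real.sign_neg, neg_sub]

lemma Kx_self (σ : Equiv.Perm (Fin n)) (i : Fin n) : Kx σ i i = 0 := by simp [Kx]

lemma Kx_lt (σ : Equiv.Perm (Fin n)) {i j : Fin n} (h : (σ i : ℕ) < σ j) : Kx σ i j = -1 := by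
  unfold Kx
  apply Real.sign_of_neg
  have : ((σ i : ℕ) : ℝ) < ((σ j : ℕ) : ℝ) := by exact_mod_cast h
  linarith

lemma Kx_gt (σ : Equiv.Perm (Fin n)) {i j : Fin n} (h : (σ j : ℕ) < σ i) : Kx σ i j = 1 := by
  rw [Kx_anti, Kx_lt σ h, neg_neg]

lemma Kx_sq (σ : Equiv.Perm (Fin n)) {i j : Fin n} (h : i ≠ j) : Kx σ i j ^ 2 = 1 := by
  have : (σ i : ℕ) ≠ σ j := fun e => h (σ.injective (Fin.ext e))
  rcases lt_or_gt_of_ne this with h | h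
  · rw [Kx_lt σ h]; norm_num
  · rw [Kx_gt σ h]; norm_num

lemma Kx_abs_le (σ : Equiv.Perm (Fin n)) (i j : Fin n) : |Kx σ i j| ≤ 1 := by
  by_cases h : i = j
  · rw [h, Kx_self]; simp
  · exact abs_le_of_sq_le_sq (by rw [Kx_sq σ h]; norm_num) (by norm_num)

lemma Kx_tri (σ : Equiv.Perm (Fin n)) {i j l : Fin n} (h : i ≠ j) (h2 : i ≠ l) (h3 : j ≠ l) :
    Kx σ i j * Kx σ i l + Kx σ j i * Kx σ j l + Kx σ l i * Kx σ l j = 1 := by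
  have a : (σ i : ℕ) ≠ σ j := fun e => h (σ.injective (Fin.ext e))
  have b : (σ i : ℕ) ≠ σ l := fun e => h2 (σ.injective (Fin.ext e))
  have c : (σ j : ℕ) ≠ σ l := fun e => h3 (σ.injective (Fin.ext e))
  rcases lt_or_gt_of_ne a with a | a <;> rcases lt_or_gt_of_ne b with b | b <;>
    rcases lt_or_gt_of_ne c with c | c <;>
    first
    | (exfalso; omega)
    | (first | rw [Kx_lt σ a, Kx_gt σ a] | rw [Kx_gt σ a, Kx_lt σ a]
       first | rw [Kx_lt σ b, Kx_gt σ b] | rw [Kx_gt σ b, Kx_lt σ b]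
       first | rw [Kx_lt σ c, Kx_gt σ c] | rw [Kx_gt σ c, Kx_lt σ c]
       norm_num)

lemma Kx_mul (σ τ : Equiv.Perm (Fin n)) (i j : Fin n) : Kx (σ * τ) i j = Kx σ (τ i) (τ j) := rfl

/-- covariance of the kernels -/
noncomputable def gK (i j k l : Fin n) : ℝ := 𝔼 σ : Equiv.Perm (Fin n), Kx σ i j * Kx σ k l

lemma gK_perm (τ : Equiv.Perm (Fin n)) (i j k l : Fin n) :
    gK (τ i) (τ j) (τ k) (τ l) = gK i j k l := by
  unfold gK
  exact Fintype.expect_equiv (Equiv.mulRight τ) _ _ (fun σ => by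
    simp only [Equiv.coe_mulRight, Kx_mul])

lemma gK_anti1 (i j k l : Fin n) : gK i j k l = - gK j i k l := by
  unfold gK
  rw [← Finset.expect_neg_distrib]
  exact Finset.expect_congr rfl fun σ _ => by rw [Kx_anti σ i j]; ring

lemma gK_anti2 (i j k l : Fin n) : gK i j k l = - gK i j l k := by
  unfold gK
  rw [← Finset.expect_neg_distrib]
  exact Finset.expect_congr rfl fun σ _ => by rw [Kx_anti σ k l]; ring

lemma gK_0 {i j k l : Fin n} (h1 : i ≠ k) (h2 : i ≠ l) (h3 : j ≠ k) (h4 : j ≠ l) :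
    gK i j k l = 0 := by
  have := gK_perm (Equiv.swap i j) i j k l
  rw [Equiv.swap_apply_left, Equiv.swap_apply_right, Equiv.swap_apply_of_ne_of_ne h1.symm h3.symm,
    Equiv.swap_apply_of_ne_of_ne h2.symm h4.symm, gK_anti1] at this
  linarith

lemma gK_1 {i j l : Fin n} (h : i ≠ j) (h2 : i ≠ l) (h3 : j ≠ l) : gK i j i l = 1 / 3 := by
  have s1 := gK_perm (Equiv.swap i j) i j i l
  rw [Equiv.swap_apply_left, Equiv.swap_apply_right, Equiv.swap_apply_of_ne_of_ne h2.symm h3.symm] at s1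
  have s2 := gK_perm (Equiv.swap i l) i l i j
  rw [Equiv.swap_apply_left, Equiv.swap_apply_right, Equiv.swap_apply_of_ne_of_ne h.symm h3] at s2
  have s3 : gK i l i j = gK i j i l := by
    unfold gK; exact Finset.expect_congr rfl fun σ _ => mul_comm _ _
  have t : gK i j i l + gK j i j l + gK l i l j = 1 := by
    unfold gK
    rw [← Finset.expect_add_distrib, ← Finset.expect_add_distrib]
    simp only [Kx_tri _ h h2 h3, Fintype.expect_const]
  linarith

lemma gK_2 {i j : Fin n} (h : i ≠ j) : gK i j i j = 1 := by
  unfold gK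
  simp only [← sq, Kx_sq _ h, Fintype.expect_const]

lemma gK_eq (i j k l : Fin n) (hij : i ≠ j) (hkl : k ≠ l) : gK i j k l =
    1 / 3 * (dl i k + dl j l - dl i l - dl j k) + 1 / 3 * (dl i k * dl j l - dl i l * dl j k) := by
  have d1 : ∀ a : Fin n, dl a a = 1 := by simp [dl]
  have d0 : ∀ {a b : Fin n}, a ≠ b → dl a b = 0 := by
    intro a b h; simp [dl, h]
  by_cases h1 : i = k
  · subst h1
    by_cases h2 : j = l
    · subst h2
      rw [gK_2 hij, d1, d1, d0 hij, d0 hij.symm]; norm_num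
    · rw [gK_1 hij hkl h2, d1, d0 h2, d0 hkl, d0 hij.symm]; norm_num
  · by_cases h2 : i = l
    · subst h2
      by_cases h3 : j = k
      · subst h3
        rw [gK_anti2, gK_2 hij, d1, d1, d0 hij, d0 hij.symm]; norm_num
      · rw [gK_anti2, gK_1 hij h1 h3, d1, d0 h1, d0 hij.symm, d0 h3]; norm_num
    · by_cases h3 : j = k
      · subst h3
        rw [gK_anti1, gK_1 hij.symm hkl h2, d1, d0 hij, d0 hkl, d0 h2]; norm_num
      · by_cases h4 : j = l
        · subst h4
          rw [gK_anti1, gK_anti2, gK_1 hij.symm h3 h1, d1, d0 h1, d0 hij, d0 h3]; norm_num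
        · rw [gK_0 h1 h2 h3 h4, d0 h1, d0 h2, d0 h3, d0 h4]; norm_num

lemma gK_eq' (i j k l : Fin n) : gK i j k l =
    1 / 3 * (dl i k + dl j l - dl i l - dl j k) + 1 / 3 * (dl i k * dl j l - dl i l * dl j k) := by
  by_cases hij : i = j
  · subst hij
    have : gK i i k l = 0 := by unfold gK; simp [Kx_self]
    rw [this]; ring
  · by_cases hkl : k = l
    · subst hkl
      have : gK i j k k = 0 := by unfold gK; simp [Kx_self]
      rw [this]; ring
    · exact gK_eq i j k l hij hkl

lemma ustat_moment (C : Fin n → Fin n → ℝ) (hC : ∀ i j, C i j = - C j i) :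
    (𝔼 σ : Equiv.Perm (Fin n), (∑ i, ∑ j, Kx σ i j * C i j) ^ 2)
      = 4 / 3 * ∑ i, (∑ j, C i j) ^ 2 + 2 / 3 * ∑ i, ∑ j, C i j ^ 2 := by
  have e1 : (𝔼 σ : Equiv.Perm (Fin n), (∑ i, ∑ j, Kx σ i j * C i j) ^ 2)
      = ∑ i, ∑ j, ∑ k, ∑ l, C i j * C k l * gK i j k l := by
    have : ∀ σ : Equiv.Perm (Fin n), (∑ i, ∑ j, Kx σ i j * C i j) ^ 2
        = ∑ i, ∑ j, ∑ k, ∑ l, C i j * C k l * (Kx σ i j * Kx σ k l) := by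
      intro σ
      rw [sq, sum_mul]
      refine sum_congr rfl fun i _ => ?_
      rw [sum_mul]
      refine sum_congr rfl fun j _ => ?_
      rw [mul_sum]
      refine sum_congr rfl fun k _ => ?_
      rw [mul_sum]
      refine sum_congr rfl fun l _ => ?_
      ring
    simp only [this, Finset.expect_sum_comm, ← Finset.mul_expect]
    rfl
  rw [e1]
  have inner : ∀ i j, ∑ k, ∑ l, C i j * C k l * gK i j k l
      = 2 / 3 * (C i j * ∑ l, C i l) - 2 / 3 * (C i j * ∑ l, C j l) + 2 / 3 * C i j ^ 2 := by
    intro i j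
    have s1 : ∑ k, ∑ l, C k l * dl i k = ∑ l, C i l := by simp [dl]
    have s2 : ∑ k, ∑ l, C k l * dl j l = - ∑ l, C j l := by
      simp [dl]
      rw [← sum_neg_distrib]; exact sum_congr rfl fun k _ => hC _ _
    have s3 : ∑ k, ∑ l, C k l * dl i l = - ∑ l, C i l := by
      simp [dl]
      rw [← sum_neg_distrib]; exact sum_congr rfl fun k _ => hC _ _
    have s4 : ∑ k, ∑ l, C k l * dl j k = ∑ l, C j l := by simp [dl]
    have s5 : ∑ k, ∑ l, C k l * (dl i k * dl j l) = C i j := by simp [dl]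
    have s6 : ∑ k, ∑ l, C k l * (dl i l * dl j k) = - C i j := by
      rw [hC i j]; simp [dl]
    have : ∀ k l, C i j * C k l * gK i j k l = 1 / 3 * C i j * (C k l * dl i k)
        + 1 / 3 * C i j * (C k l * dl j l) - 1 / 3 * C i j * (C k l * dl i l)
        - 1 / 3 * C i j * (C k l * dl j k) + 1 / 3 * C i j * (C k l * (dl i k * dl j l))
        - 1 / 3 * C i j * (C k l * (dl i l * dl j k)) := by
      intro k l; rw [gK_eq']; ring
    simp only [this, sum_add_distrib, sum_sub_distrib, ← mul_sum, s1, s2, s3, s4, s5, s6]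
    ring
  simp only [inner, sum_add_distrib, sum_sub_distrib, ← mul_sum]
  have f1 : ∑ i, ∑ j, C i j * ∑ l, C i l = ∑ i, (∑ j, C i j) ^ 2 :=
    sum_congr rfl fun i _ => by rw [← sum_mul, sq]
  have f2 : ∑ i, ∑ j, C i j * ∑ l, C j l = - ∑ i, (∑ j, C i j) ^ 2 := by
    rw [sum_comm, ← sum_neg_distrib]
    refine sum_congr rfl fun j _ => ?_
    rw [← sum_mul, sq, ← neg_mul, ← sum_neg_distrib]
    congr 1; exact sum_congr rfl fun i _ => hC _ _
  rw [f1, f2]; ring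

/-- centered ranks -/
noncomputable def Sx (σ : Equiv.Perm (Fin n)) (i : Fin n) : ℝ := 2 * (σ i : ℕ) - ((n : ℝ) - 1)

lemma sgn_range_sum (m N : ℕ) (h : m + 1 ≤ N) :
    ∑ v ∈ range N, Real.sign ((m : ℝ) - v) = 2 * m - ((N : ℝ) - 1) := by
  induction N, h using Nat.le_induction with
  | base =>
    rw [sum_range_succ]
    have : ∀ v ∈ range m, Real.sign ((m : ℝ) - v) = 1 := by
      intro v hv
      have : (v : ℝ) < m := by exact_mod_cast mem_range.1 hv
      exact Real.sign_of_pos (by linarith)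
    rw [sum_congr rfl this]
    simp; ring
  | succ N hN ih =>
    rw [sum_range_succ, ih]
    have : (m : ℝ) + 1 ≤ N := by exact_mod_cast hN
    rw [Real.sign_of_neg (by linarith)]
    push_cast; ring

lemma Kx_sum (σ : Equiv.Perm (Fin n)) (i : Fin n) : ∑ j, Kx σ i j = Sx σ i := by
  unfold Kx Sx
  rw [Equiv.sum_comp σ (fun v : Fin n => Real.sign (((σ i : ℕ) : ℝ) - ((v : ℕ) : ℝ))),
    Fin.sum_univ_eq_sum_range (fun v : ℕ => Real.sign (((σ i : ℕ) : ℝ) - (v : ℝ))) n]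
  exact sgn_range_sum _ _ (σ i).2

lemma Sx_sum (σ : Equiv.Perm (Fin n)) : ∑ i, Sx σ i = 0 := by
  have h : ∑ i, ∑ j, Kx σ i j = - ∑ i, ∑ j, Kx σ i j := by
    conv_rhs => rw [sum_comm]
    rw [← sum_neg_distrib]
    refine sum_congr rfl fun i _ => ?_
    rw [← sum_neg_distrib]
    exact sum_congr rfl fun j _ => Kx_anti _ _ _
  simp only [Kx_sum] at h
  linarith

lemma Sx_sq_sum (σ : Equiv.Perm (Fin n)) : ∑ i, Sx σ i ^ 2 = n * ((n : ℝ) ^ 2 - 1) / 3 := by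
  unfold Sx
  rw [Equiv.sum_comp σ (fun v : Fin n => (2 * ((v : ℕ) : ℝ) - ((n : ℝ) - 1)) ^ 2),
    Fin.sum_univ_eq_sum_range (fun v : ℕ => (2 * (v : ℝ) - ((n : ℝ) - 1)) ^ 2) n]
  have : ∀ (c : ℝ) (N : ℕ), ∑ v ∈ range N, (2 * (v : ℝ) - c) ^ 2
      = 4 * (N * (N - 1) * (2 * N - 1) / 6) - 4 * c * (N * (N - 1) / 2) + N * c ^ 2 := by
    intro c N
    induction N with
    | zero => simp
    | succ N ih => rw [sum_range_succ, ih]; push_cast; ring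
  rw [this]; ring

lemma Sx_abs (σ : Equiv.Perm (Fin n)) (i : Fin n) : |Sx σ i| ≤ (n : ℝ) - 1 := by
  unfold Sx
  have : ((σ i : ℕ) : ℝ) + 1 ≤ n := by exact_mod_cast (σ i).2
  have : (0 : ℝ) ≤ ((σ i : ℕ) : ℝ) := by positivity
  rw [abs_le]; constructor <;> linarith

/-- the normalized score vector -/
noncomputable def xs (n : ℕ) (v : Fin n) : ℝ :=
  (2 * (v : ℕ) - ((n : ℝ) - 1)) / √(n * ((n : ℝ) ^ 2 - 1) / 3)

lemma xs_perm (σ : Equiv.Perm (Fin n)) (i : Fin n) :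
    xs n (σ i) = Sx σ i / √(n * ((n : ℝ) ^ 2 - 1) / 3) := rfl

lemma goodX_xs (hn : 2 ≤ n) : GoodX (xs n) := by
  have hn' : (2 : ℝ) ≤ n := by exact_mod_cast hn
  have hpos : (0 : ℝ) < n * ((n : ℝ) ^ 2 - 1) / 3 := by
    have : (0 : ℝ) < (n : ℝ) ^ 2 - 1 := by nlinarith
    positivity
  have e : ∀ i, xs n i = Sx 1 i / √(n * ((n : ℝ) ^ 2 - 1) / 3) := fun i => rfl
  refine ⟨?_, ?_, ?_⟩
  · simp only [e]; rw [← sum_div, Sx_sum, zero_div]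
  · simp only [e, div_pow, Real.sq_sqrt hpos.le]; rw [← sum_div, Sx_sq_sum, div_self hpos.ne']
  · intro i
    rw [e, div_pow, Real.sq_sqrt hpos.le]
    have h1 := Sx_abs (1 : Equiv.Perm (Fin n)) i
    have h2 : Sx (1 : Equiv.Perm (Fin n)) i ^ 2 ≤ ((n : ℝ) - 1) ^ 2 := by
      rw [← sq_abs]; gcongr
    rw [div_le_div_iff₀ hpos (by linarith)]
    nlinarith

end rho


section rho2
open scoped BigOperators
variable {n p : ℕ}

/-- Spearman matrix -/
noncomputable def rhoM (n p : ℕ) (ω : Fin p → Equiv.Perm (Fin n)) : Matrix (Fin p) (Fin p) ℝ :=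
  gram p (Uv (xs n) ω)

lemma rhoM_apply (hn : 2 ≤ n) (ω : Fin p → Equiv.Perm (Fin n)) (a b : Fin p) :
    rhoM n p ω a b = 3 / (n * ((n : ℝ) ^ 2 - 1)) * ∑ i, Sx (ω a) i * Sx (ω b) i := by
  have hn' : (2 : ℝ) ≤ n := by exact_mod_cast hn
  have h2 : (0 : ℝ) < (n : ℝ) ^ 2 - 1 := by nlinarith
  have hpos : (0 : ℝ) < n * ((n : ℝ) ^ 2 - 1) / 3 := by positivity
  unfold rhoM gram
  rw [mul_sum]
  refine sum_congr rfl fun i _ => ?_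
  rw [Uv_of_lt _ _ a.2, Uv_of_lt _ _ b.2]
  simp only [Fin.eta, xs_perm]
  rw [div_mul_div_comm, Real.mul_self_sqrt hpos.le]
  field_simp

/-- Kendall matrix -/
noncomputable def tauM (n p : ℕ) (ω : Fin p → Equiv.Perm (Fin n)) : Matrix (Fin p) (Fin p) ℝ :=
  fun a b => 1 / (n * ((n : ℝ) - 1)) * ∑ i, ∑ j, Kx (ω a) i j * Kx (ω b) i j

/-- degenerate remainder -/
noncomputable def HM (n p : ℕ) (ω : Fin p → Equiv.Perm (Fin n)) : Matrix (Fin p) (Fin p) ℝ :=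
  (2 : ℝ) • rhoM n p ω + 1 - (3 : ℝ) • tauM n p ω

lemma imp_eq (hn : 3 ≤ n) (ω : Fin p → Equiv.Perm (Fin n)) :
    improvedSpearmanRho n p ω = rhoM n p ω
      + (1 / ((n : ℝ) - 2)) • (rhoM n p ω - 1 + HM n p ω) := by
  have hn' : (3 : ℝ) ≤ n := by exact_mod_cast hn
  funext a b
  have e1 : improvedSpearmanRho n p ω a b = 3 / ((n : ℝ) * ((n : ℝ) - 1) * ((n : ℝ) - 2))
      * ∑ i, ∑ j ∈ univ.erase i, ∑ k ∈ (univ.erase i).erase j, Kx (ω a) i j * Kx (ω b) i k := by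
    unfold improvedSpearmanRho
    simp only [Matrix.smul_apply, smul_eq_mul, Matrix.sum_apply, Matrix.vecMulVec_apply]
    rfl
  have e2 : ∀ i, ∑ j ∈ univ.erase i, ∑ k ∈ (univ.erase i).erase j, Kx (ω a) i j * Kx (ω b) i k
      = Sx (ω a) i * Sx (ω b) i - ∑ j, Kx (ω a) i j * Kx (ω b) i j := by
    intro i
    have k1 : ∀ j ∈ univ.erase i, ∑ k ∈ (univ.erase i).erase j, Kx (ω a) i j * Kx (ω b) i k
        = Kx (ω a) i j * (Sx (ω b) i - Kx (ω b) i j) := by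
      intro j hj
      rw [← mul_sum]
      congr 1
      have := Finset.add_sum_erase (univ.erase i) (fun k => Kx (ω b) i k) hj
      have h2 := Finset.add_sum_erase univ (fun k => Kx (ω b) i k) (mem_univ i)
      rw [Kx_sum, Kx_self] at h2
      linarith
    rw [sum_congr rfl k1]
    have h2 := Finset.add_sum_erase univ (fun j => Kx (ω a) i j * (Sx (ω b) i - Kx (ω b) i j)) (mem_univ i)
    simp only [Kx_self, zero_mul, zero_add] at h2
    rw [h2]
    simp only [mul_sub, sum_sub_distrib]
    rw [← sum_mul, Kx_sum]
  rw [e1]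
  simp only [e2, sum_sub_distrib]
  simp only [Matrix.add_apply, Matrix.smul_apply, Matrix.sub_apply, HM, smul_eq_mul]
  rw [rhoM_apply (by omega)]
  unfold tauM
  have a1 : (n : ℝ) - 1 ≠ 0 := by linarith
  have a2 : (n : ℝ) - 2 ≠ 0 := by linarith
  have a3 : (n : ℝ) ^ 2 - 1 ≠ 0 := by nlinarith
  have a4 : (n : ℝ) + 1 ≠ 0 := by linarith
  have a5 : (n : ℝ) ^ 2 - 1 = (n - 1) * (n + 1) := by ring
  rw [a5]
  field_simp
  ring

lemma HM_symm (hn : 2 ≤ n) (ω : Fin p → Equiv.Perm (Fin n)) : (HM n p ω).transpose = HM n p ω := by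
  funext a b
  simp only [Matrix.transpose_apply, HM, Matrix.add_apply, Matrix.sub_apply, Matrix.smul_apply]
  rw [rhoM_apply hn, rhoM_apply hn]
  unfold tauM
  have e1 : ∑ i, Sx (ω b) i * Sx (ω a) i = ∑ i, Sx (ω a) i * Sx (ω b) i :=
    sum_congr rfl fun i _ => mul_comm _ _
  have e2 : ∑ i, ∑ j, Kx (ω b) i j * Kx (ω a) i j = ∑ i, ∑ j, Kx (ω a) i j * Kx (ω b) i j :=
    sum_congr rfl fun i _ => sum_congr rfl fun i _ => mul_comm _ _
  rw [e1, e2, Matrix.one_apply, Matrix.one_apply]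
  simp only [eq_comm]

lemma HM_diag (hn : 2 ≤ n) (ω : Fin p → Equiv.Perm (Fin n)) (a : Fin p) : HM n p ω a a = 0 := by
  have hn' : (2 : ℝ) ≤ n := by exact_mod_cast hn
  have a1 : (n : ℝ) - 1 ≠ 0 := by linarith
  have a3 : (n : ℝ) ^ 2 - 1 ≠ 0 := by nlinarith
  simp only [HM, Matrix.add_apply, Matrix.sub_apply, Matrix.smul_apply, Matrix.one_apply_eq, smul_eq_mul]
  rw [rhoM_apply hn]
  unfold tauM
  have e1 : ∑ i, Sx (ω a) i * Sx (ω a) i = n * ((n : ℝ) ^ 2 - 1) / 3 := by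
    rw [← Sx_sq_sum (ω a)]; exact sum_congr rfl fun i _ => by ring
  have e2 : ∑ i, ∑ j, Kx (ω a) i j * Kx (ω a) i j = n * ((n : ℝ) - 1) := by
    have : ∀ i, ∑ j, Kx (ω a) i j * Kx (ω a) i j = (n : ℝ) - 1 := by
      intro i
      rw [← Finset.add_sum_erase univ _ (mem_univ i), Kx_self, zero_mul, zero_add]
      have : ∀ j ∈ univ.erase i, Kx (ω a) i j * Kx (ω a) i j = 1 := by
        intro j hj
        rw [← sq, Kx_sq _ (mem_erase.1 hj).1.symm]
      rw [sum_congr rfl this]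
      simp [card_erase_of_mem]
      rw [Nat.cast_sub (by omega)]; simp
    simp only [this, sum_const, card_univ, Fintype.card_fin, nsmul_eq_mul]
  rw [e1, e2]
  field_simp
  norm_num

/-- coefficients of the U-statistic -/
noncomputable def Cx (τ : Equiv.Perm (Fin n)) (i j : Fin n) : ℝ :=
  3 * (Sx τ i - Sx τ j) / (n * ((n : ℝ) ^ 2 - 1)) - 3 * Kx τ i j / (n * ((n : ℝ) - 1))

lemma HM_offdiag (hn : 2 ≤ n) (ω : Fin p → Equiv.Perm (Fin n)) {a b : Fin p} (hab : a ≠ b) :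
    HM n p ω a b = ∑ i, ∑ j, Kx (ω a) i j * Cx (ω b) i j := by
  have hn' : (2 : ℝ) ≤ n := by exact_mod_cast hn
  simp only [HM, Matrix.add_apply, Matrix.sub_apply, Matrix.smul_apply, Matrix.one_apply_ne hab, smul_eq_mul]
  rw [rhoM_apply hn]
  unfold tauM Cx
  have e1 : ∑ i, ∑ j, Kx (ω a) i j * Sx (ω b) i = ∑ i, Sx (ω a) i * Sx (ω b) i :=
    sum_congr rfl fun i _ => by rw [← sum_mul, Kx_sum]
  have e2 : ∑ i, ∑ j, Kx (ω a) i j * Sx (ω b) j = - ∑ i, Sx (ω a) i * Sx (ω b) i := by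
    rw [sum_comm, ← sum_neg_distrib]
    refine sum_congr rfl fun j _ => ?_
    rw [← sum_mul, ← neg_mul, ← Kx_sum (ω a), ← sum_neg_distrib]
    congr 1; exact sum_congr rfl fun i _ => Kx_anti _ _ _
  have e3 : ∀ i j, Kx (ω a) i j * (3 * (Sx (ω b) i - Sx (ω b) j) / (n * ((n : ℝ) ^ 2 - 1))
      - 3 * Kx (ω b) i j / (n * ((n : ℝ) - 1)))
      = 3 / (n * ((n : ℝ) ^ 2 - 1)) * (Kx (ω a) i j * Sx (ω b) i)
        - 3 / (n * ((n : ℝ) ^ 2 - 1)) * (Kx (ω a) i j * Sx (ω b) j)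
        - 3 / (n * ((n : ℝ) - 1)) * (Kx (ω a) i j * Kx (ω b) i j) := by
    intro i j; ring
  simp only [e3, sum_sub_distrib, ← mul_sum, e1, e2]
  ring

lemma Cx_moment (hn : 2 ≤ n) (τ : Equiv.Perm (Fin n)) :
    (𝔼 σ : Equiv.Perm (Fin n), (∑ i, ∑ j, Kx σ i j * Cx τ i j) ^ 2) ≤ 70 / ((n : ℝ) - 1) ^ 2 := by
  have hn' : (2 : ℝ) ≤ n := by exact_mod_cast hn
  have a1 : (0 : ℝ) < (n : ℝ) - 1 := by linarith
  have a3 : (0 : ℝ) < (n : ℝ) ^ 2 - 1 := by nlinarith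
  have a4 : (n : ℝ) ^ 2 - 1 = (n - 1) * (n + 1) := by ring
  have a0 : (0 : ℝ) < n := by linarith
  rw [ustat_moment _ (fun i j => by unfold Cx; rw [Kx_anti τ i j]; ring)]
  have r : ∀ i, ∑ j, Cx τ i j = -3 * Sx τ i / (n * ((n : ℝ) ^ 2 - 1)) := by
    intro i
    unfold Cx
    rw [sum_sub_distrib, ← sum_div, ← sum_div, ← mul_sum, ← mul_sum, sum_sub_distrib, Sx_sum, Kx_sum]
    simp only [sum_const, card_univ, Fintype.card_fin, nsmul_eq_mul]
    rw [a4]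
    field_simp
    ring
  have r2 : ∑ i, (∑ j, Cx τ i j) ^ 2 = 3 / (n * ((n : ℝ) ^ 2 - 1)) := by
    simp only [r, div_pow, mul_pow]
    rw [← sum_div, ← mul_sum, Sx_sq_sum]
    field_simp
  have c1 : ∀ i j, Cx τ i j ^ 2 ≤ 81 / (n * ((n : ℝ) - 1)) ^ 2 := by
    intro i j
    have h1 := Sx_abs τ i
    have h2 := Sx_abs τ j
    have h3 := Kx_abs_le τ i j
    have : |Cx τ i j| ≤ 9 / (n * ((n : ℝ) - 1)) := by
      unfold Cx
      refine (abs_sub _ _).trans ?_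
      rw [abs_div, abs_div, abs_mul 3, abs_mul 3, abs_of_pos (by positivity : (0 : ℝ) < n * ((n : ℝ) ^ 2 - 1)),
        abs_of_pos (by positivity : (0 : ℝ) < n * ((n : ℝ) - 1)), abs_of_pos (by norm_num : (0 : ℝ) < 3)]
      have h4 : |Sx τ i - Sx τ j| ≤ 2 * (n + 1) := (abs_sub _ _).trans (by linarith)
      calc _ ≤ 3 * (2 * ((n : ℝ) + 1)) / (n * ((n : ℝ) ^ 2 - 1)) + 3 * 1 / (n * ((n : ℝ) - 1)) := by
            gcongr
        _ = _ := by rw [a4]; field_simp; norm_num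
    rw [← sq_abs]
    calc _ ≤ (9 / (n * ((n : ℝ) - 1))) ^ 2 := by gcongr
      _ = _ := by rw [div_pow]; norm_num
  have r3 : ∑ i, ∑ j, Cx τ i j ^ 2 ≤ 81 / ((n : ℝ) - 1) ^ 2 := by
    calc _ ≤ ∑ i : Fin n, ∑ j : Fin n, 81 / (n * ((n : ℝ) - 1)) ^ 2 :=
          sum_le_sum fun i _ => sum_le_sum fun j _ => c1 i j
      _ = _ := by
          simp only [sum_const, card_univ, Fintype.card_fin, nsmul_eq_mul]
          field_simp
  have r4 : 3 / (n * ((n : ℝ) ^ 2 - 1)) ≤ 3 / ((n : ℝ) - 1) ^ 2 := by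
    gcongr
    nlinarith
  rw [r2]
  have : 70 / ((n : ℝ) - 1) ^ 2 = 4 / 3 * (3 / ((n : ℝ) - 1) ^ 2) + 2 / 3 * (81 / ((n : ℝ) - 1) ^ 2)
    + 12 / ((n : ℝ) - 1) ^ 2 := by field_simp; norm_num
  rw [this]
  have : 0 ≤ 12 / ((n : ℝ) - 1) ^ 2 := by positivity
  linarith

lemma HM_fro (hn : 2 ≤ n) (hp : p + 1 ≤ n) :
    (𝔼 ω : Fin p → Equiv.Perm (Fin n), fro2 (HM n p ω)) ≤ 70 := by
  have hn' : (2 : ℝ) ≤ n := by exact_mod_cast hn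
  have hp' : (p : ℝ) + 1 ≤ n := by exact_mod_cast hp
  have a1 : (0 : ℝ) < (n : ℝ) - 1 := by linarith
  unfold fro2
  rw [Finset.expect_sum_comm]
  have : ∀ a b : Fin p, (𝔼 ω : Fin p → Equiv.Perm (Fin n), HM n p ω a b ^ 2) ≤ 70 / ((n : ℝ) - 1) ^ 2 := by
    intro a b
    by_cases hab : a = b
    · subst hab
      simp only [HM_diag hn]
      simp only [ne_eq, OfNat.ofNat_ne_zero, not_false_eq_true, zero_pow, Finset.expect_const_zero]
      positivity
    · rw [expect_update a]
      calc _ ≤ 𝔼 ω : Fin p → Equiv.Perm (Fin n), 70 / ((n : ℝ) - 1) ^ 2 := by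
            refine Finset.expect_le_expect fun ω _ => ?_
            refine le_trans (le_of_eq ?_) (Cx_moment hn (ω b))
            refine Finset.expect_congr rfl fun σ _ => ?_
            rw [HM_offdiag hn _ hab, Function.update_self, Function.update_of_ne (Ne.symm hab)]
        _ = _ := Fintype.expect_const _
  calc _ ≤ ∑ a : Fin p, ∑ b : Fin p, 70 / ((n : ℝ) - 1) ^ 2 := by
        refine sum_le_sum fun a _ => ?_
        rw [Finset.expect_sum_comm]
        exact sum_le_sum fun b _ => this a b
    _ = 70 * (p ^ 2 / ((n : ℝ) - 1) ^ 2) := by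
        simp only [sum_const, card_univ, Fintype.card_fin, nsmul_eq_mul]; ring
    _ ≤ 70 * 1 := by
        gcongr
        rw [div_le_one (by positivity)]
        have : (0 : ℝ) ≤ p := by positivity
        gcongr
        linarith
    _ = 70 := by norm_num

end rho2


section inverse
variable {p : ℕ}

lemma upper_inv_facts {T ρ R : Matrix (Fin p) (Fin p) ℝ} (hT : T.BlockTriangular id) (hd : T.det ≠ 0)
    (hρ : ρ = T.transpose * T) (hR : R = ρ⁻¹) {l : Fin p} (hl : (l : ℕ) + 1 = p) :
    R l l = 1 / T l l ^ 2 ∧ 0 ≤ R l l ∧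
    ∀ a : Fin p, (a : ℕ) + 2 = p → R a l ^ 2 ≤ T a l ^ 2 * R l l ^ 2 * R a a := by
  have hu : IsUnit T.det := isUnit_iff_ne_zero.2 hd
  have hiT : Invertible T := Matrix.invertibleOfIsUnitDet T hu
  set S := T⁻¹ with hS
  have hSu : S.BlockTriangular id := Matrix.blockTriangular_inv_of_blockTriangular hT
  have hTS : T * S = 1 := Matrix.mul_nonsing_inv _ hu
  have hST : S * T = 1 := Matrix.nonsing_inv_mul _ hu
  have hRS : R = S * S.transpose := by
    rw [hR, hρ, Matrix.mul_inv_rev, ← Matrix.transpose_nonsing_inv]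
  have hTR : T * R = S.transpose := by rw [hRS, ← mul_assoc, hTS, one_mul]
  have dg : ∀ a, S a a * T a a = 1 := by
    intro a
    have := congrFun (congrFun hST a) a
    rw [Matrix.mul_apply, Matrix.one_apply_eq, sum_eq_single a] at this
    · exact this
    · intro j _ hj
      rcases lt_or_gt_of_ne hj with h | h
      · rw [hSu (show id j < id a from h), zero_mul]
      · rw [hT (show id a < id j from h), mul_zero]
    · simp
  have hRd : ∀ a, R a a = ∑ j, S a j ^ 2 := by
    intro a; rw [hRS, Matrix.mul_apply]
    exact sum_congr rfl fun j _ => by rw [Matrix.transpose_apply, sq]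
  have hlmax : ∀ j : Fin p, j ≤ l := fun j => by
    have := j.2; rw [Fin.le_def]; omega
  have hRll : R l l = S l l ^ 2 := by
    rw [hRd, sum_eq_single l]
    · intro j _ hj
      rw [hSu (show id j < id l from lt_of_le_of_ne (hlmax j) hj)]; ring
    · simp
  have hSinv : ∀ a, S a a ^ 2 = 1 / T a a ^ 2 := by
    intro a
    have := dg a
    have h0 : T a a ≠ 0 := right_ne_zero_of_mul_eq_one this
    rw [eq_div_iff (by positivity), ← mul_pow, this]; norm_num
  refine ⟨by rw [hRll, hSinv], by rw [hRll]; positivity, ?_⟩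
  intro a ha
  have hal : a < l := by rw [Fin.lt_def]; omega
  have h1 : T a a * R a l + T a l * R l l = 0 := by
    have := congrFun (congrFun hTR a) l
    rw [Matrix.transpose_apply, hSu (show id a < id l from hal), Matrix.mul_apply,
      ← Finset.add_sum_erase _ _ (mem_univ a),
      ← Finset.add_sum_erase _ _ (mem_erase.2 ⟨hal.ne', mem_univ l⟩)] at this
    rw [sum_eq_zero, add_zero] at this
    · exact this
    · intro j hj
      simp only [mem_erase] at hj
      have : j < a := by
        obtain ⟨h1, h2, -⟩ := hj
        have h1' : (j : ℕ) ≠ l := fun e => h1 (Fin.ext e)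
        have h2' : (j : ℕ) ≠ a := fun e => h2 (Fin.ext e)
        have := j.2
        rw [Fin.lt_def]; omega
      rw [hT (show id j < id a from this), zero_mul]
  have h2 : R a l ^ 2 = T a l ^ 2 * R l l ^ 2 * S a a ^ 2 := by
    have e : R a l = - (S a a * (T a l * R l l)) := by
      have : S a a * (T a a * R a l + T a l * R l l) = 0 := by rw [h1, mul_zero]
      rw [mul_add, ← mul_assoc, dg, one_mul] at this
      linarith
    rw [e]; ring
  rw [h2]
  have h3 : S a a ^ 2 ≤ R a a := by
    rw [hRd]; exact single_le_sum (f := fun j => S a j ^ 2) (fun j _ => sq_nonneg _) (mem_univ a)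
  gcongr

end inverse

section inverse2
open scoped BigOperators
variable {n p : ℕ}

lemma rhoM_comp (ω : Fin p → Equiv.Perm (Fin n)) (π : Equiv.Perm (Fin p)) :
    rhoM n p (ω ∘ π) = (rhoM n p ω).submatrix π π := by
  funext a b
  simp only [Matrix.submatrix_apply]
  unfold rhoM gram
  rw [Uv_of_lt _ _ a.2, Uv_of_lt _ _ b.2, Uv_of_lt _ _ (π a).2, Uv_of_lt _ _ (π b).2]
  simp

lemma Uv_sum {x : Fin n → ℝ} (hx : GoodX x) (ω : Fin p → Equiv.Perm (Fin n)) (k : ℕ) (hk : k < p) :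
    ∑ i, Uv x ω k i = 0 := by
  rw [Uv_of_lt _ _ hk]
  exact (Equiv.sum_comp (ω ⟨k, hk⟩) x).trans hx.sum

variable (hn : 6 ≤ n) (hp : p + 1 ≤ n)

include hn hp in
lemma rhoM_eq (ω : Fin p → Equiv.Perm (Fin n)) :
    rhoM n p ω = (Tm p (Uv (xs n) ω)).transpose * Tm p (Uv (xs n) ω) :=
  gram_eq hp _ (Uv_sum (goodX_xs (by omega)) ω)

include hn hp in
lemma Tm_ne (ω : Fin p → Equiv.Perm (Fin n)) (h : (rhoM n p ω).det ≠ 0) :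
    (Tm p (Uv (xs n) ω)).det ≠ 0 := by
  intro e
  apply h
  rw [rhoM_eq hn hp, Matrix.det_mul, e, mul_zero]

include hn hp in
lemma qf_Yv (x : Fin n → ℝ) (ω : Fin p → Equiv.Perm (Fin n)) {k : ℕ} (hk : k < p) :
    qf (Mseq (Uv x ω) k) (Uv x ω k) = (1 + Yv x ω k) * (((n : ℝ) - 1 - k) / (n - 1)) := by
  have hn' : (6 : ℝ) ≤ n := by exact_mod_cast hn
  have hk' : (k : ℝ) + 2 ≤ n := by exact_mod_cast (by omega : k + 2 ≤ n)
  obtain ⟨a, b⟩ := Mseq_spec (by omega) (Uv x ω) k (by omega)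
  unfold Yv Yst Mk
  rw [dif_pos hk, b, Uv_of_lt x ω hk]
  have h1 : (n : ℝ) - 1 ≠ 0 := by linarith
  have h2 : (n : ℝ) - 1 - k ≠ 0 := by linarith
  field_simp
  ring

include hn hp in
lemma R_diag (ω : Fin p → Equiv.Perm (Fin n)) (h : (rhoM n p ω).det ≠ 0) {l : Fin p}
    (hl : (l : ℕ) + 1 = p) (k : Fin p) :
    (rhoM n p ω)⁻¹ k k
      = ((n : ℝ) - 1) / ((n : ℝ) - p) / (1 + Yv (xs n) (ω ∘ Equiv.swap l k) l) := by
  have hn' : (6 : ℝ) ≤ n := by exact_mod_cast hn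
  have hp' : (p : ℝ) + 1 ≤ n := by exact_mod_cast hp
  set ω' := ω ∘ Equiv.swap l k with hω
  have hc := rhoM_comp ω (Equiv.swap l k)
  rw [← hω] at hc
  have hd : (rhoM n p ω').det ≠ 0 := by
    rw [hc, Matrix.det_submatrix_equiv_self]; exact h
  have hi : (rhoM n p ω')⁻¹ l l = (rhoM n p ω)⁻¹ k k := by
    rw [hc, Matrix.inv_submatrix_equiv]; simp
  obtain ⟨f1, -, -⟩ := upper_inv_facts (Tm_upper hp (Uv (xs n) ω')) (Tm_ne hn hp ω' hd)
    (rhoM_eq hn hp ω') rfl hl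
  have e : Tm p (Uv (xs n) ω') l l ^ 2 = qf (Mseq (Uv (xs n) ω') l) (Uv (xs n) ω' l) := by
    unfold Tm
    rw [ip_self _ _ (by omega), Real.sq_sqrt]
    exact (Mseq_spec (by omega) _ _ (by omega)).1.qf_nonneg _
  rw [← hi, f1, e, qf_Yv hn hp _ _ l.2]
  have : (n : ℝ) - 1 - (l : ℕ) = n - p := by
    have : ((l : ℕ) : ℝ) + 1 = p := by exact_mod_cast hl
    linarith
  rw [this]
  have h1 : (n : ℝ) - 1 ≠ 0 := by linarith
  have h2 : (n : ℝ) - p ≠ 0 := by linarith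
  by_cases h0 : 1 + Yv (xs n) ω' l = 0
  · rw [h0]; simp
  · field_simp

/-- permutation moving `a` to `k` and `l` to `m` -/
def pkl (a l k m : Fin p) : Equiv.Perm (Fin p) :=
  Equiv.swap (Equiv.swap l m a) k * Equiv.swap l m

lemma pkl_a (a l k m : Fin p) : pkl a l k m a = k := by simp [pkl]

lemma pkl_l {a l k m : Fin p} (hal : a ≠ l) (hkm : k ≠ m) : pkl a l k m l = m := by
  simp only [pkl, Equiv.Perm.mul_apply, Equiv.swap_apply_left]
  apply Equiv.swap_apply_of_ne_of_ne _ hkm.symm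
  intro e
  have := (Equiv.swap l m).injective ((Equiv.swap_apply_left l m).trans e)
  exact hal this.symm

include hn hp in
lemma R_off (ω : Fin p → Equiv.Perm (Fin n)) (h : (rhoM n p ω).det ≠ 0) {l a : Fin p}
    (hl : (l : ℕ) + 1 = p) (ha : (a : ℕ) + 2 = p) {k m : Fin p} (hkm : k ≠ m) :
    (rhoM n p ω)⁻¹ k m ^ 2 ≤ Tm p (Uv (xs n) (ω ∘ pkl a l k m)) a l ^ 2
      * (rhoM n p ω)⁻¹ m m ^ 2 * (rhoM n p ω)⁻¹ k k := by
  have hal : a ≠ l := by intro e; rw [e] at ha; omega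
  set ω' := ω ∘ pkl a l k m with hω
  have hc := rhoM_comp ω (pkl a l k m)
  rw [← hω] at hc
  have hd : (rhoM n p ω').det ≠ 0 := by
    rw [hc, Matrix.det_submatrix_equiv_self]; exact h
  have hi : ∀ b c, (rhoM n p ω')⁻¹ b c = (rhoM n p ω)⁻¹ (pkl a l k m b) (pkl a l k m c) := by
    intro b c; rw [hc, Matrix.inv_submatrix_equiv]; simp
  obtain ⟨-, -, f⟩ := upper_inv_facts (Tm_upper hp (Uv (xs n) ω')) (Tm_ne hn hp ω' hd)
    (rhoM_eq hn hp ω') rfl hl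
  have := f a ha
  rw [hi, hi, hi, pkl_a, pkl_l hal hkm] at this
  exact this

include hn hp in
lemma t_moment {l a : Fin p} (hal : a < l) :
    (𝔼 ω : Fin p → Equiv.Perm (Fin n), Tm p (Uv (xs n) ω) a l ^ 2) = 1 / ((n : ℝ) - 1) := by
  have hx := goodX_xs (n := n) (by omega)
  have ha := a.2
  rw [expect_update l]
  have : ∀ ω : Fin p → Equiv.Perm (Fin n), (𝔼 σ : Equiv.Perm (Fin n),
      Tm p (Uv (xs n) (Function.update ω l σ)) a l ^ 2) = 1 / ((n : ℝ) - 1) := by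
    intro ω
    obtain ⟨s1, s2, -⟩ := eseq_spec (Uv (xs n) ω) a (by omega)
    have hs : ∑ i, eseq (Uv (xs n) ω) a i = 0 := by
      obtain ⟨q, -⟩ := Mseq_spec (by omega) (Uv (xs n) ω) a (by omega)
      rw [← q.sum_mv (eseq (Uv (xs n) ω) a)]
      exact sum_congr rfl fun i _ => (s2 i).symm
    have lm := lin_moment_two (xs n) hx.sum hx.sq (by omega) _ hs
    rw [s1] at lm
    rw [← lm]
    refine Finset.expect_congr rfl fun σ _ => ?_
    unfold Tm ip
    rw [Uv_update_self]
    have : eseq (Uv (xs n) (Function.update ω l σ)) a = eseq (Uv (xs n) ω) a := by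
      unfold eseq
      have hal' : (a : ℕ) < l := hal
      rw [Uv_update_ne _ _ _ _ (by omega : (a : ℕ) ≠ l)]
      congr 1
      exact Mseq_congr fun j hj => Uv_update_ne _ _ _ _ (by omega)
    rw [this]
  simp only [this, Fintype.expect_const]

lemma expect_comp {E : Type*} [AddCommMonoid E] [Module ℚ≥0 E]
    (π : Equiv.Perm (Fin p)) (F : (Fin p → Equiv.Perm (Fin n)) → E) :
    (𝔼 ω : Fin p → Equiv.Perm (Fin n), F (ω ∘ π)) = 𝔼 ω, F ω :=
  Fintype.expect_equiv (Equiv.arrowCongr π.symm (Equiv.refl _)) _ _ (fun ω => by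
    congr 1)

include hn in
lemma Yv_four (κ : ℝ) (hκ : 0 < κ) (hp : κ * n ≤ n - p) {k : ℕ} (hk : k < p) :
    (𝔼 ω : Fin p → Equiv.Perm (Fin n), Yv (xs n) ω k ^ 4) ≤ 10 ^ 8 / κ ^ 4 / n ^ 2 := by
  have hx := goodX_xs (n := n) (by omega)
  rw [expect_update ⟨k, hk⟩]
  refine (Finset.expect_le_expect (g := fun _ => 10 ^ 8 / κ ^ 4 / (n : ℝ) ^ 2) fun ω _ => ?_).trans
    (le_of_eq (Fintype.expect_const _))
  obtain ⟨a, -, c⟩ := Mk_spec κ hκ hn hp (xs n) ω hk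
  refine le_trans (le_of_eq ?_) (Yst_four (xs n) hx.sum hx.sq hx.bd hn a κ hκ c)
  refine Finset.expect_congr rfl fun σ _ => ?_
  have := Yv_update_self (xs n) ω ⟨k, hk⟩ σ
  simp only at this
  rw [this]

end inverse2


section good
open scoped BigOperators
variable {n p : ℕ}

/-- the badness functional; the good event is `Wb < 1` -/
noncomputable def Wb (r : ℝ) (l a : Fin p) (ω : Fin p → Equiv.Perm (Fin n)) : ℝ :=
  (∑ k : Fin p, 16 * Yv (xs n) ω k ^ 4)
  + (∑ k : Fin p, r * Yv (xs n) (ω ∘ Equiv.swap l k) l ^ 4)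
  + (∑ k : Fin p, ∑ m : Fin p, 1 / (n * r) * Tm p (Uv (xs n) (ω ∘ pkl a l k m)) a l ^ 2)
  + 1 / r * fro2 (HM n p ω)

variable (hn : 6 ≤ n) (κ : ℝ) (hκ : 0 < κ) (hp : κ * n ≤ n - p) (r : ℝ) (hr1 : 1 ≤ r)
  (hr : r ^ 4 = n) {l a : Fin p}

include hr1 in
lemma Wb_parts (ω : Fin p → Equiv.Perm (Fin n)) :
    0 ≤ (∑ k : Fin p, 16 * Yv (xs n) ω k ^ 4) ∧
    0 ≤ (∑ k : Fin p, r * Yv (xs n) (ω ∘ Equiv.swap l k) l ^ 4) ∧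
    0 ≤ (∑ k : Fin p, ∑ m : Fin p, 1 / (n * r) * Tm p (Uv (xs n) (ω ∘ pkl a l k m)) a l ^ 2) ∧
    0 ≤ 1 / r * fro2 (HM n p ω) := by
  have := fro2_nonneg (HM n p ω)
  have hr0 : 0 ≤ r := by linarith
  refine ⟨sum_nonneg fun k _ => by positivity, sum_nonneg fun k _ => by positivity,
    sum_nonneg fun k _ => sum_nonneg fun m _ => by positivity, by positivity⟩

include hr1 in
lemma Wb_nonneg (ω : Fin p → Equiv.Perm (Fin n)) : 0 ≤ Wb r l a ω := by
  obtain ⟨h1, h2, h3, h4⟩ := Wb_parts r hr1 (l := l) (a := a) ω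
  unfold Wb; linarith

include hn hκ hp hr1 hr in
lemma Wb_expect (hal : a < l) :
    (𝔼 ω : Fin p → Equiv.Perm (Fin n), Wb r l a ω) ≤ (17 * (10 ^ 8 / κ ^ 4) + 72) / r := by
  have hpn := p_lt κ hκ hn hp
  have hn' : (6 : ℝ) ≤ n := by exact_mod_cast hn
  have hp' : (p : ℝ) + 1 ≤ n := by exact_mod_cast hpn
  have hr0 : 0 < r := by linarith
  unfold Wb
  simp only [Finset.expect_add_distrib, Finset.expect_sum_comm, ← Finset.mul_expect]
  have e2 : ∀ k : Fin p, (𝔼 ω : Fin p → Equiv.Perm (Fin n),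
      Yv (xs n) (ω ∘ Equiv.swap l k) l ^ 4) ≤ 10 ^ 8 / κ ^ 4 / n ^ 2 := fun k => by
    rw [expect_comp (Equiv.swap l k) (fun ω => Yv (xs n) ω l ^ 4)]
    exact Yv_four hn κ hκ hp l.2
  have e3 : ∀ k m : Fin p, (𝔼 ω : Fin p → Equiv.Perm (Fin n),
      Tm p (Uv (xs n) (ω ∘ pkl a l k m)) a l ^ 2) = 1 / ((n : ℝ) - 1) := fun k m => by
    rw [expect_comp (pkl a l k m) (fun ω => Tm p (Uv (xs n) ω) a l ^ 2)]
    exact t_moment hn hpn hal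
  set C := (10 : ℝ) ^ 8 / κ ^ 4 with hC
  have hC0 : 0 ≤ C := by positivity
  have s1 : ∑ k : Fin p, 16 * (𝔼 ω : Fin p → Equiv.Perm (Fin n), Yv (xs n) ω k ^ 4)
      ≤ 16 * C / r := by
    calc _ ≤ ∑ k : Fin p, 16 * (C / n ^ 2) :=
          sum_le_sum fun k _ => by gcongr; exact Yv_four hn κ hκ hp k.2
      _ = p * (16 * (C / n ^ 2)) := by simp
      _ ≤ n * (16 * (C / n ^ 2)) := by gcongr; linarith
      _ = 16 * C / n := by field_simp
      _ ≤ _ := by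
        gcongr; rw [← hr]; exact le_self_pow₀ hr1 (by norm_num)
  have s2 : ∑ k : Fin p, r * (𝔼 ω : Fin p → Equiv.Perm (Fin n),
      Yv (xs n) (ω ∘ Equiv.swap l k) l ^ 4) ≤ C / r := by
    calc _ ≤ ∑ k : Fin p, r * (C / n ^ 2) :=
          sum_le_sum fun k _ => by gcongr; exact e2 k
      _ = p * (r * (C / n ^ 2)) := by simp
      _ ≤ n * (r * (C / n ^ 2)) := by gcongr; linarith
      _ = C / r ^ 3 := by rw [← hr]; field_simp
      _ ≤ _ := by
        gcongr; exact le_self_pow₀ hr1 (by norm_num)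
  have s3 : ∑ k : Fin p, ∑ m : Fin p, 1 / (n * r) * (𝔼 ω : Fin p → Equiv.Perm (Fin n),
      Tm p (Uv (xs n) (ω ∘ pkl a l k m)) a l ^ 2) ≤ 2 / r := by
    calc _ = p * (p * (1 / (n * r) * (1 / ((n : ℝ) - 1)))) := by simp [e3]
      _ ≤ n * ((n - 1) * (1 / (n * r) * (1 / ((n : ℝ) - 1)))) := by
        have h1 : (0 : ℝ) < n - 1 := by linarith
        have h2 : (0 : ℝ) < n := by linarith
        have h3 : (p : ℝ) ≤ n - 1 := by linarith
        have h4 : (p : ℝ) ≤ n := by linarith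
        gcongr
      _ = 1 / r := by
        have h1 : (n : ℝ) - 1 ≠ 0 := by linarith
        field_simp
      _ ≤ _ := by gcongr; norm_num
  have s4 : 1 / r * (𝔼 ω : Fin p → Equiv.Perm (Fin n), fro2 (HM n p ω)) ≤ 70 / r := by
    have := HM_fro (n := n) (p := p) (by omega) hpn
    calc _ ≤ 1 / r * 70 := by gcongr
      _ = _ := by ring
  have : (17 * C + 72) / r = 16 * C / r + C / r + 2 / r + 70 / r := by ring
  rw [this]
  gcongr

lemma inv_one_add_bound {u : ℝ} (hu : |u| ≤ 1 / 2) : |1 / (1 + u) - 1| ≤ 2 * |u| ∧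
    0 ≤ 1 / (1 + u) ∧ 1 / (1 + u) ≤ 2 := by
  obtain ⟨h1, h2⟩ := abs_le.1 hu
  have h : 0 < 1 + u := by linarith
  refine ⟨?_, by positivity, ?_⟩
  · rw [show 1 / (1 + u) - 1 = (-u) / (1 + u) by field_simp; ring, abs_div, abs_neg,
      abs_of_pos h, div_le_iff₀ h]
    nlinarith [abs_nonneg u]
  · rw [div_le_iff₀ h]; linarith

lemma abs_le_of_four {u e : ℝ} (he : 0 ≤ e) (h : u ^ 4 ≤ e ^ 4) : |u| ≤ e := by
  by_contra hc
  push Not at hc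
  have := pow_lt_pow_left₀ hc he (n := 4) (by norm_num)
  rw [← abs_pow, abs_of_nonneg (by positivity : 0 ≤ u ^ 4)] at this
  linarith

set_option maxHeartbeats 1600000 in
include hn hκ hp hr1 hr in
lemma good_main (hl : (l : ℕ) + 1 = p) (ha : (a : ℕ) + 2 = p) (ε : ℝ) (hε0 : 0 ≤ ε)
    (hε : ε ≤ 1 / 2) (hεr : r * ε ^ 4 = 1)
    (hK : 12 * (1 + 2 * (4 / κ ^ 2 + 8 / κ ^ 3)) / r ^ 2 ≤ 1 / 4)
    (ω : Fin p → Equiv.Perm (Fin n)) (hW : Wb r l a ω < 1) :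
    (∀ k < p, 0 < 1 + Yv (xs n) ω k) ∧
    |Real.log (improvedSpearmanRho n p ω).det - ∑ k ∈ range p, Real.log (1 + Yv (xs n) ω k)
      - ∑ k ∈ range p, Real.log (((n : ℝ) - 1 - k) / (n - 1))
      - 1 / ((n : ℝ) - 2) * (p - p * (((n : ℝ) - 1) / (n - p)))|
      ≤ 2 * √(4 / κ ^ 2 + 8 / κ ^ 3) / r + 24 * (1 + 2 * (4 / κ ^ 2 + 8 / κ ^ 3)) / r ^ 2
        + 4 * ε / κ := by
  have hpn := p_lt κ hκ hn hp
  have hn' : (6 : ℝ) ≤ n := by exact_mod_cast hn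
  have hp' : (p : ℝ) + 1 ≤ n := by exact_mod_cast hpn
  have hr0 : 0 < r := by linarith
  have hκn : 0 < κ * n := by positivity
  obtain ⟨q1, q2, q3, q4⟩ := Wb_parts r hr1 (l := l) (a := a) ω
  unfold Wb at hW
  have g1 : ∀ k < p, |Yv (xs n) ω k| ≤ 1 / 2 := fun k hk => by
    refine abs_le_of_four (by norm_num) ?_
    have := single_le_sum (f := fun k : Fin p => 16 * Yv (xs n) ω k ^ 4)
      (fun k _ => by positivity) (mem_univ (⟨k, hk⟩ : Fin p))
    linarith
  have g2 : ∀ k : Fin p, |Yv (xs n) (ω ∘ Equiv.swap l k) l| ≤ ε := fun k => by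
    refine abs_le_of_four hε0 ?_
    have := single_le_sum (f := fun k : Fin p => r * Yv (xs n) (ω ∘ Equiv.swap l k) l ^ 4)
      (fun k _ => by positivity) (mem_univ k)
    have h : r * Yv (xs n) (ω ∘ Equiv.swap l k) l ^ 4 ≤ r * ε ^ 4 := by linarith
    exact le_of_mul_le_mul_left h hr0
  have g3 : ∑ k : Fin p, ∑ m : Fin p, Tm p (Uv (xs n) (ω ∘ pkl a l k m)) a l ^ 2 ≤ n * r := by
    have h : (∑ k : Fin p, ∑ m : Fin p, 1 / (n * r) * Tm p (Uv (xs n) (ω ∘ pkl a l k m)) a l ^ 2)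
        ≤ 1 := by linarith
    simp only [← mul_sum] at h
    rw [one_div, inv_mul_le_iff₀ (by positivity)] at h
    linarith
  have g4 : fro2 (HM n p ω) ≤ r := by
    have h : 1 / r * fro2 (HM n p ω) ≤ 1 := by linarith
    rw [one_div, inv_mul_le_iff₀ (by positivity)] at h
    linarith
  have g0 : ∀ k < p, 0 < 1 + Yv (xs n) ω k := fun k hk => by
    have := (abs_le.1 (g1 k hk)).1; linarith
  refine ⟨g0, ?_⟩
  -- determinant of `rhoM`
  have gk : ∀ k < p, 0 < ((n : ℝ) - 1 - k) / (n - 1) := fun k hk => by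
    have hk' : (k : ℝ) + 1 ≤ p := by exact_mod_cast hk
    apply div_pos <;> linarith
  have hdet : (rhoM n p ω).det
      = ∏ k ∈ range p, ((1 + Yv (xs n) ω k) * (((n : ℝ) - 1 - k) / (n - 1))) := by
    unfold rhoM
    rw [gram_det hpn _ (Uv_sum (goodX_xs (by omega)) ω), ← Fin.prod_univ_eq_prod_range
      (fun k => (1 + Yv (xs n) ω k) * (((n : ℝ) - 1 - k) / (n - 1)))]
    exact prod_congr rfl fun k _ => qf_Yv hn hpn _ _ k.2
  have hd0 : (rhoM n p ω).det ≠ 0 := by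
    rw [hdet]
    exact (prod_pos fun k hk => mul_pos (g0 k (mem_range.1 hk)) (gk k (mem_range.1 hk))).ne'
  have hlog : Real.log (rhoM n p ω).det = ∑ k ∈ range p, Real.log (1 + Yv (xs n) ω k)
      + ∑ k ∈ range p, Real.log (((n : ℝ) - 1 - k) / (n - 1)) := by
    rw [hdet, Real.log_prod (fun k hk => (mul_pos (g0 k (mem_range.1 hk)) (gk k (mem_range.1 hk))).ne'),
      ← sum_add_distrib]
    exact sum_congr rfl fun k hk =>
      Real.log_mul (g0 k (mem_range.1 hk)).ne' (gk k (mem_range.1 hk)).ne'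
  set R := (rhoM n p ω)⁻¹ with hR
  set K := 4 / κ ^ 2 + 8 / κ ^ 3 with hKd
  have hK0 : 0 ≤ K := by positivity
  set δ := 1 / ((n : ℝ) - 2) with hδ
  have hδ0 : 0 ≤ δ := by rw [hδ]; apply div_nonneg <;> linarith
  have hδ2 : δ ≤ 2 / n := by
    rw [hδ, div_le_div_iff₀ (by linarith) (by linarith)]; linarith
  set b := ((n : ℝ) - 1) / (n - p) with hb
  have hb0 : 0 ≤ b := by rw [hb]; apply div_nonneg <;> linarith
  have hbκ : b ≤ 1 / κ := by
    rw [hb, div_le_div_iff₀ (by linarith) hκ]; nlinarith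
  have Rd : ∀ k, R k k = b * (1 / (1 + Yv (xs n) (ω ∘ Equiv.swap l k) l)) := fun k => by
    rw [hR, R_diag hn hpn ω hd0 hl k, mul_one_div]
  have Rd2 : ∀ k, 0 ≤ R k k ∧ R k k ≤ 2 / κ := fun k => by
    obtain ⟨-, h2, h3⟩ := inv_one_add_bound ((g2 k).trans hε)
    rw [Rd]
    refine ⟨mul_nonneg hb0 h2, ?_⟩
    calc _ ≤ 1 / κ * 2 := by gcongr
      _ = _ := by ring
  have htr : |R.trace - p * b| ≤ n * (2 * ε / κ) := by
    have : R.trace - p * b = ∑ k : Fin p, (R k k - b) := by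
      simp [Matrix.trace, sum_sub_distrib]
    rw [this]
    refine (abs_sum_le_sum_abs _ _).trans ?_
    calc _ ≤ ∑ k : Fin p, 2 * ε / κ := sum_le_sum fun k _ => by
          obtain ⟨h1, -, -⟩ := inv_one_add_bound ((g2 k).trans hε)
          rw [Rd, show b * (1 / (1 + Yv (xs n) (ω ∘ Equiv.swap l k) l)) - b
            = b * (1 / (1 + Yv (xs n) (ω ∘ Equiv.swap l k) l) - 1) by ring, abs_mul,
            abs_of_nonneg hb0]
          calc _ ≤ 1 / κ * (2 * ε) := by
                gcongr
                exact h1.trans (by have := g2 k; linarith)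
            _ = _ := by ring
      _ = p * (2 * ε / κ) := by simp
      _ ≤ _ := by gcongr; linarith
  have hfR : fro2 R ≤ K * (n * r) := by
    have hterm : ∀ k m, R k m ^ 2 ≤ (if k = m then 4 / κ ^ 2 else 0)
        + 8 / κ ^ 3 * Tm p (Uv (xs n) (ω ∘ pkl a l k m)) a l ^ 2 := by
      intro k m
      by_cases hkm : k = m
      · subst hkm
        rw [if_pos rfl]
        have h1 : R k k ^ 2 ≤ (2 / κ) ^ 2 := pow_le_pow_left₀ (Rd2 k).1 (Rd2 k).2 2
        have h2 : (2 / κ) ^ 2 = 4 / κ ^ 2 := by ring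
        have h3 : 0 ≤ 8 / κ ^ 3 * Tm p (Uv (xs n) (ω ∘ pkl a l k k)) a l ^ 2 := by positivity
        linarith
      · rw [if_neg hkm, zero_add]
        refine (R_off hn hpn ω hd0 hl ha hkm).trans ?_
        rw [← hR]
        have h1 : R m m ^ 2 ≤ (2 / κ) ^ 2 := pow_le_pow_left₀ (Rd2 m).1 (Rd2 m).2 2
        calc _ ≤ Tm p (Uv (xs n) (ω ∘ pkl a l k m)) a l ^ 2 * (2 / κ) ^ 2 * (2 / κ) := by
              gcongr
              · exact (Rd2 k).1
              · exact (Rd2 k).2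
          _ = _ := by ring
    calc fro2 R ≤ ∑ k : Fin p, ∑ m : Fin p, ((if k = m then 4 / κ ^ 2 else 0)
        + 8 / κ ^ 3 * Tm p (Uv (xs n) (ω ∘ pkl a l k m)) a l ^ 2) := by
          unfold fro2
          exact sum_le_sum fun k _ => sum_le_sum fun m _ => hterm k m
      _ = p * (4 / κ ^ 2) + 8 / κ ^ 3 *
          ∑ k : Fin p, ∑ m : Fin p, Tm p (Uv (xs n) (ω ∘ pkl a l k m)) a l ^ 2 := by
          simp [sum_add_distrib, mul_sum]
      _ ≤ (n * r) * (4 / κ ^ 2) + 8 / κ ^ 3 * (n * r) := by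
          gcongr
          nlinarith only [hr1, hp', hn']
      _ = _ := by rw [hKd]; ring
  have hfR0 := fro2_nonneg R
  have hfH0 := fro2_nonneg (HM n p ω)
  -- the quadratic error
  have hq : 3 * δ ^ 2 * (p + fro2 R + fro2 R * fro2 (HM n p ω)) ≤ 12 * (1 + 2 * K) / r ^ 2 := by
    calc _ ≤ 3 * (2 / n) ^ 2 * (n * r ^ 2 + K * (n * r ^ 2) + K * (n * r) * r) := by
          have hr2 : 1 ≤ r ^ 2 := one_le_pow₀ hr1
          gcongr
          · nlinarith only [hr2, hp', hn']
          · refine hfR.trans ?_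
            have : r ≤ r ^ 2 := by nlinarith
            gcongr
      _ = 12 * (1 + 2 * K) * r ^ 2 / n := by field_simp; ring
      _ = _ := by rw [← hr]; field_simp
  have hl' : √(fro2 R * fro2 (HM n p ω)) ≤ √K * (r ^ 2 * r) := by
    have : K * (n * r) * r = K * (r ^ 2 * r) ^ 2 := by rw [← hr]; ring
    rw [← Real.sqrt_sq (by positivity : 0 ≤ r ^ 2 * r), ← Real.sqrt_mul hK0, ← this]
    apply Real.sqrt_le_sqrt
    gcongr
  have main := logdet_pert (Tm p (Uv (xs n) ω)) (HM n p ω) (rhoM n p ω) R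
    (improvedSpearmanRho n p ω) δ (Tm_ne hn hpn ω hd0) (rhoM_eq hn hpn ω) rfl
    (HM_symm (by omega) ω) (imp_eq (by omega) ω)
    (by rw [Fintype.card_fin]; exact hq.trans hK)
  rw [Fintype.card_fin, hlog, abs_of_nonneg hδ0] at main
  have e1 : δ * √(fro2 R * fro2 (HM n p ω)) ≤ 2 * √K / r := by
    calc _ ≤ 2 / n * (√K * (r ^ 2 * r)) := by gcongr
      _ = _ := by rw [← hr]; field_simp
  have e2 : |δ * (p - R.trace) - δ * (p - p * b)| ≤ 4 * ε / κ := by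
    rw [show δ * (p - R.trace) - δ * (p - p * b) = - (δ * (R.trace - p * b)) by ring, abs_neg,
      abs_mul, abs_of_nonneg hδ0]
    calc _ ≤ 2 / n * (n * (2 * ε / κ)) := by gcongr
      _ = _ := by field_simp; ring
  have e3 : 2 * (12 * (1 + 2 * K) / r ^ 2) = 24 * (1 + 2 * K) / r ^ 2 := by ring
  rw [abs_le] at main e2 ⊢
  obtain ⟨m1, m2⟩ := main
  obtain ⟨m3, m4⟩ := e2
  constructor <;> linarith

end good


section final
open scoped BigOperators Topology
open Filter

lemma exp_compare (t A B W e : ℝ) (hW : 0 ≤ W) (he : 0 ≤ e) (h : W < 1 → |A - B| ≤ e) :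
    ‖Complex.exp (t * A * Complex.I) - Complex.exp (t * B * Complex.I)‖ ≤ 2 * W + |t| * e := by
  have nA : ‖Complex.exp (t * A * Complex.I)‖ = 1 := by
    have := Complex.norm_exp_ofReal_mul_I (t * A); push_cast at this; exact this
  have nB : ‖Complex.exp (t * B * Complex.I)‖ = 1 := by
    have := Complex.norm_exp_ofReal_mul_I (t * B); push_cast at this; exact this
  by_cases hc : W < 1
  · have h1 := h hc
    have e1 : Complex.exp (t * A * Complex.I) - Complex.exp (t * B * Complex.I)
        = Complex.exp (t * B * Complex.I) * (Complex.exp (Complex.I * (t * (A - B) : ℝ)) - 1) := by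
      rw [mul_sub, ← Complex.exp_add, mul_one]
      congr 2
      push_cast; ring
    rw [e1, norm_mul, nB, one_mul]
    refine Real.norm_exp_I_mul_ofReal_sub_one_le.trans ?_
    rw [Real.norm_eq_abs, abs_mul]
    have : |t| * |A - B| ≤ |t| * e := by gcongr
    linarith
  · push Not at hc
    have h1 := norm_sub_le (Complex.exp (t * A * Complex.I)) (Complex.exp (t * B * Complex.I))
    rw [nA, nB] at h1
    have : 0 ≤ |t| * e := by positivity
    linarith

lemma expect_char (n p : ℕ) (F : (Fin p → Equiv.Perm (Fin n)) → ℝ) (t : ℝ) :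
    charFun (Measure.map F (permVecUniform n p)) t
      = 𝔼 ω, Complex.exp (t * F ω * Complex.I) := by
  haveI : MeasurableSingletonClass (Fin p → Equiv.Perm (Fin n)) := ⟨fun _ => trivial⟩
  have hF : Measurable F := fun _ _ => trivial
  rw [charFun_apply_real, integral_map hF.aemeasurable (by fun_prop)]
  unfold permVecUniform
  rw [PMF.integral_eq_sum, Fintype.expect_eq_sum_div_card, sum_div]
  refine sum_congr rfl fun ω _ => ?_
  rw [PMF.uniformOfFintype_apply, ENNReal.toReal_inv, ENNReal.toReal_natCast,
    Complex.real_smul, div_eq_inv_mul]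
  push_cast
  rfl

lemma prod_ht {n p : ℕ} (t : ℝ) (x : Fin n → ℝ) (ω : Fin p → Equiv.Perm (Fin n)) (k : ℕ) :
    ∏ j ∈ range k, Complex.exp (t * Complex.I * (Real.log (1 + Yv x ω j) : ℝ))
      = Complex.exp (t * (∑ j ∈ range k, Real.log (1 + Yv x ω j) : ℝ) * Complex.I) := by
  rw [← Complex.exp_sum, ← mul_sum]
  congr 1
  push_cast; ring

variable {y : ℝ} (hy0 : 0 < y) (hy1 : y < 1) {p : ℕ → ℕ}
  (hpy : Tendsto (fun n => (p n : ℝ) / (n : ℝ)) atTop (𝓝 y))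

include hy1 hpy in
lemma shift_lim : Tendsto (fun n : ℕ => 1 / ((n : ℝ) - 2) * (p n - p n * (((n : ℝ) - 1) / (n - p n))))
    atTop (𝓝 (- (y ^ 2 / (1 - y)))) := by
  have hinv : Tendsto (fun n : ℕ => (1 : ℝ) / n) atTop (𝓝 0) := tendsto_one_div_atTop_nhds_zero_nat
  have h2 := hinv.const_mul 2
  have h1y : 1 - y ≠ 0 := by linarith
  have key := (hpy.mul (((hinv.const_sub 1).div (lim_ratio hpy) h1y).const_sub 1)).div
    (h2.const_sub 1) (by norm_num)
  have : y * (1 - (1 - 0) / (1 - y)) / (1 - 2 * 0) = - (y ^ 2 / (1 - y)) := by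
    field_simp; ring
  rw [this] at key
  refine key.congr' ?_
  filter_upwards [eventually_ge_atTop 3, ev_large hy1 hpy 1] with n h1 h2
  have hn' : (3 : ℝ) ≤ n := by exact_mod_cast h1
  have a1 : (n : ℝ) ≠ 0 := by linarith
  have a2 : (n : ℝ) - 2 ≠ 0 := by linarith
  have a3 : (n : ℝ) - p n ≠ 0 := by linarith
  simp only [Pi.div_apply]
  field_simp

lemma r_lim : Tendsto (fun n : ℕ => √√(n : ℝ)) atTop atTop :=
  Real.tendsto_sqrt_atTop.comp (Real.tendsto_sqrt_atTop.comp tendsto_natCast_atTop_atTop)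

lemma sqrt_sqrt_four {x : ℝ} (hx : 0 ≤ x) : (√√x) ^ 4 = x := by
  rw [show (√√x) ^ 4 = ((√√x) ^ 2) ^ 2 by ring, Real.sq_sqrt (Real.sqrt_nonneg _), Real.sq_sqrt hx]

/-- the deterministic centering -/
noncomputable def dn (p : ℕ → ℕ) (n : ℕ) : ℝ :=
  (∑ k ∈ range (p n), Real.log (((n : ℝ) - 1 - k) / (n - 1))
      + ((n : ℝ) - p n) * Real.log (1 - p n / n) + p n)
  + 1 / ((n : ℝ) - 2) * (p n - p n * (((n : ℝ) - 1) / (n - p n)))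

noncomputable def Ln (p : ℕ → ℕ) (n : ℕ) (ω : Fin (p n) → Equiv.Perm (Fin n)) : ℝ :=
  Real.log (improvedSpearmanRho n (p n) ω).det
            + ((n : ℝ) - (p n : ℝ)) * Real.log (1 - (p n : ℝ) / (n : ℝ)) + (p n : ℝ)

include hy0 hy1 hpy in
lemma cmp_lim (t : ℝ) : Tendsto (fun n : ℕ =>
    (𝔼 ω : Fin (p n) → Equiv.Perm (Fin n), Complex.exp (t * Ln p n ω * Complex.I))
    - Complex.exp (t * dn p n * Complex.I) * 𝔼 ω : Fin (p n) → Equiv.Perm (Fin n),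
      ∏ j ∈ range (p n), Complex.exp (t * Complex.I * (Real.log (1 + Yv (xs n) ω j) : ℝ)))
    atTop (𝓝 0) := by
  set κ := (1 - y) / 2 with hκd
  have hκ : 0 < κ := by rw [hκd]; linarith
  set K := 4 / κ ^ 2 + 8 / κ ^ 3 with hKd
  set C := 17 * (10 ^ 8 / κ ^ 4) + 72 with hC
  have hr : Tendsto (fun n : ℕ => √√(n : ℝ)) atTop atTop := r_lim
  have hri : Tendsto (fun n : ℕ => (√√(n : ℝ))⁻¹) atTop (𝓝 0) := hr.inv_tendsto_atTop
  have hε : Tendsto (fun n : ℕ => √√((√√(n : ℝ))⁻¹)) atTop (𝓝 0) := by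
    have h1 : Continuous fun x : ℝ => √√x := by fun_prop
    have := (h1.tendsto 0).comp hri
    simpa [Function.comp_def] using this
  have hr2 : Tendsto (fun n : ℕ => 12 * (1 + 2 * K) / (√√(n : ℝ)) ^ 2) atTop (𝓝 0) := by
    have := (hri.pow 2).const_mul (12 * (1 + 2 * K))
    simp only [ne_eq, OfNat.ofNat_ne_zero, not_false_eq_true, zero_pow, mul_zero] at this
    refine this.congr fun n => ?_
    rw [inv_pow]; rfl
  have hbound : Tendsto (fun n : ℕ => 2 * (C / √√(n : ℝ))
      + |t| * (2 * √K / √√(n : ℝ) + 24 * (1 + 2 * K) / (√√(n : ℝ)) ^ 2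
        + 4 * √√((√√(n : ℝ))⁻¹) / κ)) atTop (𝓝 0) := by
    have l1 := (hri.const_mul C).const_mul 2
    have l2 := ((hri.const_mul (2 * √K)).add (hr2.const_mul 2)).add ((hε.const_mul 4).div_const κ)
    have l3 := l1.add (l2.const_mul |t|)
    simp only [mul_zero, add_zero, zero_div] at l3
    refine l3.congr fun n => ?_
    simp only [div_eq_mul_inv]
    ring
  refine squeeze_zero_norm' ?_ hbound
  have hp2 : ∀ᶠ n : ℕ in atTop, y / 2 < (p n : ℝ) / n := hpy.eventually_const_lt (by linarith)
  have hy2 : Tendsto (fun n : ℕ => y / 2 * (n : ℝ)) atTop atTop :=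
    Tendsto.const_mul_atTop (by linarith) tendsto_natCast_atTop_atTop
  filter_upwards [eventually_ge_atTop 6, ev_kappa hy1 hpy, hp2, hy2.eventually_ge_atTop 2,
    hr.eventually_ge_atTop 1, hε.eventually_le_const (by norm_num : (0 : ℝ) < 1 / 2),
    hr2.eventually_le_const (by norm_num : (0 : ℝ) < 1 / 4)] with n hn hp h3 h4 hr1 hεn hKn
  have hn' : (6 : ℝ) ≤ n := by exact_mod_cast hn
  have hpn : 2 ≤ p n := by
    rw [lt_div_iff₀ (by linarith)] at h3
    have : (2 : ℝ) ≤ p n := by linarith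
    exact_mod_cast this
  set r := √√(n : ℝ) with hrd
  have hr4 : r ^ 4 = n := sqrt_sqrt_four (by linarith)
  have hr0 : 0 < r := by linarith
  set ε := √√(r⁻¹) with hεd
  have hε4 : r * ε ^ 4 = 1 := by
    rw [hεd, sqrt_sqrt_four (by positivity)]; exact mul_inv_cancel₀ hr0.ne'
  have hε0 : 0 ≤ ε := Real.sqrt_nonneg _
  let l : Fin (p n) := ⟨p n - 1, by omega⟩
  let a : Fin (p n) := ⟨p n - 2, by omega⟩
  have hl : (l : ℕ) + 1 = p n := by simp only [l]; omega
  have ha : (a : ℕ) + 2 = p n := by simp only [a]; omega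
  have hal : a < l := by rw [Fin.lt_def]; omega
  set err := 2 * √K / r + 24 * (1 + 2 * K) / r ^ 2 + 4 * ε / κ with herr
  have herr0 : 0 ≤ err := by positivity
  have hE := Wb_expect hn κ hκ hp r hr1 hr4 hal
  rw [Finset.mul_expect, ← Finset.expect_sub_distrib]
  have step : ∀ ω : Fin (p n) → Equiv.Perm (Fin n),
      ‖Complex.exp (t * Ln p n ω * Complex.I) - Complex.exp (t * dn p n * Complex.I) *
        ∏ j ∈ range (p n), Complex.exp (t * Complex.I * (Real.log (1 + Yv (xs n) ω j) : ℝ))‖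
      ≤ 2 * Wb r l a ω + |t| * err := by
    intro ω
    have e1 : Complex.exp (t * dn p n * Complex.I) *
        ∏ j ∈ range (p n), Complex.exp (t * Complex.I * (Real.log (1 + Yv (xs n) ω j) : ℝ))
        = Complex.exp (t * ((dn p n + ∑ j ∈ range (p n), Real.log (1 + Yv (xs n) ω j) : ℝ) : ℂ)
          * Complex.I) := by
      rw [prod_ht, ← Complex.exp_add]
      congr 1
      rw [Complex.ofReal_add]; ring
    rw [e1]
    refine exp_compare t _ _ _ _ (Wb_nonneg r hr1 ω) herr0 fun hW => ?_
    have := (good_main hn κ hκ hp r hr1 hr4 hl ha ε hε0 hεn hε4 hKn ω hW).2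
    refine le_trans (le_of_eq ?_) this
    unfold Ln dn
    congr 1
    ring
  refine (norm_expect_le _ _ step).trans ?_
  rw [Finset.expect_add_distrib, Fintype.expect_const, ← Finset.mul_expect]
  gcongr

include hy1 hpy in
lemma prod_lim (t : ℝ) : Tendsto (fun n : ℕ => 𝔼 ω : Fin (p n) → Equiv.Perm (Fin n),
      ∏ j ∈ range (p n), Complex.exp (t * Complex.I * (Real.log (1 + Yv (xs n) ω j) : ℝ)))
    atTop (𝓝 (Complex.exp ((-(t : ℂ) ^ 2 - t * Complex.I) / 2 *
      ((-2 * Real.log (1 - y) - 2 * y : ℝ) : ℂ)))) := by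
  set κ := (1 - y) / 2 with hκd
  have hκ : 0 < κ := by rw [hκd]; linarith
  obtain ⟨C, hC0, hC⟩ := ht_bound t
  set z : ℂ := (-(t : ℂ) ^ 2 - t * Complex.I) / 2 with hz
  have hzre : z.re ≤ 0 := by
    have : z = ((-(t ^ 2) / 2 : ℝ) : ℂ) + ((-t / 2 : ℝ) : ℂ) * Complex.I := by
      rw [hz]; push_cast; ring
    rw [this, Complex.add_re, Complex.ofReal_re, Complex.re_ofReal_mul, Complex.I_re, mul_zero,
      add_zero]
    nlinarith [sq_nonneg t]
  have hs : ∀ᶠ n : ℕ in atTop, (∑ i, xs n i ^ 4) ≤ 3 / (n : ℝ) := by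
    filter_upwards [eventually_ge_atTop 2] with n hn
    exact (goodX_xs hn).four
  have hv := vk_lim hy1 hpy (fun n => ∑ i, xs n i ^ 4)
    (fun n => sum_nonneg fun i _ => by positivity) hs
  have hexp : Tendsto (fun n : ℕ => Complex.exp (z * (∑ j ∈ range (p n),
      vk n (∑ i, xs n i ^ 4) j : ℝ))) atTop
      (𝓝 (Complex.exp (z * ((-2 * Real.log (1 - y) - 2 * y : ℝ) : ℂ)))) := by
    have h1 : Continuous fun x : ℝ => Complex.exp (z * (x : ℂ)) := by fun_prop
    exact (h1.tendsto _).comp hv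
  set D := C * (10 ^ 8 / κ ^ 4 + 4000 / κ ^ 2)
        + ‖z‖ * 25 / κ ^ 2 * (8200 / κ ^ 2 + 2 + 8000 / κ ^ 2)
        + (‖z‖ * (10 / κ)) ^ 2 with hD
  have hD0 : 0 ≤ D := by positivity
  have hdiff : Tendsto (fun n : ℕ => (𝔼 ω : Fin (p n) → Equiv.Perm (Fin n),
      ∏ j ∈ range (p n), Complex.exp (t * Complex.I * (Real.log (1 + Yv (xs n) ω j) : ℝ)))
      - Complex.exp (z * (∑ j ∈ range (p n), vk n (∑ i, xs n i ^ 4) j : ℝ))) atTop (𝓝 0) := by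
    have hb : Tendsto (fun n : ℕ => D * (√(n : ℝ))⁻¹) atTop (𝓝 0) := by
      have := (Real.tendsto_sqrt_atTop.comp
        (tendsto_natCast_atTop_atTop (R := ℝ))).inv_tendsto_atTop.const_mul D
      simpa using this
    refine squeeze_zero_norm' ?_ hb
    filter_upwards [eventually_ge_atTop 6, ev_kappa hy1 hpy,
      (tendsto_natCast_atTop_atTop (R := ℝ)).eventually_ge_atTop (‖z‖ * (10 / κ))] with n hn hp hzn
    have hn' : (6 : ℝ) ≤ n := by exact_mod_cast hn
    have hpn : (p n : ℝ) ≤ n := by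
      have h0 : 0 < κ * n := by positivity
      rw [hκd] at h0
      linarith
    refine (char_total κ hκ hn hp (goodX_xs (by omega))
      (fun u => Complex.exp (t * Complex.I * (Real.log (1 + u) : ℝ))) (fun u => ?_)
      (t * Complex.I) z C hC0 hC hzre hzn (p n) le_rfl).trans ?_
    · have := Complex.norm_exp_ofReal_mul_I (t * Real.log (1 + u))
      refine le_of_eq (Eq.trans ?_ this)
      congr 2
      push_cast; ring
    · calc _ ≤ (n : ℝ) * (D / (√n * n)) := by gcongr
        _ = _ := by field_simp
  have := hdiff.add hexp
  simpa using this

include hy0 hy1 hpy in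
lemma char_lim (t : ℝ) : Tendsto (fun n : ℕ =>
    𝔼 ω : Fin (p n) → Equiv.Perm (Fin n), Complex.exp (t * Ln p n ω * Complex.I)) atTop
    (𝓝 (Complex.exp (t * ((1 / 2 * Real.log (1 - y) + y - y ^ 2 / (1 - y) : ℝ) : ℂ) * Complex.I)
      * Complex.exp ((-(t : ℂ) ^ 2 - t * Complex.I) / 2 *
      ((-2 * Real.log (1 - y) - 2 * y : ℝ) : ℂ)))) := by
  have hd : Tendsto (dn p) atTop (𝓝 (1 / 2 * Real.log (1 - y) + y - y ^ 2 / (1 - y))) := by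
    have := (det_lim hy1 hpy).add (shift_lim hy1 hpy)
    rw [← sub_eq_add_neg] at this
    exact this
  have hexp : Tendsto (fun n : ℕ => Complex.exp (t * dn p n * Complex.I)) atTop
      (𝓝 (Complex.exp (t * ((1 / 2 * Real.log (1 - y) + y - y ^ 2 / (1 - y) : ℝ) : ℂ)
        * Complex.I))) := by
    have h1 : Continuous fun x : ℝ => Complex.exp (t * (x : ℂ) * Complex.I) := by fun_prop
    exact (h1.tendsto _).comp hd
  have := (cmp_lim hy0 hy1 hpy t).add (hexp.mul (prod_lim hy1 hpy t))
  simpa using this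

end final

/-- (CLT for the log-determinant of the improved Spearman rank correlation
matrix.)  If `p(n)/n → y ∈ (0,1)`, then `log det ρ̃ₙ + (n − p(n))·log(1 − p(n)/n) + p(n)`
converges in distribution to `N((3/2)log(1−y) + 2y − y²/(1−y), −2log(1−y) − 2y)`;
convergence in distribution is expressed by testing against all bounded continuous
functions. -/
theorem improved_spearman_logdet_clt (y : ℝ) (hy0 : 0 < y) (hy1 : y < 1)
    (p : ℕ → ℕ) (hp : ∀ n, 1 ≤ p n)
    (hpy : Filter.Tendsto (fun n => (p n : ℝ) / (n : ℝ)) Filter.atTop (nhds y)) :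
    ∀ g : BoundedContinuousFunction ℝ ℝ,
      Filter.Tendsto
        (fun n => ∫ x, g x ∂(Measure.map
          (fun ω => Real.log (improvedSpearmanRho n (p n) ω).det
            + ((n : ℝ) - (p n : ℝ)) * Real.log (1 - (p n : ℝ) / (n : ℝ)) + (p n : ℝ))
          (permVecUniform n (p n))))
        Filter.atTop
        (nhds (∫ x, g x ∂(ProbabilityTheory.gaussianReal
          ((3 / 2) * Real.log (1 - y) + 2 * y - y ^ 2 / (1 - y))
          (Real.toNNReal (-2 * Real.log (1 - y) - 2 * y))))) := by
  have hprob : ∀ n, IsProbabilityMeasure (Measure.map (Ln p n) (permVecUniform n (p n))) := by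
    intro n
    haveI : IsProbabilityMeasure (permVecUniform n (p n)) := by
      unfold permVecUniform; infer_instance
    have hF : Measurable (Ln p n) := fun _ _ => trivial
    exact Measure.isProbabilityMeasure_map hF.aemeasurable
  have hσ : 0 ≤ -2 * Real.log (1 - y) - 2 * y := by
    have := Real.log_le_sub_one_of_pos (by linarith : 0 < 1 - y)
    linarith
  let μs : ℕ → ProbabilityMeasure ℝ := fun n => ⟨_, hprob n⟩
  let ν : ProbabilityMeasure ℝ := ⟨ProbabilityTheory.gaussianReal
          ((3 / 2) * Real.log (1 - y) + 2 * y - y ^ 2 / (1 - y))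
          (Real.toNNReal (-2 * Real.log (1 - y) - 2 * y)), inferInstance⟩
  have key : Filter.Tendsto μs Filter.atTop (nhds ν) := by
    rw [ProbabilityMeasure.tendsto_iff_tendsto_charFun]
    intro t
    simp only [μs, ν, ProbabilityMeasure.coe_mk, expect_char, ProbabilityTheory.charFun_gaussianReal,
      Real.coe_toNNReal _ hσ]
    convert char_lim hy0 hy1 hpy t using 2
    rw [← Complex.exp_add]
    congr 1
    push_cast
    ring
  rw [ProbabilityMeasure.tendsto_iff_forall_integral_tendsto] at key
  exact key
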